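/- arXiv:2112.04458 — 2 statements merged into one kernel-verified Lean document; each statement's English description precedes it below -/
import Mathlib

section
/- Let ρ be a quasi-periodic labelling. Then the action of G_ρ on ℝ is proximal: for every compact interval I ⊂ ℝ and every nonempty open interval J ⊂ ℝ there exists g ∈ G_ρ such that g(I) ⊆ J. -/
/-! ### Letters, labellings and quasi-periodicity -/

/-- The four letters `a, b, a⁻¹, b⁻¹`. -/
inductive Letter : Type
  | a : Letter
  | b : Letter
  | A : Letter  -- `a⁻¹`
  | B : Letter  -- `b⁻¹`
  deriving DecidableEq

/-- The formal inverse of a letter. -/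
def Letter.inv : Letter → Letter
  | .a => .A
  | .A => .a
  | .b => .B
  | .B => .b

/-- We encode the set of half-integers `½ℤ` by `ℤ` via `m ↦ m / 2`; integer points
correspond to even indices and proper half-integer points to odd indices.
A labelling assigns `a^{±1}` to integer points and `b^{±1}` to half-integer points. -/
def IsLabelling (ρ : ℤ → Letter) : Prop :=
  ∀ m : ℤ, (Even m → ρ m = Letter.a ∨ ρ m = Letter.A) ∧
    (Odd m → ρ m = Letter.b ∨ ρ m = Letter.B)

/-- The word of the labelling `ρ` along the block `{k, k+1, …, k+n}` (in the
half-integer encoding, the block of size `n+1` starting at `k/2`). -/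
def blockWord (ρ : ℤ → Letter) (k : ℤ) (n : ℕ) : List Letter :=
  (List.range (n + 1)).map fun i => ρ (k + i)

/-- The formal inverse of a word: reverse the word and invert each letter. -/
def wordInv (w : List Letter) : List Letter :=
  (w.map Letter.inv).reverse

/-- A labelling is quasi-periodic if (1) every subword of the labelling appears as a
subword (string of consecutive letters) of every sufficiently large block, and (2) the
formal inverse of every subword of the labelling is again a subword of the labelling. -/
def IsQuasiPeriodic (ρ : ℤ → Letter) : Prop :=
  IsLabelling ρ ∧
    (∀ (k : ℤ) (n : ℕ), ∃ N : ℕ, ∀ (k' : ℤ) (n' : ℕ), N ≤ n' + 1 →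
      (blockWord ρ k n) <:+: (blockWord ρ k' n')) ∧
    (∀ (k : ℤ) (n : ℕ), ∃ k' : ℤ, blockWord ρ k' n = wordInv (blockWord ρ k n))

/-! ### Thompson's group `F` and the subgroup `H`

Orientation-preserving homeomorphisms of `[0,1]` are realised as order-automorphisms
of `ℝ` that are the identity outside `[0,1]`; orientation-preserving homeomorphisms of
the line are order-automorphisms of `ℝ`. -/

/-- A dyadic rational real number, i.e. an element of `ℤ[1/2]`. -/
def IsDyadic (x : ℝ) : Prop :=
  ∃ (a : ℤ) (b : ℕ), x = (a : ℝ) / 2 ^ b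

/-- Membership in Thompson's group `F`: the identity outside `[0,1]`, and on `[0,1]`
piecewise linear with breakpoints in `ℤ[1/2]` and slopes integer powers of `2`. -/
def InThompsonF (f : ℝ ≃o ℝ) : Prop :=
  (∀ x : ℝ, x ∉ Set.Icc (0 : ℝ) 1 → f x = x) ∧
    ∃ (m : ℕ) (x : Fin (m + 1) → ℝ), x 0 = 0 ∧ x (Fin.last m) = 1 ∧ StrictMono x ∧
      (∀ i, IsDyadic (x i)) ∧
      ∀ i : Fin m, ∃ (k : ℤ) (c : ℝ),
        ∀ t ∈ Set.Icc (x i.castSucc) (x i.succ), f t = 2 ^ k * t + c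

/-- Membership in the subgroup `H ≤ F` of elements whose slopes at `0` and `1`
coincide. -/
def InH (f : ℝ ≃o ℝ) : Prop :=
  InThompsonF f ∧
    ∃ (k : ℤ) (ε : ℝ), 0 < ε ∧ (∀ t ∈ Set.Icc (0 : ℝ) ε, f t = 2 ^ k * t) ∧
      ∀ t ∈ Set.Icc (1 - ε) (1 : ℝ), f t = 1 + 2 ^ k * (t - 1)

/-! ### The generators of `G_ρ` -/

/-- `ζ` is the homeomorphism of `ℝ` which on each `[n, n+1]` is the conjugate of `ν`
(a homeomorphism of `[0,1]`) by the orientation-preserving isometry `[n,n+1] → [0,1]`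
if `ρ(n + ½) = b`, and by the orientation-reversing isometry if `ρ(n + ½) = b⁻¹`.
(In the encoding of `½ℤ` by `ℤ`, the point `n + ½` has index `2n + 1`.) -/
def IsZeta (ρ : ℤ → Letter) (ν ζ : ℝ ≃o ℝ) : Prop :=
  ∀ n : ℤ, ∀ x ∈ Set.Icc (n : ℝ) (n + 1),
    (ρ (2 * n + 1) = Letter.b → ζ x = n + ν (x - n)) ∧
    (ρ (2 * n + 1) = Letter.B → ζ x = (n + 1) - ν ((n + 1) - x))

/-- `χ` is the homeomorphism of `ℝ` which on each `[n-½, n+½]` is the conjugate of `ν`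
by the orientation-preserving isometry `[n-½, n+½] → [0,1]` if `ρ(n) = a`, and by the
orientation-reversing isometry if `ρ(n) = a⁻¹`. -/
def IsChi (ρ : ℤ → Letter) (ν χ : ℝ ≃o ℝ) : Prop :=
  ∀ n : ℤ, ∀ x ∈ Set.Icc ((n : ℝ) - 1/2) ((n : ℝ) + 1/2),
    (ρ (2 * n) = Letter.a → χ x = ((n : ℝ) - 1/2) + ν (x - ((n : ℝ) - 1/2))) ∧
    (ρ (2 * n) = Letter.A → χ x = ((n : ℝ) + 1/2) - ν (((n : ℝ) + 1/2) - x))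

/-! ### Bounded cohomology in degree two -/

/-- A bounded 2-cocycle on `G` with trivial real coefficients. -/
def IsBounded2Cocycle {G : Type*} [Group G] (ω : G → G → ℝ) : Prop :=
  (∃ C : ℝ, ∀ g h : G, |ω g h| ≤ C) ∧
    ∀ g₁ g₂ g₃ : G, ω g₂ g₃ - ω (g₁ * g₂) g₃ + ω g₁ (g₂ * g₃) - ω g₁ g₂ = 0

/-- `ω` is the coboundary of a bounded real-valued function. -/
def IsCoboundaryOfBounded {G : Type*} [Group G] (ω : G → G → ℝ) : Prop :=
  ∃ φ : G → ℝ, (∃ C : ℝ, ∀ g : G, |φ g| ≤ C) ∧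
    ∀ g h : G, ω g h = φ h - φ (g * h) + φ g

/-- A group is 2-boundedly acyclic if `H²_b(G; ℝ) = 0`, i.e. every bounded 2-cocycle is
the coboundary of a bounded function. -/
def Is2BoundedlyAcyclic (G : Type*) [Group G] : Prop :=
  ∀ ω : G → G → ℝ, IsBounded2Cocycle ω → IsCoboundaryOfBounded ω

/-- A 2-cocycle is homogeneous if it vanishes on powers of a single element. -/
def IsHomogeneous {G : Type*} [Group G] (ω : G → G → ℝ) : Prop :=
  ∀ (g : G) (i j : ℤ), ω (g ^ i) (g ^ j) = 0

namespace GRho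

noncomputable section

/-- A piecewise linear map with slope `1/2` on `[0,1/2]` and on `[7/8,1]`. -/
def Rf (t : ℝ) : ℝ :=
  if t ≤ 0 then t else if t ≤ 1/2 then t/2 else if t ≤ 13/16 then 2*t-3/4
    else if t ≤ 7/8 then t+1/16 else if t ≤ 1 then (t+1)/2 else t

/-- The inverse of `Rf`. -/
def Rg (y : ℝ) : ℝ :=
  if y ≤ 0 then y else if y ≤ 1/4 then 2*y else if y ≤ 7/8 then (y+3/4)/2
    else if y ≤ 15/16 then y-1/16 else if y ≤ 1 then 2*y-1 else y

theorem Rf_strictMono : StrictMono Rf := by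
  intro x y h
  unfold Rf
  split_ifs <;> linarith

theorem Rg_Rf (x : ℝ) : Rg (Rf x) = x := by
  unfold Rf
  split_ifs <;> unfold Rg <;> split_ifs <;> linarith

theorem Rf_Rg (x : ℝ) : Rf (Rg x) = x := by
  unfold Rg
  split_ifs <;> unfold Rf <;> split_ifs <;> linarith

/-- `Rf` as an order isomorphism. -/
def R : ℝ ≃o ℝ where
  toFun := Rf
  invFun := Rg
  left_inv := Rg_Rf
  right_inv := Rf_Rg
  map_rel_iff' := Rf_strictMono.le_iff_le

theorem R_apply (x : ℝ) : R x = Rf x := rfl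

/-- The conjugate of `R` by `x ↦ 1 - x`. -/
def F : ℝ ≃o ℝ where
  toFun x := 1 - Rf (1 - x)
  invFun x := 1 - Rg (1 - x)
  left_inv x := by simp [Rg_Rf]
  right_inv x := by simp [Rf_Rg]
  map_rel_iff' := by
    intro a b
    change 1 - Rf (1 - a) ≤ 1 - Rf (1 - b) ↔ a ≤ b
    rw [sub_le_sub_iff_left, Rf_strictMono.le_iff_le, sub_le_sub_iff_left]

theorem F_apply (x : ℝ) : F x = 1 - Rf (1 - x) := rfl

theorem R_inH : InH R := by
  refine ⟨⟨?_, 4, ![0,1/2,13/16,7/8,1], ?_, ?_, ?_, ?_, ?_⟩, -1, 1/8, by norm_num, ?_, ?_⟩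
  · intro x hx
    rw [R_apply]
    simp only [Set.mem_Icc, not_and_or, not_le] at hx
    unfold Rf
    split_ifs <;> rcases hx with h | h <;> linarith
  · rfl
  · rfl
  · rw [Fin.strictMono_iff_lt_succ]
    intro i
    fin_cases i <;> simp <;> norm_num
  · intro i
    fin_cases i
    · exact ⟨0, 0, by norm_num⟩
    · exact ⟨1, 1, by norm_num⟩
    · exact ⟨13, 4, by norm_num⟩
    · exact ⟨7, 3, by norm_num⟩
    · exact ⟨1, 0, by norm_num⟩
  · intro i
    fin_cases i
    · refine ⟨-1, 0, fun t ht => ?_⟩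
      have h1 : (0:ℝ) ≤ t := ht.1
      have h2 : t ≤ (1/2:ℝ) := ht.2
      rw [R_apply]; unfold Rf; norm_num; split_ifs <;> linarith
    · refine ⟨1, -3/4, fun t ht => ?_⟩
      have h1 : (1/2:ℝ) ≤ t := ht.1
      have h2 : t ≤ (13/16:ℝ) := ht.2
      rw [R_apply]; unfold Rf; norm_num; split_ifs <;> linarith
    · refine ⟨0, 1/16, fun t ht => ?_⟩
      have h1 : (13/16:ℝ) ≤ t := ht.1
      have h2 : t ≤ (7/8:ℝ) := ht.2
      rw [R_apply]; unfold Rf; norm_num; split_ifs <;> linarith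
    · refine ⟨-1, 1/2, fun t ht => ?_⟩
      have h1 : (7/8:ℝ) ≤ t := ht.1
      have h2 : t ≤ (1:ℝ) := ht.2
      rw [R_apply]; unfold Rf; norm_num; split_ifs <;> linarith
  · rintro t ⟨h1, h2⟩
    rw [R_apply]; unfold Rf; norm_num; split_ifs <;> linarith
  · rintro t ⟨h1, h2⟩
    rw [R_apply]; unfold Rf; norm_num; split_ifs <;> linarith

theorem F_inH : InH F := by
  refine ⟨⟨?_, 4, ![0,1/8,3/16,1/2,1], ?_, ?_, ?_, ?_, ?_⟩, -1, 1/8, by norm_num, ?_, ?_⟩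
  · intro x hx
    rw [F_apply]
    simp only [Set.mem_Icc, not_and_or, not_le] at hx
    unfold Rf
    split_ifs <;> rcases hx with h | h <;> linarith
  · rfl
  · rfl
  · rw [Fin.strictMono_iff_lt_succ]
    intro i
    fin_cases i <;> simp <;> norm_num
  · intro i
    fin_cases i
    · exact ⟨0, 0, by norm_num⟩
    · exact ⟨1, 3, by norm_num⟩
    · exact ⟨3, 4, by norm_num⟩
    · exact ⟨1, 1, by norm_num⟩
    · exact ⟨1, 0, by norm_num⟩
  · intro i
    fin_cases i
    · refine ⟨-1, 0, fun t ht => ?_⟩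
      have h1 : (0:ℝ) ≤ t := ht.1
      have h2 : t ≤ (1/8:ℝ) := ht.2
      rw [F_apply]; unfold Rf; norm_num; split_ifs <;> linarith
    · refine ⟨0, -1/16, fun t ht => ?_⟩
      have h1 : (1/8:ℝ) ≤ t := ht.1
      have h2 : t ≤ (3/16:ℝ) := ht.2
      rw [F_apply]; unfold Rf; norm_num; split_ifs <;> linarith
    · refine ⟨1, -1/4, fun t ht => ?_⟩
      have h1 : (3/16:ℝ) ≤ t := ht.1
      have h2 : t ≤ (1/2:ℝ) := ht.2
      rw [F_apply]; unfold Rf; norm_num; split_ifs <;> linarith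
    · refine ⟨-1, 1/2, fun t ht => ?_⟩
      have h1 : (1/2:ℝ) ≤ t := ht.1
      have h2 : t ≤ (1:ℝ) := ht.2
      rw [F_apply]; unfold Rf; norm_num; split_ifs <;> linarith
  · rintro t ⟨h1, h2⟩
    rw [F_apply]; unfold Rf; norm_num; split_ifs <;> linarith
  · rintro t ⟨h1, h2⟩
    rw [F_apply]; unfold Rf; norm_num; split_ifs <;> linarith

theorem fix_RF (t : ℝ) (h0 : 0 ≤ t) (h1 : t ≤ 1) (hR : R t = t) (hF : F t = t) :
    t = 0 ∨ t = 1 := by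
  rw [R_apply] at hR
  rw [F_apply] at hF
  by_contra hc
  push Not at hc
  have h0' := lt_of_le_of_ne h0 (Ne.symm hc.1)
  have h1' := lt_of_le_of_ne h1 hc.2
  unfold Rf at hR hF
  rcases le_total t (1/2) with h | h
  · split_ifs at hR <;> linarith
  · split_ifs at hF <;> linarith

/-- The letter is `a` or `b`. -/
def Pos (l : Letter) : Prop := l = Letter.a ∨ l = Letter.b

/-- `g` acts as `f` or its flip on each interval centred at `k/2`, `k` of parity `p`. -/
def IsConj (ρ : ℤ → Letter) (p : ℤ) (f g : ℝ ≃o ℝ) : Prop :=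
  ∀ k : ℤ, Even (k + p) → ∀ t : ℝ, 0 ≤ t → t ≤ 1 →
    (Pos (ρ k) → g (((k:ℝ) - 1)/2 + t) = ((k:ℝ) - 1)/2 + f t) ∧
    (¬ Pos (ρ k) → g (((k:ℝ) + 1)/2 - t) = ((k:ℝ) + 1)/2 - f t)

theorem isConj_zeta {ρ : ℤ → Letter} (hρ : IsLabelling ρ) {ν ζ : ℝ ≃o ℝ}
    (h : IsZeta ρ ν ζ) : IsConj ρ 1 ν ζ := by
  intro k hk t h0 h1
  obtain ⟨n, rfl⟩ : Odd k := by
    rcases Int.even_or_odd k with he | ho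
    · exfalso; rw [Int.even_add] at hk; simp [he] at hk
    · exact ho
  have hl := (hρ (2*n+1)).2 ⟨n, rfl⟩
  push_cast
  constructor
  · intro hp
    have hb : ρ (2*n+1) = Letter.b := by
      rcases hl with hl | hl
      · exact hl
      · rw [hl] at hp; simp [Pos] at hp
    have := (h n (n + t) ⟨by linarith, by linarith⟩).1 hb
    rw [show (2*(n:ℝ)+1-1)/2 + t = n + t by ring, this]
    rw [show (n:ℝ) + t - n = t by ring]; ring
  · intro hp
    have hb : ρ (2*n+1) = Letter.B := by
      rcases hl with hl | hl
      · exfalso; apply hp; rw [hl]; simp [Pos]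
      · exact hl
    have := (h n (n + 1 - t) ⟨by linarith, by linarith⟩).2 hb
    rw [show (2*(n:ℝ)+1+1)/2 - t = n + 1 - t by ring, this]
    rw [show (n:ℝ) + 1 - (n + 1 - t) = t by ring]; ring

theorem isConj_chi {ρ : ℤ → Letter} (hρ : IsLabelling ρ) {ν χ : ℝ ≃o ℝ}
    (h : IsChi ρ ν χ) : IsConj ρ 0 ν χ := by
  intro k hk t h0 h1
  rw [add_zero] at hk
  obtain ⟨n, rfl⟩ : ∃ n, k = 2 * n := hk.exists_two_nsmul _ |>.imp fun _ h => by simpa using h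
  have hl := (hρ (2*n)).1 ⟨n, by ring⟩
  push_cast
  constructor
  · intro hp
    have hb : ρ (2*n) = Letter.a := by
      rcases hl with hl | hl
      · exact hl
      · rw [hl] at hp; simp [Pos] at hp
    have := (h n (n - 1/2 + t) ⟨by linarith, by linarith⟩).1 hb
    rw [show (2*(n:ℝ)-1)/2 + t = n - 1/2 + t by ring, this]
    rw [show (n:ℝ) - 1/2 + t - (n - 1/2) = t by ring]; ring
  · intro hp
    have hb : ρ (2*n) = Letter.A := by
      rcases hl with hl | hl
      · exfalso; apply hp; rw [hl]; simp [Pos]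
      · exact hl
    have := (h n (n + 1/2 - t) ⟨by linarith, by linarith⟩).2 hb
    rw [show (2*(n:ℝ)+1)/2 - t = n + 1/2 - t by ring, this]
    rw [show (n:ℝ) + 1/2 - (n + 1/2 - t) = t by ring]; ring

theorem exists_conj {ρ : ℤ → Letter} {p : ℤ} {G : Subgroup (ℝ ≃o ℝ)} {s : Set (ℝ ≃o ℝ)}
    (hs : ∀ f ∈ s, (f 0 = 0 ∧ f 1 = 1) ∧ ∃ g ∈ G, IsConj ρ p f g) {f : ℝ ≃o ℝ}
    (hf : f ∈ Subgroup.closure s) : (f 0 = 0 ∧ f 1 = 1) ∧ ∃ g ∈ G, IsConj ρ p f g := by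
  induction hf using Subgroup.closure_induction with
  | mem x hx => exact hs x hx
  | one => exact ⟨⟨rfl, rfl⟩, 1, G.one_mem, fun k _ t _ _ => ⟨fun _ => rfl, fun _ => rfl⟩⟩
  | mul x y _ _ hx hy =>
    obtain ⟨⟨x0, x1⟩, g, hg, hgx⟩ := hx
    obtain ⟨⟨y0, y1⟩, h, hh, hhy⟩ := hy
    refine ⟨⟨?_, ?_⟩, g * h, G.mul_mem hg hh, ?_⟩
    · change x (y 0) = 0; rw [y0, x0]
    · change x (y 1) = 1; rw [y1, x1]
    · intro k hk t h0 h1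
      have a0 : 0 ≤ y t := y0 ▸ y.monotone h0
      have a1 : y t ≤ 1 := y1 ▸ y.monotone h1
      constructor
      · intro hp
        change g (h _) = _ + x (y t)
        rw [(hhy k hk t h0 h1).1 hp, (hgx k hk _ a0 a1).1 hp]
      · intro hp
        change g (h _) = _ - x (y t)
        rw [(hhy k hk t h0 h1).2 hp, (hgx k hk _ a0 a1).2 hp]
  | inv x _ hx =>
    obtain ⟨⟨x0, x1⟩, g, hg, hgx⟩ := hx
    have i0 : x⁻¹ 0 = 0 := by
      change x.symm 0 = 0
      rw [OrderIso.symm_apply_eq, x0]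
    have i1 : x⁻¹ 1 = 1 := by
      change x.symm 1 = 1
      rw [OrderIso.symm_apply_eq, x1]
    refine ⟨⟨i0, i1⟩, g⁻¹, G.inv_mem hg, ?_⟩
    intro k hk t h0 h1
    have a0 : 0 ≤ x⁻¹ t := i0 ▸ (x⁻¹).monotone h0
    have a1 : x⁻¹ t ≤ 1 := i1 ▸ (x⁻¹).monotone h1
    have e : x (x⁻¹ t) = t := x.apply_symm_apply t
    constructor
    · intro hp
      change g.symm _ = _
      rw [OrderIso.symm_apply_eq, (hgx k hk _ a0 a1).1 hp, e]
    · intro hp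
      change g.symm _ = _
      rw [OrderIso.symm_apply_eq, (hgx k hk _ a0 a1).2 hp, e]

/-- The data extracted from the group. -/
structure Data (ρ : ℤ → Letter) (G : Subgroup (ℝ ≃o ℝ)) where
  A : ℤ → (ℝ ≃o ℝ)
  B : ℤ → (ℝ ≃o ℝ)
  hA : ∀ k, A k ∈ G
  hB : ∀ k, B k ∈ G
  cA : ∀ k, IsConj ρ k R (A k)
  cB : ∀ k, IsConj ρ k F (B k)

theorem R0 : R 0 = 0 := by rw [R_apply]; unfold Rf; norm_num
theorem R1 : R 1 = 1 := by rw [R_apply]; unfold Rf; norm_num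
theorem F0 : F 0 = 0 := by rw [F_apply]; unfold Rf; norm_num
theorem F1 : F 1 = 1 := by rw [F_apply]; unfold Rf; norm_num
theorem Rhalf : R (1/2) = 1/4 := by rw [R_apply]; unfold Rf; norm_num
theorem Fhalf : F (1/2) = 3/4 := by rw [F_apply]; unfold Rf; norm_num
theorem R_low (t : ℝ) (h0 : 0 ≤ t) (h1 : t ≤ 1/2) : R t = t/2 := by
  rw [R_apply]; unfold Rf; split_ifs <;> linarith
theorem R_high (t : ℝ) (h0 : 7/8 ≤ t) (h1 : t ≤ 1) : R t = (1+t)/2 := by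
  rw [R_apply]; unfold Rf; split_ifs <;> linarith
theorem F_flip (t : ℝ) : F t = 1 - R (1 - t) := rfl

section
variable {ρ : ℤ → Letter} {G : Subgroup (ℝ ≃o ℝ)}

theorem local_R (D : Data ρ G) (k : ℤ) : ∃ g ∈ G, ∀ t : ℝ, 0 ≤ t → t ≤ 1 →
    g (((k:ℝ)-1)/2 + t) = ((k:ℝ)-1)/2 + R t := by
  by_cases hp : Pos (ρ k)
  · exact ⟨D.A k, D.hA k, fun t h0 h1 => (D.cA k k ⟨k, rfl⟩ t h0 h1).1 hp⟩
  · refine ⟨D.B k, D.hB k, fun t h0 h1 => ?_⟩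
    have := (D.cB k k ⟨k, rfl⟩ (1-t) (by linarith) (by linarith)).2 hp
    rw [F_flip, sub_sub_cancel] at this
    rw [show ((k:ℝ)-1)/2 + t = (k+1)/2 - (1-t) by ring, this]
    ring

theorem local_F (D : Data ρ G) (k : ℤ) : ∃ g ∈ G, ∀ t : ℝ, 0 ≤ t → t ≤ 1 →
    g (((k:ℝ)+1)/2 - t) = ((k:ℝ)+1)/2 - R t := by
  by_cases hp : Pos (ρ k)
  · refine ⟨D.B k, D.hB k, fun t h0 h1 => ?_⟩
    have := (D.cB k k ⟨k, rfl⟩ (1-t) (by linarith) (by linarith)).1 hp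
    rw [F_flip, sub_sub_cancel] at this
    rw [show ((k:ℝ)+1)/2 - t = (k-1)/2 + (1-t) by ring, this]
    ring
  · exact ⟨D.A k, D.hA k, fun t h0 h1 => (D.cA k k ⟨k, rfl⟩ t h0 h1).2 hp⟩

theorem quarter_pos (D : Data ρ G) (p k : ℤ) (hk : Even (k + p)) (hp : Pos (ρ k)) :
    D.A p ((k:ℝ)/2) = k/2 - 1/4 ∧ D.B p ((k:ℝ)/2) = k/2 + 1/4 := by
  have h1 := (D.cA p k hk (1/2) (by norm_num) (by norm_num)).1 hp
  have h2 := (D.cB p k hk (1/2) (by norm_num) (by norm_num)).1 hp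
  rw [show ((k:ℝ)-1)/2 + 1/2 = k/2 by ring] at h1 h2
  rw [h1, h2, Rhalf, Fhalf]
  constructor <;> ring

theorem quarter_neg (D : Data ρ G) (p k : ℤ) (hk : Even (k + p)) (hp : ¬ Pos (ρ k)) :
    D.A p ((k:ℝ)/2) = k/2 + 1/4 ∧ D.B p ((k:ℝ)/2) = k/2 - 1/4 := by
  have h1 := (D.cA p k hk (1/2) (by norm_num) (by norm_num)).2 hp
  have h2 := (D.cB p k hk (1/2) (by norm_num) (by norm_num)).2 hp
  rw [show ((k:ℝ)+1)/2 - 1/2 = k/2 by ring] at h1 h2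
  rw [h1, h2, Rhalf, Fhalf]
  constructor <;> ring

theorem fix_half (D : Data ρ G) (k : ℤ) :
    D.A (k+1) ((k:ℝ)/2) = k/2 ∧ D.B (k+1) ((k:ℝ)/2) = k/2 := by
  have e : Even ((k+1) + (k+1)) := ⟨_, rfl⟩
  by_cases hp : Pos (ρ (k+1))
  · have h1 := (D.cA (k+1) (k+1) e 0 le_rfl zero_le_one).1 hp
    have h2 := (D.cB (k+1) (k+1) e 0 le_rfl zero_le_one).1 hp
    push_cast at h1 h2
    rw [show ((k:ℝ)+1-1)/2 + 0 = k/2 by ring] at h1 h2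
    rw [h1, h2, R0, F0]
    constructor <;> ring
  · have h1 := (D.cA (k+1) (k+1) e 1 zero_le_one le_rfl).2 hp
    have h2 := (D.cB (k+1) (k+1) e 1 zero_le_one le_rfl).2 hp
    push_cast at h1 h2
    rw [show ((k:ℝ)+1+1)/2 - 1 = k/2 by ring] at h1 h2
    rw [h1, h2, R1, F1]
    constructor <;> ring

theorem contract (D : Data ρ G) (k : ℤ) (s : ℝ) (h0 : -1/8 ≤ s) (h1 : s ≤ 1/8) :
    D.A (k+1) ((k:ℝ)/2 + s) = k/2 + s/2 := by
  rcases le_total 0 s with hs | hs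
  · have e : Even ((k+1) + (k+1)) := ⟨_, rfl⟩
    by_cases hp : Pos (ρ (k+1))
    · have := (D.cA (k+1) (k+1) e s hs (by linarith)).1 hp
      push_cast at this
      rw [R_low s hs (by linarith)] at this
      rw [show (k:ℝ)/2 + s = (k + 1 - 1)/2 + s by ring, this]; ring
    · have := (D.cA (k+1) (k+1) e (1-s) (by linarith) (by linarith)).2 hp
      push_cast at this
      rw [R_high (1-s) (by linarith) (by linarith)] at this
      rw [show (k:ℝ)/2 + s = (k + 1 + 1)/2 - (1 - s) by ring, this]; ring
  · have e : Even ((k-1) + (k+1)) := ⟨k, by ring⟩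
    by_cases hp : Pos (ρ (k-1))
    · have := (D.cA (k+1) (k-1) e (1+s) (by linarith) (by linarith)).1 hp
      push_cast at this
      rw [R_high (1+s) (by linarith) (by linarith)] at this
      rw [show (k:ℝ)/2 + s = (k - 1 - 1)/2 + (1 + s) by ring, this]; ring
    · have := (D.cA (k+1) (k-1) e (-s) (by linarith) (by linarith)).2 hp
      push_cast at this
      rw [R_low (-s) (by linarith) (by linarith)] at this
      rw [show (k:ℝ)/2 + s = (k - 1 + 1)/2 - (-s) by ring, this]; ring

theorem contract_pow (D : Data ρ G) (k : ℤ) (j : ℕ) (s : ℝ) (h0 : -1/8 ≤ s) (h1 : s ≤ 1/8) :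
    (D.A (k+1) ^ j) ((k:ℝ)/2 + s) = k/2 + s/2^j := by
  induction j generalizing s with
  | zero => simp
  | succ j ih =>
    rw [pow_succ]
    change (D.A (k+1) ^ j) (D.A (k+1) _) = _
    rw [contract D k s h0 h1, ih (s/2) (by linarith) (by linarith), pow_succ]
    congr 1
    field_simp

theorem fixed_mem (D : Data ρ G) (p : ℤ) (z : ℝ) (hA : D.A p z = z) (hB : D.B p z = z) :
    ∃ k : ℤ, Even (k + p + 1) ∧ z = k/2 := by
  obtain ⟨m, hm⟩ : ∃ m : ℤ, m = ⌊z - ((p:ℝ)-1)/2⌋ := ⟨_, rfl⟩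
  have l1 := Int.floor_le (z - ((p:ℝ)-1)/2)
  have l2 := Int.lt_floor_add_one (z - ((p:ℝ)-1)/2)
  rw [← hm] at l1 l2
  have e : Even ((p + 2*m) + p) := ⟨p + m, by ring⟩
  by_cases hp : Pos (ρ (p+2*m))
  · obtain ⟨t, ht⟩ : ∃ t, t = z - ((p:ℝ)-1)/2 - m := ⟨_, rfl⟩
    have a := (D.cA p (p+2*m) e t (by linarith) (by linarith)).1 hp
    have b := (D.cB p (p+2*m) e t (by linarith) (by linarith)).1 hp
    push_cast at a b
    rw [show ((p:ℝ)+2*m-1)/2 + t = z by rw [ht]; ring] at a b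
    rcases fix_RF t (by linarith) (by linarith) (by linarith) (by linarith) with h | h
    · exact ⟨p + 2*m - 1, ⟨p + m, by ring⟩, by push_cast; linarith⟩
    · exact ⟨p + 2*m + 1, ⟨p + m + 1, by ring⟩, by push_cast; linarith⟩
  · obtain ⟨t, ht⟩ : ∃ t, t = ((p:ℝ)+1)/2 + m - z := ⟨_, rfl⟩
    have a := (D.cA p (p+2*m) e t (by linarith) (by linarith)).2 hp
    have b := (D.cB p (p+2*m) e t (by linarith) (by linarith)).2 hp
    push_cast at a b
    rw [show ((p:ℝ)+2*m+1)/2 - t = z by rw [ht]; ring] at a b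
    rcases fix_RF t (by linarith) (by linarith) (by linarith) (by linarith) with h | h
    · exact ⟨p + 2*m + 1, ⟨p + m + 1, by ring⟩, by push_cast; linarith⟩
    · exact ⟨p + 2*m - 1, ⟨p + m, by ring⟩, by push_cast; linarith⟩

theorem unbounded (D : Data ρ G) (a X : ℝ) : ∃ g ∈ G, X ≤ g a := by
  by_contra hc
  push Not at hc
  obtain ⟨S, hS⟩ : ∃ S : Set ℝ, S = {y | ∃ g ∈ G, g a = y} := ⟨_, rfl⟩
  have hb : BddAbove S := ⟨X, by rw [hS]; rintro y ⟨g, hg, rfl⟩; exact (hc g hg).le⟩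
  have hne : S.Nonempty := ⟨a, by rw [hS]; exact ⟨1, G.one_mem, rfl⟩⟩
  have key : ∀ g ∈ G, sSup S ≤ g (sSup S) := by
    intro g hg
    apply csSup_le hne
    rw [hS]
    rintro y ⟨h, hh, rfl⟩
    have : (g⁻¹ * h) a ∈ S := by rw [hS]; exact ⟨_, G.mul_mem (G.inv_mem hg) hh, rfl⟩
    have h2 := g.monotone (le_csSup hb this)
    rw [← hS]
    calc h a = g ((g⁻¹ * h) a) := (g.apply_symm_apply (h a)).symm
      _ ≤ _ := h2
  have fx : ∀ g ∈ G, g (sSup S) = sSup S := by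
    intro g hg
    apply le_antisymm _ (key g hg)
    have := g.monotone (key g⁻¹ (G.inv_mem hg))
    have e : g (g⁻¹ (sSup S)) = sSup S := g.apply_symm_apply _
    rwa [e] at this
  obtain ⟨k, hk, ek⟩ := fixed_mem D 0 _ (fx _ (D.hA 0)) (fx _ (D.hB 0))
  obtain ⟨l, hl, el⟩ := fixed_mem D 1 _ (fx _ (D.hA 1)) (fx _ (D.hB 1))
  have : (k:ℝ) = l := by linarith
  have : k = l := by exact_mod_cast this
  subst this
  rw [Int.even_iff] at hk hl
  omega

theorem dyadic_move (D : Data ρ G) (q : ℕ) : ∀ m : ℤ, ∃ g ∈ G, ∃ k : ℤ,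
    g ((m:ℝ)/2^(q+1)) = k/2 := by
  induction q with
  | zero => exact fun m => ⟨1, G.one_mem, m, by norm_num⟩
  | succ q ih =>
    intro m
    obtain ⟨x, hx⟩ : ∃ x : ℝ, x = (m:ℝ)/2^(q+1+1) := ⟨_, rfl⟩
    obtain ⟨k, hk⟩ : ∃ k : ℤ, k = round (2*x) := ⟨_, rfl⟩
    have hr := abs_sub_round (2*x)
    rw [← hk, abs_le] at hr
    obtain ⟨h, hh, e⟩ : ∃ h ∈ G, h x = 2*x - k/2 := by
      rcases le_total 0 (2*x-k) with hs | hs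
      · obtain ⟨g, hg, hR⟩ := local_R D (k+1)
        refine ⟨g⁻¹, G.inv_mem hg, ?_⟩
        change g.symm x = _
        rw [OrderIso.symm_apply_eq]
        have := hR (2*x-k) hs (by linarith)
        rw [R_low _ hs (by linarith)] at this
        push_cast at this
        rw [show 2*x - (k:ℝ)/2 = (k+1-1)/2 + (2*x-k) by ring, this]; ring
      · obtain ⟨g, hg, hR⟩ := local_F D (k-1)
        refine ⟨g⁻¹, G.inv_mem hg, ?_⟩
        change g.symm x = _
        rw [OrderIso.symm_apply_eq]
        have := hR (-(2*x-k)) (by linarith) (by linarith)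
        rw [R_low _ (by linarith) (by linarith)] at this
        push_cast at this
        rw [show 2*x - (k:ℝ)/2 = (k-1+1)/2 - (-(2*x-k)) by ring, this]; ring
    obtain ⟨g, hg, l, hl⟩ := ih (m - k*2^q)
    refine ⟨g * h, G.mul_mem hg hh, l, ?_⟩
    rw [← hl, ← hx]
    change g (h x) = _
    rw [e, hx]
    congr 1
    push_cast
    field_simp
    ring

theorem exists_half (D : Data ρ G) (c d : ℝ) (hcd : c < d) :
    ∃ g ∈ G, ∃ k : ℤ, ∃ x, c < x ∧ x < d ∧ g x = k/2 := by
  obtain ⟨q, hq⟩ := pow_unbounded_of_one_lt (1/(d-c)) (one_lt_two : (1:ℝ) < 2)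
  have hpos : 0 < d - c := by linarith
  have h2 : (1:ℝ) < (d-c) * 2^(q+1) := by
    rw [div_lt_iff₀ hpos] at hq
    rw [pow_succ]
    nlinarith
  have hP : (0:ℝ) < 2^(q+1) := by positivity
  obtain ⟨g, hg, k, hk⟩ := dyadic_move D q (⌊c * 2^(q+1)⌋ + 1)
  refine ⟨g, hg, k, _, ?_, ?_, hk⟩
  · rw [lt_div_iff₀ hP]
    push_cast
    exact Int.lt_floor_add_one _
  · rw [div_lt_iff₀ hP]
    push_cast
    have := Int.floor_le (c * 2^(q+1))
    linarith

theorem blockWord_eq (k : ℤ) (n : ℕ) :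
    blockWord ρ k n = (List.range (n + 1)).map fun i : ℕ => ρ (k + (i : ℤ)) := by
  unfold blockWord
  simp [← List.map_eq_flatMap, List.map_map, Function.comp_def]

theorem not_periodic (hρ : IsQuasiPeriodic ρ) (d : ℤ) (hd : 0 < d)
    (hper : ∀ k, Pos (ρ (k + d)) ↔ Pos (ρ k)) (hde : Even d) : False := by
  obtain ⟨hl, -, h2⟩ := hρ
  have hP : ∀ k j : ℤ, Pos (ρ (k + d * j)) ↔ Pos (ρ k) := by
    intro k j
    induction j using Int.induction_on with
    | zero => simp
    | succ j ih => rw [← ih, ← hper (k + d * j)]; ring_nf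
    | pred j ih => rw [← ih, ← hper (k + d * (-j - 1))]; ring_nf
  lift d to ℕ using hd.le
  obtain ⟨k', hk'⟩ := h2 0 d
  have hw : ∀ i : ℕ, i ≤ d → ρ (k' + i) = (ρ ((d:ℤ) - i)).inv := by
    intro i hi
    have := congrArg (fun l => l[i]?) hk'
    simp only [blockWord_eq, wordInv] at this
    rw [List.getElem?_reverse (by simp; omega)] at this
    have e1 : d + 1 - 1 - i < d + 1 := by omega
    have e2 : i < d + 1 := by omega
    simp only [List.length_map, List.length_range, List.getElem?_map, List.getElem?_range e1,
      List.getElem?_range e2, Option.map_some, Option.some.injEq] at this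
    rw [this]
    have : ((d + 1 - 1 - i : ℕ) : ℤ) = (d:ℤ) - i := by omega
    rw [this, zero_add]
  have hinv : ∀ m, Pos (ρ m).inv ↔ ¬ Pos (ρ m) := by
    intro m
    cases ρ m <;> simp [Letter.inv, Pos]
  have hk0 := hw 0 (by omega)
  have hke : Even k' := by
    by_contra ho
    rw [Int.not_even_iff_odd] at ho
    have a := (hl k').2 ho
    have b := (hl d).1 hde
    simp at hk0
    rcases a with a | a <;> rcases b with b | b <;> rw [a, b] at hk0 <;> simp [Letter.inv] at hk0
  obtain ⟨r, hr⟩ := hke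
  obtain ⟨i, hi⟩ : ∃ i : ℕ, (i:ℤ) = (-r) % d := ⟨((-r) % d).toNat, by
    rw [Int.toNat_of_nonneg]; exact Int.emod_nonneg _ hd.ne'⟩
  have hid : (i:ℤ) < d := by rw [hi]; exact Int.emod_lt_of_pos _ hd
  have h3 := hw i (by omega)
  have hdiv := Int.emod_add_mul_ediv (-r) d
  rw [← hi] at hdiv
  have e : k' + i = ((d:ℤ) - i) + d * (-2 * ((-r) / d) - 1) := by
    rw [hr]; linear_combination 2 * hdiv
  have := hP ((d:ℤ) - i) (-2 * ((-r) / d) - 1)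
  rw [← e, h3, hinv] at this
  tauto

theorem proximal_at (hρ : IsQuasiPeriodic ρ) (D : Data ρ G) (c : ℤ) (a b δ : ℝ) (hab : a ≤ b)
    (hδ : 0 < δ) : ∃ g ∈ G, (c:ℝ)/2 - δ < g a ∧ g b < c/2 + δ := by
  by_contra hcon
  obtain ⟨S, hS⟩ : ∃ S : ℝ → Set ℝ, S = fun x => {y | y ≤ x ∨
    ∀ ε : ℝ, 0 < ε → ∃ g ∈ G, (c:ℝ)/2 - ε < g x ∧ g y < c/2 + ε} := ⟨_, rfl⟩
  have mem : ∀ x y, y ∈ S x ↔ (y ≤ x ∨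
    ∀ ε : ℝ, 0 < ε → ∃ g ∈ G, (c:ℝ)/2 - ε < g x ∧ g y < c/2 + ε) := by
    intro x y; rw [hS]; rfl
  have self : ∀ x, x ∈ S x := fun x => (mem x x).2 (Or.inl le_rfl)
  have mono : ∀ x x', x ≤ x' → S x ⊆ S x' := by
    intro x x' hx y hy
    rw [mem] at hy ⊢
    rcases hy with hy | hy
    · exact Or.inl (hy.trans hx)
    · right
      intro ε hε
      obtain ⟨g, hg, h1, h2⟩ := hy ε hε
      exact ⟨g, hg, lt_of_lt_of_le h1 (g.monotone hx), h2⟩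
  have equi : ∀ g ∈ G, ∀ x y, y ∈ S x → g y ∈ S (g x) := by
    intro g hg x y hy
    rw [mem] at hy ⊢
    rcases hy with hy | hy
    · exact Or.inl (g.monotone hy)
    · right
      intro ε hε
      obtain ⟨h, hh, h1, h2⟩ := hy ε hε
      refine ⟨h * g⁻¹, G.mul_mem hh (G.inv_mem hg), ?_, ?_⟩
      · change _ < h (g.symm (g x)); rwa [g.symm_apply_apply]
      · change h (g.symm (g y)) < _; rwa [g.symm_apply_apply]
  have inv1 : ∀ (g : ℝ ≃o ℝ) x, g⁻¹ (g x) = x := fun g x => g.symm_apply_apply x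
  have inv2 : ∀ (g : ℝ ≃o ℝ) x, g (g⁻¹ x) = x := fun g x => g.apply_symm_apply x
  have ba : ∀ y ∈ S a, y ≤ b := by
    intro y hy
    by_contra hlt
    push Not at hlt
    rw [mem] at hy
    rcases hy with hy | hy
    · linarith
    · obtain ⟨g, hg, h1, h2⟩ := hy δ hδ
      exact hcon ⟨g, hg, h1, lt_of_le_of_lt (g.monotone hlt.le) h2⟩
  have bdd : ∀ x, BddAbove (S x) := by
    intro x
    obtain ⟨g, hg, hx⟩ := unbounded D a x
    refine ⟨g b, fun y hy => ?_⟩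
    have h1 := mono _ _ hx hy
    have h2 := equi _ (G.inv_mem hg) _ _ h1
    rw [inv1] at h2
    have h3 := g.monotone (ba _ h2)
    rwa [inv2] at h3
  obtain ⟨φ, hφ⟩ : ∃ φ : ℝ → ℝ, ∀ x, φ x = sSup (S x) := ⟨_, fun _ => rfl⟩
  have φmono : Monotone φ := by
    intro x y h
    rw [hφ, hφ]
    exact csSup_le_csSup (bdd y) ⟨x, self x⟩ (mono _ _ h)
  have φle : ∀ g ∈ G, ∀ x, g (φ x) ≤ φ (g x) := by
    intro g hg x
    have : φ x ≤ g⁻¹ (φ (g x)) := by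
      rw [hφ x]
      apply csSup_le ⟨x, self x⟩
      intro y hy
      have h1 := le_csSup (bdd _) (equi g hg _ _ hy)
      rw [← hφ] at h1
      have h2 := (g⁻¹).monotone h1
      rwa [inv1] at h2
    have h3 := g.monotone this
    rwa [inv2] at h3
  have φeq : ∀ g ∈ G, ∀ x, φ (g x) = g (φ x) := by
    intro g hg x
    apply le_antisymm _ (φle g hg x)
    have h1 := g.monotone (φle _ (G.inv_mem hg) (g x))
    rwa [inv2, inv1] at h1
  have φc : (c:ℝ)/2 < φ (c/2) := by
    have : (c:ℝ)/2 + 1/8 ∈ S (c/2) := by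
      rw [mem]
      right
      intro ε hε
      obtain ⟨j, hj⟩ := pow_unbounded_of_one_lt (1/ε) (one_lt_two : (1:ℝ) < 2)
      refine ⟨D.A (c+1) ^ j, G.pow_mem (D.hA _) j, ?_, ?_⟩
      · have := contract_pow D c j 0 (by norm_num) (by norm_num)
        rw [add_zero] at this
        rw [this, zero_div]; linarith
      · rw [contract_pow D c j (1/8) (by norm_num) (by norm_num)]
        have hP : (0:ℝ) < 2^j := by positivity
        rw [div_lt_iff₀ hε] at hj
        have : (1/8:ℝ)/2^j < ε := by
          rw [div_lt_iff₀ hP]; linarith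
        linarith
    have := le_csSup (bdd _) this
    rw [← hφ] at this
    linarith
  have hint : ∀ k : ℤ, ∃ l : ℤ, Even (l + k) ∧ φ ((k:ℝ)/2) = l/2 := by
    intro k
    obtain ⟨fA, fB⟩ := fix_half D k
    have hA := φeq _ (D.hA (k+1)) ((k:ℝ)/2)
    have hB := φeq _ (D.hB (k+1)) ((k:ℝ)/2)
    rw [fA] at hA
    rw [fB] at hB
    obtain ⟨l, hl, e⟩ := fixed_mem D (k+1) _ hA.symm hB.symm
    refine ⟨l, ?_, e⟩
    rw [Int.even_iff] at hl ⊢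
    omega
  choose L hLe hL using hint
  have step : ∀ k : ℤ, (Pos (ρ (L k)) ↔ Pos (ρ k)) ∧ φ ((k:ℝ)/2 + 1/4) = L k/2 + 1/4 ∧
      φ ((k:ℝ)/2 - 1/4) = L k/2 - 1/4 := by
    intro k
    have hA := φeq _ (D.hA k) ((k:ℝ)/2)
    have hB := φeq _ (D.hB k) ((k:ℝ)/2)
    rw [hL] at hA hB
    by_cases hp : Pos (ρ k)
    · obtain ⟨e1, e2⟩ := quarter_pos D k k ⟨k, rfl⟩ hp
      rw [e1] at hA
      rw [e2] at hB
      have hm := φmono (show (k:ℝ)/2 - 1/4 ≤ k/2 by linarith)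
      rw [hA, hL] at hm
      by_cases hq : Pos (ρ (L k))
      · obtain ⟨e3, e4⟩ := quarter_pos D k (L k) (hLe k) hq
        rw [e3] at hA
        rw [e4] at hB
        exact ⟨⟨fun _ => hp, fun _ => hq⟩, hB, hA⟩
      · obtain ⟨e3, e4⟩ := quarter_neg D k (L k) (hLe k) hq
        rw [e3] at hm
        linarith
    · obtain ⟨e1, e2⟩ := quarter_neg D k k ⟨k, rfl⟩ hp
      rw [e1] at hA
      rw [e2] at hB
      have hm := φmono (show (k:ℝ)/2 ≤ k/2 + 1/4 by linarith)
      rw [hA, hL] at hm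
      by_cases hq : Pos (ρ (L k))
      · obtain ⟨e3, e4⟩ := quarter_pos D k (L k) (hLe k) hq
        rw [e3] at hm
        linarith
      · obtain ⟨e3, e4⟩ := quarter_neg D k (L k) (hLe k) hq
        rw [e3] at hA
        rw [e4] at hB
        exact ⟨⟨fun h => absurd h hq, fun h => absurd h hp⟩, hA, hB⟩
  have Lsucc : ∀ k, L (k+1) = L k + 1 := by
    intro k
    have h1 := (step k).2.1
    have h2 := (step (k+1)).2.2
    push_cast at h2
    rw [show ((k:ℝ)+1)/2 - 1/4 = k/2 + 1/4 by ring, h1] at h2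
    have : (L (k+1) : ℝ) = L k + 1 := by linarith
    exact_mod_cast this
  have Lall : ∀ j : ℤ, L (c + j) = L c + j := by
    intro j
    induction j using Int.induction_on with
    | zero => simp
    | succ j ih => rw [← add_assoc, Lsucc, ih]; ring
    | pred j ih =>
      have := Lsucc (c + (-j - 1))
      rw [show c + (-(j:ℤ) - 1) + 1 = c + -j by ring, ih] at this
      linarith
  have hLc : c < L c := by
    rw [hL] at φc
    have : (c:ℝ) < L c := by linarith
    exact_mod_cast this
  refine not_periodic hρ (L c - c) (by omega) (fun k => ?_) ?_
  · rw [← (step k).1]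
    have := Lall (k - c)
    rw [show c + (k - c) = k by ring] at this
    rw [this, show L c + (k - c) = k + (L c - c) by ring]
  · have := hLe c
    rw [Int.even_iff] at this ⊢
    omega

theorem proximal (hρ : IsQuasiPeriodic ρ) (D : Data ρ G) (a b c d : ℝ) (hab : a ≤ b)
    (hcd : c < d) : ∃ g ∈ G, (fun x : ℝ => g x) '' Set.Icc a b ⊆ Set.Ioo c d := by
  obtain ⟨h, hh, k, x, h1, h2, hx⟩ := exists_half D c d hcd
  have l1 := h.strictMono h1
  have l2 := h.strictMono h2
  rw [hx] at l1 l2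
  obtain ⟨g, hg, g1, g2⟩ := proximal_at hρ D k a b (min (k/2 - h c) (h d - k/2)) hab
    (lt_min (by linarith) (by linarith))
  have m1 := min_le_left ((k:ℝ)/2 - h c) (h d - k/2)
  have m2 := min_le_right ((k:ℝ)/2 - h c) (h d - k/2)
  refine ⟨h⁻¹ * g, G.mul_mem (G.inv_mem hh) hg, ?_⟩
  rintro _ ⟨y, ⟨hy1, hy2⟩, rfl⟩
  have n1 := g.monotone hy1
  have n2 := g.monotone hy2
  change c < h.symm (g y) ∧ h.symm (g y) < d
  rw [OrderIso.lt_symm_apply, OrderIso.symm_apply_lt]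
  constructor <;> linarith

end

end

end GRho

/-- For a quasi-periodic labelling `ρ`, the action of `G_ρ` on `ℝ`
is proximal: every compact interval can be moved into any nonempty open interval. -/
theorem G_rho_action_proximal
    (ρ : ℤ → Letter) (hρ : IsQuasiPeriodic ρ)
    (H : Subgroup (ℝ ≃o ℝ)) (hH : ∀ f : ℝ ≃o ℝ, f ∈ H ↔ InH f)
    (ν₁ ν₂ ν₃ : ℝ ≃o ℝ) (hgen : Subgroup.closure {ν₁, ν₂, ν₃} = H)
    (ζ₁ ζ₂ ζ₃ χ₁ χ₂ χ₃ : ℝ ≃o ℝ)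
    (hζ₁ : IsZeta ρ ν₁ ζ₁) (hζ₂ : IsZeta ρ ν₂ ζ₂) (hζ₃ : IsZeta ρ ν₃ ζ₃)
    (hχ₁ : IsChi ρ ν₁ χ₁) (hχ₂ : IsChi ρ ν₂ χ₂) (hχ₃ : IsChi ρ ν₃ χ₃)
    (G : Subgroup (ℝ ≃o ℝ))
    (hG : G = Subgroup.closure {ζ₁, ζ₂, ζ₃, χ₁, χ₂, χ₃})
    : ∀ a b c d : ℝ, a ≤ b → c < d →
      ∃ g ∈ G, (fun x : ℝ => g x) '' Set.Icc a b ⊆ Set.Ioo c d := by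
  have hl := hρ.1
  have ends : ∀ f : ℝ ≃o ℝ, InH f → f 0 = 0 ∧ f 1 = 1 := by
    rintro f ⟨-, k, ε, hε, h0, h1⟩
    constructor
    · rw [h0 0 ⟨le_rfl, hε.le⟩]; ring
    · rw [h1 1 ⟨by linarith, le_rfl⟩]; ring
  have gin : ∀ f ∈ ({ν₁, ν₂, ν₃} : Set (ℝ ≃o ℝ)), f 0 = 0 ∧ f 1 = 1 := fun f hf =>
    ends f ((hH f).1 (hgen ▸ Subgroup.subset_closure hf))
  have s0 : ∀ f ∈ ({ν₁, ν₂, ν₃} : Set (ℝ ≃o ℝ)),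
      (f 0 = 0 ∧ f 1 = 1) ∧ ∃ g ∈ G, GRho.IsConj ρ 0 f g := by
    intro f hf
    refine ⟨gin f hf, ?_⟩
    rcases hf with rfl | rfl | rfl
    · exact ⟨χ₁, hG ▸ Subgroup.subset_closure (by simp), GRho.isConj_chi hl hχ₁⟩
    · exact ⟨χ₂, hG ▸ Subgroup.subset_closure (by simp), GRho.isConj_chi hl hχ₂⟩
    · exact ⟨χ₃, hG ▸ Subgroup.subset_closure (by simp), GRho.isConj_chi hl hχ₃⟩
  have s1 : ∀ f ∈ ({ν₁, ν₂, ν₃} : Set (ℝ ≃o ℝ)),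
      (f 0 = 0 ∧ f 1 = 1) ∧ ∃ g ∈ G, GRho.IsConj ρ 1 f g := by
    intro f hf
    refine ⟨gin f hf, ?_⟩
    rcases hf with rfl | rfl | rfl
    · exact ⟨ζ₁, hG ▸ Subgroup.subset_closure (by simp), GRho.isConj_zeta hl hζ₁⟩
    · exact ⟨ζ₂, hG ▸ Subgroup.subset_closure (by simp), GRho.isConj_zeta hl hζ₂⟩
    · exact ⟨ζ₃, hG ▸ Subgroup.subset_closure (by simp), GRho.isConj_zeta hl hζ₃⟩
  have key : ∀ f : ℝ ≃o ℝ, InH f → ∀ p : ℤ, ∃ g ∈ G, GRho.IsConj ρ p f g := by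
    intro f hf p
    have hfc : f ∈ Subgroup.closure {ν₁, ν₂, ν₃} := by rw [hgen]; exact (hH f).2 hf
    rcases Int.even_or_odd p with hp | hp
    · obtain ⟨-, g, hg, hc⟩ := GRho.exists_conj s0 hfc
      refine ⟨g, hg, fun k hk => hc k ?_⟩
      rw [Int.even_iff] at *; omega
    · obtain ⟨-, g, hg, hc⟩ := GRho.exists_conj s1 hfc
      refine ⟨g, hg, fun k hk => hc k ?_⟩
      rw [Int.odd_iff] at hp
      rw [Int.even_iff] at *; omega
  choose A hA cA using key GRho.R GRho.R_inH
  choose B hB cB using key GRho.F GRho.F_inH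
  intro a b c d hab hcd
  exact GRho.proximal hρ ⟨A, B, hA, hB, cA, cB⟩ a b c d hab hcd
end

section
/- Let ρ be a quasi-periodic labelling, and let f, g ∈ G_ρ be elements for which there exists a nonempty open interval I ⊂ ℝ pointwise fixed by both f and g. Then there is a subgroup A ≤ G_ρ containing both f and g that is isomorphic to a direct sum of finitely many copies of F', the commutator subgroup of Thompson's group F. -/
/-! ### Piecewise linear homeomorphisms with a uniform dyadic mesh -/

/-- `f` is affine, with slope a bounded power of two and with dyadic constant term, on each
interval of the mesh of size `2⁻ᴺ`. -/
def PLat (N : ℕ) (f : ℝ ≃o ℝ) : Prop :=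
  ∀ i : ℤ, ∃ k c : ℤ, |k| ≤ N ∧ ∀ t : ℝ, (i : ℝ) ≤ 2 ^ N * t → 2 ^ N * t ≤ i + 1 →
    f t = 2 ^ k * t + c / 2 ^ N

theorem PLat.succ {N : ℕ} {f : ℝ ≃o ℝ} (h : PLat N f) : PLat (N + 1) f := by
  intro i
  obtain ⟨k, c, hk, hf⟩ := h (i / 2)
  refine ⟨k, 2 * c, by push_cast; omega, fun t h1 h2 => ?_⟩
  have e1 : ((i / 2 : ℤ) : ℝ) * 2 ≤ i := by exact_mod_cast (by omega : (i / 2) * 2 ≤ i)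
  have e2 : (i : ℝ) + 1 ≤ ((i / 2 : ℤ) : ℝ) * 2 + 2 := by
    exact_mod_cast (by omega : i + 1 ≤ (i / 2) * 2 + 2)
  rw [pow_succ] at h1 h2
  rw [hf t (by linarith) (by linarith)]
  push_cast
  rw [pow_succ]
  field_simp

theorem PLat.mono {N M : ℕ} {f : ℝ ≃o ℝ} (h : PLat N f) (hNM : N ≤ M) : PLat M f := by
  induction hNM with
  | refl => exact h
  | step _ ih => exact ih.succ

theorem two_zpow_int (n : ℤ) (hn : 0 ≤ n) : ∃ z : ℤ, (z : ℝ) = (2 : ℝ) ^ n ∧ 0 < z := by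
  lift n to ℕ using hn
  exact ⟨2 ^ n, by push_cast; simp, by positivity⟩

theorem PLat.mul {N : ℕ} {f g : ℝ ≃o ℝ} (hf : PLat N f) (hg : PLat N g) :
    PLat (2 * N) (f * g) := by
  intro i
  have two0 : (2 : ℝ) ≠ 0 := two_ne_zero
  obtain ⟨k, c, hk, hgt⟩ := hg (i / 2 ^ N)
  have hk' := abs_le.mp hk
  obtain ⟨D, hD, hD0⟩ := two_zpow_int (N - k) (by omega)
  obtain ⟨k', c', hk2, hft⟩ := hf (i / D + c)
  have hk2' := abs_le.mp hk2
  obtain ⟨E, hE, _⟩ := two_zpow_int (N + k') (by omega)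
  refine ⟨k + k', E * c + 2 ^ N * c', by push_cast; rw [abs_le]; omega, fun t h1 h2 => ?_⟩
  have hN : (0 : ℝ) < 2 ^ N := by positivity
  have f1 : ((i / 2 ^ N : ℤ) : ℝ) * 2 ^ N ≤ i := by
    exact_mod_cast Int.ediv_mul_le i (by positivity)
  have f2 : (i : ℝ) + 1 ≤ (((i / 2 ^ N : ℤ) : ℝ) + 1) * 2 ^ N := by
    exact_mod_cast Int.lt_ediv_add_one_mul_self i (by positivity : (0 : ℤ) < 2 ^ N)
  have hDr : (0 : ℝ) < D := by exact_mod_cast hD0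
  have d1 : ((i / D : ℤ) : ℝ) * D ≤ i := by exact_mod_cast Int.ediv_mul_le i hD0.ne'
  have d2 : (i : ℝ) + 1 ≤ (((i / D : ℤ) : ℝ) + 1) * D := by
    exact_mod_cast Int.lt_ediv_add_one_mul_self i hD0
  have hp : (2 : ℝ) ^ (2 * N) = 2 ^ N * 2 ^ N := by rw [two_mul, pow_add]
  have hgv := hgt t (by rw [hp] at h1; nlinarith) (by rw [hp] at h2; nlinarith)
  have hDk : (2 : ℝ) ^ k * D = 2 ^ N := by
    rw [hD, ← zpow_add₀ two0]; norm_num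
  have hgu : 2 ^ N * (g t) * D = 2 ^ (2 * N) * t + c * D := by
    rw [hgv, hp, ← hDk]; field_simp
  have hfv := hft (g t) (by push_cast; nlinarith) (by push_cast; nlinarith)
  have hE2 : (E : ℝ) = 2 ^ N * 2 ^ k' := by rw [hE, zpow_add₀ two0]; norm_num
  rw [RelIso.mul_apply, hfv, hgv, zpow_add₀ two0, hp]
  push_cast
  rw [hE2]
  field_simp
  ring

theorem PLat.inv {N : ℕ} {f : ℝ ≃o ℝ} (hf : PLat N f) : PLat (2 * N) f⁻¹ := by
  intro j
  have two0 : (2 : ℝ) ≠ 0 := two_ne_zero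
  have hN : (0 : ℝ) < 2 ^ N := by positivity
  have hp : (2 : ℝ) ^ (2 * N) = 2 ^ N * 2 ^ N := by rw [two_mul, pow_add]
  set y0 : ℝ := j / 2 ^ (2 * N) with hy0
  set x0 : ℝ := f⁻¹ y0 with hx0
  have hfx0 : f x0 = y0 := by rw [hx0]; exact RelIso.apply_inv_self f y0
  set i : ℤ := ⌊2 ^ N * x0⌋ with hi
  have i1 : (i : ℝ) ≤ 2 ^ N * x0 := Int.floor_le _
  have i2 : 2 ^ N * x0 < i + 1 := Int.lt_floor_add_one _
  obtain ⟨k, c, hk, hft⟩ := hf i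
  have hk' := abs_le.mp hk
  obtain ⟨E, hE, _⟩ := two_zpow_int (N + k) (by omega)
  obtain ⟨E', hE', _⟩ := two_zpow_int (N - k) (by omega)
  have hE2 : (E : ℝ) = 2 ^ N * 2 ^ k := by rw [hE, zpow_add₀ two0]; norm_num
  have hE2' : (E' : ℝ) = 2 ^ N * 2 ^ (-k) := by rw [hE', sub_eq_add_neg, zpow_add₀ two0]; norm_num
  set r : ℝ := (i + 1) / 2 ^ N with hr
  have hrN : 2 ^ N * r = i + 1 := by rw [hr]; field_simp
  have hfr : f r = 2 ^ k * r + c / 2 ^ N := hft r (by linarith) (by linarith)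
  have hlt : y0 < f r := by
    rw [← hfx0]; apply f.strictMono
    rw [hr, lt_div_iff₀ hN]; linarith
  have hfrE : 2 ^ (2 * N) * f r = (E * (i + 1) + 2 ^ N * c : ℤ) := by
    push_cast
    rw [hfr, hp, hE2, ← hrN]; field_simp
  have hj : (j : ℝ) < (E * (i + 1) + 2 ^ N * c : ℤ) := by
    rw [← hfrE, mul_comm, ← div_lt_iff₀ (by positivity)]; exact hlt
  have hj' : (j : ℝ) + 1 ≤ 2 ^ (2 * N) * f r := by
    rw [hfrE]; exact_mod_cast hj
  refine ⟨-k, -(E' * c), by push_cast; rw [abs_le]; omega, fun t h1 h2 => ?_⟩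
  have hft' : f (f⁻¹ t) = t := RelIso.apply_inv_self f t
  have hxl : x0 ≤ f⁻¹ t := by
    rw [← f.le_iff_le, hfx0, hft', hy0, div_le_iff₀ (by positivity)]; linarith
  have hxr : f⁻¹ t ≤ r := by
    rw [← f.le_iff_le, hft']
    have : (2 : ℝ) ^ (2 * N) * t ≤ 2 ^ (2 * N) * f r := by linarith
    exact le_of_mul_le_mul_left this (by positivity)
  have := hft (f⁻¹ t) (by nlinarith) (by nlinarith)
  rw [hft'] at this
  generalize f⁻¹ t = u at *
  push_cast
  rw [this, hp, hE2', zpow_neg]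
  field_simp
  ring

/-- The group of piecewise linear homeomorphisms with a uniform dyadic mesh. -/
def PL2 : Subgroup (ℝ ≃o ℝ) where
  carrier := {f | ∃ N, PLat N f}
  mul_mem' := by
    rintro f g ⟨N, hN⟩ ⟨M, hM⟩
    exact ⟨_, (hN.mono (le_max_left N M)).mul (hM.mono (le_max_right N M))⟩
  one_mem' := ⟨0, fun i => ⟨0, 0, by simp, fun t _ _ => by simp⟩⟩
  inv_mem' := by
    rintro f ⟨N, hN⟩
    exact ⟨_, hN.inv⟩

theorem mem_PL2 {f : ℝ ≃o ℝ} : f ∈ PL2 ↔ ∃ N, PLat N f := Iff.rfl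

/-- The affine homeomorphism `x ↦ 2 ^ k * x + c`. -/
noncomputable def aff (k : ℤ) (c : ℝ) : ℝ ≃o ℝ where
  toFun x := 2 ^ k * x + c
  invFun x := (x - c) / 2 ^ k
  left_inv x := by
    have : (2 : ℝ) ^ k ≠ 0 := by positivity
    field_simp; ring
  right_inv x := by
    have : (2 : ℝ) ^ k ≠ 0 := by positivity
    field_simp; ring
  map_rel_iff' := by
    intro a b
    have : (0 : ℝ) < 2 ^ k := by positivity
    simp [this]

@[simp] theorem aff_apply (k : ℤ) (c x : ℝ) : aff k c x = 2 ^ k * x + c := rfl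

theorem IsDyadic.exists_le {x : ℝ} (h : IsDyadic x) :
    ∃ N : ℕ, ∀ M : ℕ, N ≤ M → ∃ a : ℤ, x = a / 2 ^ M := by
  obtain ⟨a, b, rfl⟩ := h
  refine ⟨b, fun M hM => ⟨a * 2 ^ (M - b), ?_⟩⟩
  push_cast
  obtain ⟨d, rfl⟩ := Nat.exists_eq_add_of_le hM
  rw [Nat.add_sub_cancel_left, pow_add]
  field_simp

theorem IsDyadic.of_int (n : ℤ) : IsDyadic n := ⟨n, 0, by simp⟩

theorem IsDyadic.add {x y : ℝ} (hx : IsDyadic x) (hy : IsDyadic y) : IsDyadic (x + y) := by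
  obtain ⟨N, hN⟩ := hx.exists_le
  obtain ⟨M, hM⟩ := hy.exists_le
  obtain ⟨a, rfl⟩ := hN (max N M) (le_max_left _ _)
  obtain ⟨b, rfl⟩ := hM (max N M) (le_max_right _ _)
  exact ⟨a + b, max N M, by push_cast; ring⟩

theorem IsDyadic.neg {x : ℝ} (hx : IsDyadic x) : IsDyadic (-x) := by
  obtain ⟨a, b, rfl⟩ := hx
  exact ⟨-a, b, by push_cast; ring⟩

theorem IsDyadic.sub {x y : ℝ} (hx : IsDyadic x) (hy : IsDyadic y) : IsDyadic (x - y) := by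
  rw [sub_eq_add_neg]; exact hx.add hy.neg

theorem IsDyadic.zpow_mul {x : ℝ} (hx : IsDyadic x) (k : ℤ) : IsDyadic (2 ^ k * x) := by
  obtain ⟨a, b, rfl⟩ := hx
  rcases le_total 0 k with h | h
  · obtain ⟨z, hz, _⟩ := two_zpow_int k h
    exact ⟨z * a, b, by push_cast; rw [hz]; ring⟩
  · obtain ⟨n, rfl⟩ : ∃ n : ℕ, k = -(n : ℤ) := ⟨(-k).toNat, by omega⟩
    refine ⟨a, b + n, ?_⟩
    rw [zpow_neg, zpow_natCast, pow_add]
    field_simp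

theorem exists_dyadic_between {x y : ℝ} (h : x < y) : ∃ d, IsDyadic d ∧ x < d ∧ d < y := by
  obtain ⟨n, hn⟩ := exists_nat_gt (1 / (y - x))
  have hxy : 0 < y - x := by linarith
  have h2 : (n : ℝ) < 2 ^ n := by exact_mod_cast Nat.lt_two_pow_self
  have hp : (0 : ℝ) < 2 ^ n := by positivity
  have h3 : 1 < (y - x) * 2 ^ n := by
    rw [div_lt_iff₀ hxy] at hn
    nlinarith
  have h4 := Int.floor_le (x * 2 ^ n)
  have h5 := Int.lt_floor_add_one (x * 2 ^ n)
  refine ⟨((⌊x * 2 ^ n⌋ + 1 : ℤ) : ℝ) / 2 ^ n, ⟨_, n, rfl⟩, ?_, ?_⟩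
  · rw [lt_div_iff₀ hp]; push_cast; exact h5
  · rw [div_lt_iff₀ hp]; push_cast; linarith

theorem aff_mem (k : ℤ) {c : ℝ} (hc : IsDyadic c) : aff k c ∈ PL2 := by
  obtain ⟨N, hN⟩ := hc.exists_le
  obtain ⟨a, ha⟩ := hN (max N k.natAbs) (le_max_left _ _)
  refine ⟨max N k.natAbs, fun i => ⟨k, a, ?_, fun t _ _ => ?_⟩⟩
  · rw [Int.abs_eq_natAbs]; exact_mod_cast le_max_right _ _
  · rw [aff_apply, ← ha]

/-- Gluing two homeomorphisms at a point where they agree. -/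
theorem exists_glue (f g : ℝ ≃o ℝ) (a : ℝ) (h : f a = g a) :
    ∃ u : ℝ ≃o ℝ, (∀ x ≤ a, u x = f x) ∧ (∀ x, a ≤ x → u x = g x) := by
  let F : ℝ → ℝ := fun x => if x ≤ a then f x else g x
  have hF1 : ∀ x ≤ a, F x = f x := fun x hx => if_pos hx
  have hF2 : ∀ x, a ≤ x → F x = g x := by
    intro x hx
    rcases hx.eq_or_lt with rfl | hlt
    · rw [hF1 _ le_rfl, h]
    · exact if_neg (not_le.mpr hlt)
  have hmono : StrictMono F := by
    intro x y hxy
    rcases le_total y a with hy | hy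
    · rw [hF1 x (by linarith), hF1 y hy]; exact f.strictMono hxy
    · rcases le_total x a with hx | hx
      · rw [hF1 x hx, hF2 y hy]
        rcases hx.eq_or_lt with rfl | hlt
        · rw [h]; exact g.strictMono hxy
        · exact lt_of_lt_of_le (f.strictMono hlt) (h ▸ g.monotone hy)
      · rw [hF2 x hx, hF2 y hy]; exact g.strictMono hxy
  have hsurj : Function.Surjective F := by
    intro y
    rcases le_total y (f a) with hy | hy
    · refine ⟨f.symm y, ?_⟩
      rw [hF1 _ (by rw [f.symm_apply_le]; exact hy)]; simp
    · refine ⟨g.symm y, ?_⟩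
      rw [hF2 _ (by rw [g.le_symm_apply, ← h]; exact hy)]; simp
  refine ⟨hmono.orderIsoOfSurjective F hsurj, fun x hx => ?_, fun x hx => ?_⟩
  · rw [StrictMono.coe_orderIsoOfSurjective]; exact hF1 x hx
  · rw [StrictMono.coe_orderIsoOfSurjective]; exact hF2 x hx

theorem PL2_glue {f g u : ℝ ≃o ℝ} {a : ℝ} (hf : f ∈ PL2) (hg : g ∈ PL2) (ha : IsDyadic a)
    (h1 : ∀ x ≤ a, u x = f x) (h2 : ∀ x, a ≤ x → u x = g x) : u ∈ PL2 := by
  obtain ⟨N, hN⟩ := hf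
  obtain ⟨M, hM⟩ := hg
  obtain ⟨L, hL⟩ := ha.exists_le
  set K := max L (max N M)
  have hN' := hN.mono (show N ≤ K by simp [K])
  have hM' := hM.mono (show M ≤ K by simp [K])
  obtain ⟨z, hz⟩ := hL K (by simp [K])
  have hK : (0 : ℝ) < 2 ^ K := by positivity
  have hz' : 2 ^ K * a = z := by rw [hz]; field_simp
  refine ⟨K, fun i => ?_⟩
  rcases lt_or_ge i z with hi | hi
  · obtain ⟨k, c, hk, hh⟩ := hN' i
    refine ⟨k, c, hk, fun t t1 t2 => ?_⟩
    have : (i : ℝ) + 1 ≤ z := by exact_mod_cast hi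
    rw [h1 t (le_of_mul_le_mul_left (by linarith) hK), hh t t1 t2]
  · obtain ⟨k, c, hk, hh⟩ := hM' i
    refine ⟨k, c, hk, fun t t1 t2 => ?_⟩
    have : (z : ℝ) ≤ i := by exact_mod_cast hi
    rw [h2 t (le_of_mul_le_mul_left (by linarith) hK), hh t t1 t2]

theorem PL2.exists_glue {f g : ℝ ≃o ℝ} {a : ℝ} (hf : f ∈ PL2) (hg : g ∈ PL2) (ha : IsDyadic a)
    (h : f a = g a) :
    ∃ u ∈ PL2, (∀ x ≤ a, u x = f x) ∧ (∀ x, a ≤ x → u x = g x) := by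
  obtain ⟨u, h1, h2⟩ := _root_.exists_glue f g a h
  exact ⟨u, PL2_glue hf hg ha h1 h2, h1, h2⟩

theorem zpow_apply_inv (f : ℝ ≃o ℝ) {x y : ℝ} (h : f x = y) : f⁻¹ y = x := by
  rw [← h]; exact RelIso.inv_apply_self f x

/-- Dyadic intervals are piecewise linearly isomorphic. -/
theorem exists_iso {a b c d : ℝ} (ha : IsDyadic a) (hb : IsDyadic b) (hc : IsDyadic c)
    (hd : IsDyadic d) (hab : a < b) (hcd : c < d) : ∃ θ ∈ PL2, θ a = c ∧ θ b = d := by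
  obtain ⟨l0, hl0, l1, l2⟩ := PL2.exists_glue (f := 1) (g := aff 1 0) (a := 0) PL2.one_mem
    (aff_mem 1 (by simpa using IsDyadic.of_int 0)) (by simpa using IsDyadic.of_int 0) (by simp)
  obtain ⟨l, hl, l3, l4⟩ := PL2.exists_glue (f := l0) (g := aff 0 1) (a := 1) hl0
    (aff_mem 0 (by simpa using IsDyadic.of_int 1)) (by simpa using IsDyadic.of_int 1)
    (by rw [l2 1 (by norm_num)]; simp; norm_num)
  have hl00 : l 0 = 0 := by rw [l3 0 (by norm_num), l1 0 le_rfl]; rfl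
  have hlr : ∀ n : ℕ, (l ^ n) 0 = 0 ∧ (l ^ n) 1 = n + 1 := by
    intro n
    induction n with
    | zero => simp
    | succ n ih =>
      rw [pow_succ', RelIso.mul_apply, RelIso.mul_apply, ih.1, ih.2, hl00,
        l4 _ (by have : (0 : ℝ) ≤ n := n.cast_nonneg
                 linarith)]
      simp
  -- for each positive dyadic, a map from [0, 2⁻ᴺ]
  have key : ∀ x y : ℝ, IsDyadic x → IsDyadic y → x < y → ∃ N : ℕ, ∀ M ≥ N,
      ∃ θ ∈ PL2, θ 0 = x ∧ θ (1 / 2 ^ M) = y := by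
    intro x y hx hy hxy
    obtain ⟨N, hN⟩ := (hy.sub hx).exists_le
    refine ⟨N, fun M hM => ?_⟩
    obtain ⟨r, hr⟩ := hN M hM
    have hr0 : 0 < r := by
      have : (0 : ℝ) < r / 2 ^ M := by rw [← hr]; linarith
      rw [div_pos_iff_of_pos_right (by positivity)] at this
      exact_mod_cast this
    obtain ⟨n, rfl⟩ : ∃ n : ℕ, r = n + 1 := ⟨(r - 1).toNat, by omega⟩
    refine ⟨aff (-M) x * l ^ n * aff M 0, PL2.mul_mem (PL2.mul_mem (aff_mem _ hx)
      (PL2.pow_mem hl _)) (aff_mem _ (by simpa using IsDyadic.of_int 0)), ?_, ?_⟩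
    · simp [RelIso.mul_apply, (hlr n).1]
    · simp only [RelIso.mul_apply, aff_apply]
      have : (2 : ℝ) ^ (M : ℤ) * (1 / 2 ^ M) + 0 = 1 := by rw [zpow_natCast]; field_simp; simp
      rw [this, (hlr n).2, zpow_neg, zpow_natCast]
      have : y = x + ((n + 1 : ℤ) : ℝ) / 2 ^ M := by rw [← hr]; ring
      rw [this]; push_cast; field_simp; ring
  obtain ⟨N1, h1⟩ := key a b ha hb hab
  obtain ⟨N2, h2⟩ := key c d hc hd hcd
  obtain ⟨θ1, m1, e1, e2⟩ := h1 (max N1 N2) (le_max_left _ _)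
  obtain ⟨θ2, m2, e3, e4⟩ := h2 (max N1 N2) (le_max_right _ _)
  refine ⟨θ2 * θ1⁻¹, PL2.mul_mem m2 (PL2.inv_mem m1), ?_, ?_⟩
  · rw [RelIso.mul_apply, zpow_apply_inv _ e1, e3]
  · rw [RelIso.mul_apply, zpow_apply_inv _ e2, e4]

/-- Homeomorphisms supported in a compact subinterval of `(p, q)`. -/
def PLc (p q : ℝ) : Subgroup (ℝ ≃o ℝ) where
  carrier := {f | f ∈ PL2 ∧ ∃ α β, p < α ∧ β < q ∧ ∀ x, f x ≠ x → α ≤ x ∧ x ≤ β}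
  one_mem' := ⟨PL2.one_mem, p + 1, q - 1, by linarith, by linarith, fun x hx => absurd rfl hx⟩
  mul_mem' := by
    rintro f g ⟨hf, α, β, h1, h2, h3⟩ ⟨hg, α', β', h1', h2', h3'⟩
    refine ⟨PL2.mul_mem hf hg, min α α', max β β', lt_min h1 h1', max_lt h2 h2', fun x hx => ?_⟩
    by_cases hgx : g x = x
    · rw [RelIso.mul_apply, hgx] at hx
      exact ⟨(min_le_left _ _).trans (h3 x hx).1, (h3 x hx).2.trans (le_max_left _ _)⟩
    · exact ⟨(min_le_right _ _).trans (h3' x hgx).1, (h3' x hgx).2.trans (le_max_right _ _)⟩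
  inv_mem' := by
    rintro f ⟨hf, α, β, h1, h2, h3⟩
    refine ⟨PL2.inv_mem hf, α, β, h1, h2, fun x hx => h3 x fun h => hx (zpow_apply_inv f h)⟩

theorem mem_PLc {p q : ℝ} {f : ℝ ≃o ℝ} : f ∈ PLc p q ↔
    f ∈ PL2 ∧ ∃ α β, p < α ∧ β < q ∧ ∀ x, f x ≠ x → α ≤ x ∧ x ≤ β := Iff.rfl

theorem PLc_mono {p q p' q' : ℝ} (h1 : p' ≤ p) (h2 : q ≤ q') : PLc p q ≤ PLc p' q' := by
  rintro f ⟨hf, α, β, a1, a2, a3⟩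
  exact ⟨hf, α, β, by linarith, by linarith, a3⟩

theorem PLc_fix {p q : ℝ} {f : ℝ ≃o ℝ} (hf : f ∈ PLc p q) {x : ℝ} (hx : x ∉ Set.Ioo p q) :
    f x = x := by
  obtain ⟨_, α, β, h1, h2, h3⟩ := hf
  by_contra h
  exact hx ⟨h1.trans_le (h3 x h).1, (h3 x h).2.trans_lt h2⟩

/-- Conjugating a supported element by a piecewise linear map. -/
theorem PLc_conj {p q p' q' : ℝ} {f θ : ℝ ≃o ℝ} (hf : f ∈ PLc p q) (hθ : θ ∈ PL2)
    (h1 : p' ≤ θ p) (h2 : θ q ≤ q') : θ * f * θ⁻¹ ∈ PLc p' q' := by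
  obtain ⟨hf, α, β, a1, a2, a3⟩ := hf
  refine ⟨PL2.mul_mem (PL2.mul_mem hθ hf) (PL2.inv_mem hθ), θ α, θ β,
    h1.trans_lt (θ.strictMono a1), (θ.strictMono a2).trans_le h2, fun x hx => ?_⟩
  have e : θ (θ⁻¹ x) = x := RelIso.apply_inv_self θ x
  have := a3 (θ⁻¹ x) (fun h => hx (by rw [RelIso.mul_apply, RelIso.mul_apply, h, e]))
  exact ⟨e ▸ θ.monotone this.1, by conv_lhs => rw [← e]
                                   exact θ.monotone this.2⟩

/-- `PLc p q` acts transitively on dyadic points. -/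
theorem exists_move {p q x y : ℝ} (hx : IsDyadic x) (hy : IsDyadic y) (h1 : p < x) (h2 : x < q)
    (h3 : p < y) (h4 : y < q) : ∃ t ∈ PLc p q, t x = y := by
  obtain ⟨p', dp, p1, p2⟩ := exists_dyadic_between (lt_min h1 h3)
  obtain ⟨q', dq, q1, q2⟩ := exists_dyadic_between (max_lt h2 h4)
  rw [lt_min_iff] at p2
  rw [max_lt_iff] at q1
  obtain ⟨θ1, m1, a1, a2⟩ := exists_iso dp hx dp hy p2.1 p2.2
  obtain ⟨θ2, m2, b1, b2⟩ := exists_iso hx dq hy dq q1.1 q1.2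
  obtain ⟨u, mu, u1, u2⟩ := PL2.exists_glue PL2.one_mem m1 dp (by rw [a1]; rfl)
  obtain ⟨v, mv, v1, v2⟩ := PL2.exists_glue mu m2 hx
    (by rw [u2 x p2.1.le, a2, b1])
  obtain ⟨w, mw, w1, w2⟩ := PL2.exists_glue mv PL2.one_mem dq
    (by rw [v2 q' q1.1.le, b2]; rfl)
  refine ⟨w, ⟨mw, p', q', p1, q2, fun z hz => ⟨?_, ?_⟩⟩, ?_⟩
  · by_contra h
    push Not at h
    have := p2.1
    have := q1.1
    exact hz (by rw [w1 z (by linarith), v1 z (by linarith), u1 z h.le]; rfl)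
  · by_contra h
    push Not at h
    exact hz (w2 z h.le)
  · rw [w1 x q1.1.le, v1 x le_rfl, u2 x p2.1.le, a2]

/-- Any element of `PLc p q` can be compressed into a given subinterval. -/
theorem exists_compress {p q p' q' : ℝ} {h : ℝ ≃o ℝ} (hh : h ∈ PLc p q) (h1 : p ≤ p')
    (h2 : p' < q') (h3 : q' ≤ q) : ∃ t ∈ PLc p q, t * h * t⁻¹ ∈ PLc p' q' := by
  by_cases hone : h = 1
  · exact ⟨1, Subgroup.one_mem _, by rw [hone]; simp⟩
  obtain ⟨hPL, α, β, a1, a2, a3⟩ := hh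
  have hab : α ≤ β := by
    by_contra hcon
    exact hone (by ext x; by_contra hx; exact hcon ((a3 x hx).1.trans (a3 x hx).2))
  obtain ⟨v, dv, v1, v2⟩ := exists_dyadic_between h2
  obtain ⟨b, db, b1, b2⟩ := exists_dyadic_between a2
  obtain ⟨t1, m1, e1⟩ := exists_move db dv (p := p) (q := q) (by linarith) b2 (by linarith)
    (by linarith)
  have hp1 : p < t1 α := by
    rw [← PLc_fix m1 (x := p) (by simp)]; exact t1.strictMono a1
  have hv1 : t1 α < v := by rw [← e1]; exact t1.strictMono (by linarith)
  obtain ⟨c, dc, c1, c2⟩ := exists_dyadic_between hp1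
  obtain ⟨w, dw, w1, w2⟩ := exists_dyadic_between v2
  obtain ⟨u, du, u1, u2⟩ := exists_dyadic_between v1
  obtain ⟨t2, m2, e2⟩ := exists_move dc du (p := p) (q := w) c1 (by linarith) (by linarith)
    (by linarith)
  refine ⟨t2 * t1, Subgroup.mul_mem _ (PLc_mono le_rfl (by linarith) m2) m1, ?_⟩
  have hPL' : t2 * t1 ∈ PL2 := PL2.mul_mem m2.1 m1.1
  refine ⟨PL2.mul_mem (PL2.mul_mem hPL' hPL) (PL2.inv_mem hPL'), u, w, u1, w2, fun x hx => ?_⟩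
  have e : (t2 * t1) ((t2 * t1)⁻¹ x) = x := RelIso.apply_inv_self _ x
  have := a3 ((t2 * t1)⁻¹ x) (fun h => hx (by rw [RelIso.mul_apply, RelIso.mul_apply, h, e]))
  set y := (t2 * t1)⁻¹ x
  rw [← e]
  constructor
  · rw [← e2, RelIso.mul_apply]
    exact t2.monotone (c2.le.trans (t1.monotone this.1))
  · rw [RelIso.mul_apply, ← PLc_fix m2 (x := w) (by simp)]
    refine t2.monotone ((t1.monotone (this.2.trans b1.le)).trans ?_)
    rw [e1]; exact w1.le


/-! ### Perfectness of the compactly supported group -/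

/-- Compactly supported elements of `PL2`. -/
def PLcR : Subgroup (ℝ ≃o ℝ) where
  carrier := {f | ∃ p q, f ∈ PLc p q}
  one_mem' := ⟨0, 1, Subgroup.one_mem _⟩
  mul_mem' := by
    rintro f g ⟨p, q, hf⟩ ⟨p', q', hg⟩
    exact ⟨min p p', max q q', Subgroup.mul_mem _ (PLc_mono (min_le_left _ _) (le_max_left _ _) hf)
      (PLc_mono (min_le_right _ _) (le_max_right _ _) hg)⟩
  inv_mem' := by
    rintro f ⟨p, q, hf⟩
    exact ⟨p, q, Subgroup.inv_mem _ hf⟩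

theorem mem_PLcR_of {f : ℝ ≃o ℝ} (hf : f ∈ PL2) (a b : ℝ) (h1 : ∀ x ≤ a, f x = x)
    (h2 : ∀ x, b ≤ x → f x = x) : f ∈ PLcR := by
  refine ⟨a - 1, b + 1, hf, a, b, by linarith, by linarith, fun x hx => ⟨?_, ?_⟩⟩
  · by_contra h; exact hx (h1 x (by linarith))
  · by_contra h; exact hx (h2 x (by linarith))

open Classical in
/-- The abelianization map of `PLcR`, extended by `1`. -/
noncomputable def phi (f : ℝ ≃o ℝ) : Abelianization PLcR :=
  if h : f ∈ PLcR then Abelianization.of ⟨f, h⟩ else 1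

theorem phi_mul {f g : ℝ ≃o ℝ} (hf : f ∈ PLcR) (hg : g ∈ PLcR) : phi (f * g) = phi f * phi g := by
  unfold phi
  rw [dif_pos hf, dif_pos hg, dif_pos (Subgroup.mul_mem _ hf hg), ← map_mul]
  rfl

theorem phi_one : phi 1 = 1 := by
  unfold phi
  rw [dif_pos (Subgroup.one_mem _)]
  exact map_one _

theorem mem_commutator_of_phi {f : ℝ ≃o ℝ} (hf : f ∈ PLcR) (h : phi f = 1) :
    f ∈ ⁅PLcR, PLcR⁆ := by
  unfold phi at h
  rw [dif_pos hf, ← MonoidHom.mem_ker, Abelianization.ker_of] at h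
  have h2 : f ∈ (commutator PLcR).map PLcR.subtype := ⟨⟨f, hf⟩, h, rfl⟩
  rw [commutator_def, Subgroup.map_commutator] at h2
  rw [← MonoidHom.range_eq_map, Subgroup.range_subtype] at h2
  exact h2

/-- Shape of the basic generators. -/
def IsX (s : ℝ ≃o ℝ) (n : ℤ) (X : ℝ ≃o ℝ) : Prop :=
  X ∈ PLcR ∧ (∀ x : ℝ, x ≤ n → X x = x) ∧ (∀ x : ℝ, n ≤ x → x ≤ n + 1 → X x = 2 * x - n) ∧
    ∀ x : ℝ, n + 1 ≤ x → X x = s x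

/-- The shift `s` with stopping point `Q`. -/
def IsShift (Q : ℤ) (s : ℝ ≃o ℝ) : Prop :=
  s ∈ PL2 ∧ (∀ x : ℝ, x ≤ Q - 2 → s x = x + 1) ∧ ∀ x : ℝ, Q ≤ x → s x = x

theorem exists_shift (Q : ℤ) : ∃ s, IsShift Q s := by
  have hQ : IsDyadic (Q : ℝ) := .of_int Q
  obtain ⟨s0, m0, a1, a2⟩ := PL2.exists_glue (f := aff 0 1) (g := aff (-1) (Q / 2)) (a := Q - 2)
    (aff_mem _ (by simpa using IsDyadic.of_int 1)) (aff_mem _ ⟨Q, 1, by simp⟩)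
    (by simpa using IsDyadic.of_int (Q - 2)) (by simp; ring)
  obtain ⟨s, m, b1, b2⟩ := PL2.exists_glue m0 PL2.one_mem hQ (by
    rw [a2 _ (by linarith)]; simp; ring)
  refine ⟨s, m, fun x hx => ?_, fun x hx => by rw [b2 x hx]; rfl⟩
  rw [b1 x (by linarith), a1 x hx]; simp

theorem exists_X {Q : ℤ} {s : ℝ ≃o ℝ} (hs : IsShift Q s) {n : ℤ} (hn : n ≤ Q - 3) :
    ∃ X, IsX s n X := by
  have hn' : (n : ℝ) ≤ Q - 3 := by exact_mod_cast hn
  obtain ⟨s0, m0, a1, a2⟩ := PL2.exists_glue (f := 1) (g := aff 1 (-n)) (a := n) PL2.one_mem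
    (aff_mem _ (IsDyadic.of_int n).neg) (.of_int n) (by simp; ring)
  obtain ⟨X, m, b1, b2⟩ := PL2.exists_glue (a := n + 1) m0 hs.1
    (by simpa using IsDyadic.of_int (n + 1)) (by
    rw [a2 _ (by linarith), hs.2.1 _ (by linarith)]; simp; ring)
  have c1 : ∀ x : ℝ, x ≤ n → X x = x := fun x hx => by
    rw [b1 x (by linarith), a1 x hx]; rfl
  refine ⟨X, mem_PLcR_of m n Q c1 (fun x hx => ?_), c1, fun x h1 h2 => ?_, b2⟩
  · rw [b2 x (by linarith), hs.2.2 x hx]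
  · rw [b1 x h2, a2 x h1]; simp; ring

theorem X_rel {Q : ℤ} {s : ℝ ≃o ℝ} (hs : IsShift Q s) {n : ℤ} (hn : n ≤ Q - 4)
    {X Y Z : ℝ ≃o ℝ} (hX : IsX s (n - 1) X) (hY : IsX s n Y) (hZ : IsX s (n + 1) Z) :
    Z * X = X * Y := by
  obtain ⟨_, x1, x2, x3⟩ := hX
  obtain ⟨_, y1, y2, y3⟩ := hY
  obtain ⟨_, z1, z2, z3⟩ := hZ
  have hn' : (n : ℝ) ≤ Q - 4 := by exact_mod_cast hn
  push_cast at *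
  ext x
  rw [RelIso.mul_apply, RelIso.mul_apply]
  rcases le_total x (n - 1) with h | h
  · rw [x1 x h, z1 x (by linarith), y1 x (by linarith), x1 x h]
  rcases le_total x n with h' | h'
  · rw [x2 x h (by linarith), y1 x h', x2 x h (by linarith), z1 _ (by linarith)]
  rcases le_total x (n + 1) with h2 | h2
  · rw [x3 x (by linarith), hs.2.1 x (by linarith), z2 _ (by linarith) (by linarith),
      y2 x h' h2, x3 _ (by linarith), hs.2.1 _ (by linarith)]
    ring
  · have hh : (n : ℝ) + 2 ≤ s x := by
      have e := hs.2.1 (n + 1) (by linarith)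
      have := s.monotone h2
      linarith
    rw [x3 x (by linarith), y3 x h2, z3 _ (by linarith), x3 _ (by linarith)]

theorem phi_X {Q : ℤ} {s : ℝ ≃o ℝ} (hs : IsShift Q s) {a n : ℤ} (han : a ≤ n) :
    n ≤ Q - 3 → ∀ {X Y : ℝ ≃o ℝ}, IsX s a X → IsX s n Y → phi Y = phi X := by
  induction n, han using Int.le_induction with
  | base =>
    intro _ X Y hX hY
    have : Y = X := by
      ext x
      rcases le_total x a with h | h
      · rw [hX.2.1 x h, hY.2.1 x h]
      rcases le_total x (a + 1) with h' | h'
      · rw [hX.2.2.1 x h h', hY.2.2.1 x h h']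
      · rw [hX.2.2.2 x h', hY.2.2.2 x h']
    rw [this]
  | succ n hn ih =>
    intro hQ X Y hX hY
    obtain ⟨U, hU⟩ := exists_X hs (n := n - 1) (by omega)
    obtain ⟨V, hV⟩ := exists_X hs (n := n) (by omega)
    have e := congrArg phi (X_rel hs (by omega) hU hV hY)
    rw [phi_mul hY.1 hU.1, phi_mul hU.1 hV.1, mul_comm] at e
    rw [mul_left_cancel e]
    exact ih (by omega) hX hV

theorem shift_zpow {Q : ℤ} {s : ℝ ≃o ℝ} (hs : IsShift Q s) (n : ℕ) (x : ℝ)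
    (h : x + n ≤ Q - 1) : (s ^ n) x = x + n := by
  induction n with
  | zero => simp
  | succ n ih =>
    push_cast at h ⊢
    rw [pow_succ', RelIso.mul_apply, ih (by linarith), hs.2.1 _ (by linarith)]
    ring

/-- Positive elements. -/
def IsPos (Q : ℤ) (s : ℝ ≃o ℝ) (A M : ℤ) (c : ℕ) (u : ℝ ≃o ℝ) : Prop :=
  u ∈ PLcR ∧ A ≤ M ∧ M + c ≤ Q - 2 ∧ (∀ x : ℝ, x ≤ A → u x = x) ∧
    (∀ x : ℝ, M ≤ x → u x = (s ^ c) x) ∧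
    ∀ i : ℤ, A ≤ i → i < M → ∃ (k : ℕ) (e : ℤ), ∀ t : ℝ, i ≤ t → t ≤ i + 1 → u t = 2 ^ k * t + e

theorem IsPos.expand {Q : ℤ} {s : ℝ ≃o ℝ} {A M : ℤ} {c : ℕ} {u : ℝ ≃o ℝ} (h : IsPos Q s A M c u)
    {i j : ℤ} (hi : A ≤ i) (hij : i ≤ j) : j ≤ M → (j : ℝ) - i ≤ u j - u i := by
  induction j, hij using Int.le_induction with
  | base => intro _; simp
  | succ j hj ih =>
    intro hM
    have := ih (by omega)
    obtain ⟨k, e, hk⟩ := h.2.2.2.2.2 j (by omega) (by omega)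
    have e1 := hk j le_rfl (by linarith)
    have e2 := hk (j + 1) (by linarith) le_rfl
    have : (1 : ℝ) ≤ 2 ^ k := one_le_pow₀ (by norm_num)
    push_cast
    rw [e2]
    nlinarith

theorem phi_pos {Q : ℤ} {s : ℝ ≃o ℝ} (hs : IsShift Q s) {A : ℤ} {X : ℝ ≃o ℝ} (hX : IsX s A X)
    (c : ℕ) : ∀ (M : ℤ) (u : ℝ ≃o ℝ), IsPos Q s A M c u → phi u = phi X ^ c := by
  induction c with
  | zero =>
    rintro M u hu
    obtain ⟨hu1, hAM, hMQ, h1, h2, h3⟩ := id hu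
    simp only [pow_zero, RelIso.one_apply] at h2
    have : u = 1 := by
      ext x
      rw [RelIso.one_apply]
      rcases le_total x A with h | h
      · exact h1 x h
      rcases le_or_gt (M : ℝ) x with h' | h'
      · exact h2 x h'
      have f1 : A ≤ ⌊x⌋ := Int.le_floor.mpr h
      have f2 : ⌊x⌋ < M := Int.floor_lt.mpr h'
      obtain ⟨k, e, hk⟩ := h3 ⌊x⌋ f1 f2
      have g1 := hu.expand le_rfl f1 f2.le
      have g2 := hu.expand (i := ⌊x⌋ + 1) (j := M) (by omega) (by omega) le_rfl
      push_cast at g2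
      rw [h1 A le_rfl, hk _ le_rfl (by linarith)] at g1
      rw [h2 M le_rfl, hk _ (by linarith) le_rfl] at g2
      have hk1 : (1 : ℝ) ≤ 2 ^ k := one_le_pow₀ (by norm_num)
      have hk2 : (2 : ℝ) ^ k = 1 := by nlinarith
      rw [hk2] at g1 g2 hk
      rw [hk x (Int.floor_le x) (Int.lt_floor_add_one x).le]
      have : (e : ℝ) = 0 := by linarith
      rw [this]; ring
    rw [this, phi_one, pow_zero]
  | succ c ih =>
    rintro M u hu
    obtain ⟨hu1, hAM, hMQ, h1, h2, h3⟩ := id hu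
    have hMQ' : (M : ℝ) + (c + 1) ≤ Q - 2 := by exact_mod_cast hMQ
    have hc0 : (0 : ℝ) ≤ c := c.cast_nonneg
    -- there is an interval with a nontrivial slope
    have hex : ∃ i : ℤ, A ≤ i ∧ i < M ∧ ∃ (k : ℕ) (e : ℤ),
        ∀ t : ℝ, i ≤ t → t ≤ i + 1 → u t = 2 ^ (k + 1) * t + e := by
      by_contra hcon
      have step : ∀ j : ℤ, A ≤ j → j ≤ M → u j = j := by
        intro j hj
        induction j, hj using Int.le_induction with
        | base => intro _; exact h1 A le_rfl
        | succ j hj ih' =>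
          intro hjM
          obtain ⟨k, e, hk⟩ := h3 j hj (by omega)
          rcases k with _ | k
          · have a1 := ih' (by omega)
            rw [hk j le_rfl (by linarith)] at a1
            push_cast
            rw [hk (j + 1) (by linarith) le_rfl]
            simp only [pow_zero] at *
            linarith
          · exact absurd ⟨j, hj, by omega, k, e, hk⟩ hcon
      have a1 := step M hAM le_rfl
      rw [h2 M le_rfl, shift_zpow hs _ _ (by push_cast; linarith)] at a1
      push_cast at a1
      linarith
    obtain ⟨i, hAi, hiM, k, e, hk⟩ := hex
    have hiM' : (i : ℝ) + 1 ≤ M := by exact_mod_cast hiM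
    have hAi' : (A : ℝ) ≤ i := by exact_mod_cast hAi
    obtain ⟨Y, hY⟩ := exists_X hs (n := i) (by omega)
    obtain ⟨hYC, y1, y2, y3⟩ := id hY
    set v := u * Y⁻¹ with hv
    have hvC : v ∈ PLcR := Subgroup.mul_mem _ hu1 (Subgroup.inv_mem _ hYC)
    have huv : u = v * Y := by rw [hv]; group
    have hval : ∀ z t, Y z = t → v t = u z := by
      rintro z t rfl
      exact (congrArg (fun w : ℝ ≃o ℝ => w z) huv).symm
    have hpos : IsPos Q s A (M + 1) c v := by
      refine ⟨hvC, by omega, by omega, fun x hx => ?_, fun x hx => ?_, fun j hj hjM => ?_⟩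
      · rw [hval x x (y1 x (by linarith)), h1 x hx]
      · push_cast at hx
        have e1 : s M = M + 1 := hs.2.1 _ (by linarith)
        have e2 : (M : ℝ) ≤ s⁻¹ x := by
          rw [← s.le_iff_le, RelIso.apply_inv_self, e1]; exact hx
        rw [hval (s⁻¹ x) x (by rw [y3 _ (by linarith), RelIso.apply_inv_self]), h2 _ e2,
          pow_succ, RelIso.mul_apply, RelIso.apply_inv_self]
      · have hmid : ∀ t : ℝ, i ≤ t → t ≤ i + 2 → v t = 2 ^ k * t + (2 ^ k * i + e : ℤ) := by
          intro t t1 t2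
          rw [hval ((t + i) / 2) t (by rw [y2 _ (by linarith) (by linarith)]; ring),
            hk _ (by linarith) (by linarith), pow_succ]
          push_cast
          ring
        rcases lt_or_ge j i with hji | hji
        · obtain ⟨k', e', hk'⟩ := h3 j hj (by omega)
          have : (j : ℝ) + 1 ≤ i := by exact_mod_cast hji
          refine ⟨k', e', fun t t1 t2 => ?_⟩
          rw [hval t t (y1 t (by linarith)), hk' t t1 t2]
        · have hji' : (i : ℝ) ≤ j := by exact_mod_cast hji
          rcases lt_or_ge j (i + 2) with hj2 | hj2
          · have : (j : ℝ) + 1 ≤ i + 2 := by exact_mod_cast hj2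
            exact ⟨k, _, fun t t1 t2 => hmid t (by linarith) (by linarith)⟩
          · have hj2' : (i : ℝ) + 2 ≤ j := by exact_mod_cast hj2
            have hjM' : (j : ℝ) ≤ M := by exact_mod_cast (by omega : j ≤ M)
            obtain ⟨k', e', hk'⟩ := h3 (j - 1) (by omega) (by omega)
            push_cast at hk'
            refine ⟨k', e' - 2 ^ k', fun t t1 t2 => ?_⟩
            rw [hval (t - 1) t (by
              rw [y3 _ (by linarith), hs.2.1 _ (by linarith)]; ring),
              hk' _ (by linarith) (by linarith)]
            push_cast
            ring
    rw [huv, phi_mul hvC hYC, ih _ _ hpos, phi_X hs hAi (by omega) hX hY, pow_succ]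

/-- Perfectness for elements which are linear on unit intervals. -/
theorem perf_unit {h : ℝ ≃o ℝ} (hh : h ∈ PLcR) (N : ℕ)
    (hlin : ∀ i : ℤ, ∃ k c : ℤ, |k| ≤ N ∧ ∀ t : ℝ, i ≤ t → t ≤ i + 1 → h t = 2 ^ k * t + c) :
    h ∈ ⁅PLcR, PLcR⁆ := by
  obtain ⟨p, q, hpq⟩ := hh
  set A : ℤ := ⌊p⌋ with hA
  obtain ⟨D, hD⟩ : ∃ D : ℕ, q ≤ A + D := by
    obtain ⟨D, hD⟩ := exists_nat_ge (q - A)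
    exact ⟨D, by linarith⟩
  have hA' : (A : ℝ) ≤ p := Int.floor_le p
  set B : ℤ := A + D with hB
  have hBr : (B : ℝ) = A + D := by rw [hB]; push_cast; ring
  have fixl : ∀ x : ℝ, x ≤ A → h x = x := fun x hx => PLc_fix hpq fun hm => by
    have := hm.1; linarith
  have fixr : ∀ x : ℝ, B ≤ x → h x = x := fun x hx => PLc_fix hpq fun hm => by
    have := hm.2; linarith
  obtain ⟨c, hc⟩ : ∃ c : ℕ, c + D = 2 ^ N * D :=
    ⟨2 ^ N * D - D, Nat.sub_add_cancel (Nat.le_mul_of_pos_left _ (by positivity))⟩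
  have hcr : (c : ℝ) + D = 2 ^ N * D := by exact_mod_cast hc
  set Q : ℤ := B + c + 3 with hQ
  have hQr : (Q : ℝ) = B + c + 3 := by rw [hQ]; push_cast; ring
  have hc0 : (0 : ℝ) ≤ c := c.cast_nonneg
  have hD0 : (0 : ℝ) ≤ D := D.cast_nonneg
  obtain ⟨s, hs⟩ := exists_shift Q
  obtain ⟨X, hX⟩ := exists_X hs (n := A) (by omega)
  obtain ⟨d0, m0, a1, a2⟩ := PL2.exists_glue (f := 1) (g := aff N (A - 2 ^ N * A)) (a := A)
    PL2.one_mem (aff_mem _ (by simpa using IsDyadic.of_int (A - 2 ^ N * A))) (.of_int A)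
    (by simp)
  obtain ⟨d, m, b1, b2⟩ := PL2.exists_glue (a := B) m0 (PL2.pow_mem hs.1 c) (.of_int B) (by
    rw [a2 _ (by linarith), shift_zpow hs _ _ (by linarith)]
    simp only [aff_apply, zpow_natCast, hBr]; linarith)
  have d1 : ∀ x : ℝ, x ≤ A → d x = x := fun x hx => by rw [b1 x (by linarith), a1 x hx]; rfl
  have d2 : ∀ x : ℝ, A ≤ x → x ≤ B → d x = 2 ^ N * x + (A - 2 ^ N * A) := fun x h1 h2 => by
    rw [b1 x h2, a2 x h1]; simp
  have hspow : ∀ n : ℕ, ∀ x : ℝ, Q ≤ x → (s ^ n) x = x := by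
    intro n x hx
    induction n with
    | zero => simp
    | succ n ih => rw [pow_succ, RelIso.mul_apply, hs.2.2 x hx, ih]
  have hdC : d ∈ PLcR := mem_PLcR_of m A Q d1 fun x hx => by
    rw [b2 x (by linarith), hspow c x hx]
  have hpC : h ∈ PLcR := ⟨p, q, hpq⟩
  have pos1 : IsPos Q s A B c d := by
    refine ⟨hdC, by omega, by omega, d1, b2, fun i hi hiB => ⟨N, A - 2 ^ N * A, fun t t1 t2 => ?_⟩⟩
    have e1 : (A : ℝ) ≤ i := by exact_mod_cast hi
    have e2 : (i : ℝ) + 1 ≤ B := by exact_mod_cast hiB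
    rw [d2 t (by linarith) (by linarith)]; push_cast; ring
  have pos2 : IsPos Q s A B c (d * h) := by
    refine ⟨Subgroup.mul_mem _ hdC hpC, by omega, by omega, fun x hx => ?_, fun x hx => ?_,
      fun i hi hiB => ?_⟩
    · rw [RelIso.mul_apply, fixl x hx, d1 x hx]
    · rw [RelIso.mul_apply, fixr x hx, b2 x hx]
    · obtain ⟨k, e, hk, hlin⟩ := hlin i
      have hk' := abs_le.mp hk
      have e1 : (A : ℝ) ≤ i := by exact_mod_cast hi
      have e2 : (i : ℝ) + 1 ≤ B := by exact_mod_cast hiB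
      refine ⟨(N + k).toNat, 2 ^ N * e + A - 2 ^ N * A, fun t t1 t2 => ?_⟩
      have g1 : (A : ℝ) ≤ h t := by
        rw [← fixl A le_rfl]; exact h.monotone (by linarith)
      have g2 : h t ≤ B := by
        rw [← fixr B le_rfl]; exact h.monotone (by linarith)
      rw [RelIso.mul_apply, d2 _ g1 g2, hlin t t1 t2, ← zpow_natCast (2 : ℝ) (N + k).toNat,
        Int.toNat_of_nonneg (by omega), zpow_add₀ two_ne_zero, zpow_natCast]
      push_cast
      ring
  have e1 := phi_pos hs hX c B d pos1
  have e2 := phi_pos hs hX c B _ pos2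
  rw [phi_mul hdC hpC, e1] at e2
  exact mem_commutator_of_phi hpC (by simpa using e2)

theorem commutator_conj {C C' : Subgroup (ℝ ≃o ℝ)} (D : ℝ ≃o ℝ) (hD : ∀ x ∈ C, D * x * D⁻¹ ∈ C')
    {x : ℝ ≃o ℝ} (hx : x ∈ ⁅C, C⁆) : D * x * D⁻¹ ∈ ⁅C', C'⁆ := by
  have h1 : C.map (MulAut.conj D).toMonoidHom ≤ C' := by
    rintro _ ⟨y, hy, rfl⟩
    exact hD y hy
  have h2 : D * x * D⁻¹ ∈ (⁅C, C⁆).map (MulAut.conj D).toMonoidHom := ⟨x, hx, rfl⟩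
  rw [Subgroup.map_commutator] at h2
  exact Subgroup.commutator_mono h1 h1 h2

theorem PLcR_conj {D x : ℝ ≃o ℝ} (hD : D ∈ PL2) (hx : x ∈ PLcR) : D * x * D⁻¹ ∈ PLcR := by
  obtain ⟨p, q, h⟩ := hx
  exact ⟨_, _, PLc_conj h hD le_rfl le_rfl⟩

theorem perf_R {h : ℝ ≃o ℝ} (hh : h ∈ PLcR) : h ∈ ⁅PLcR, PLcR⁆ := by
  obtain ⟨p, q, hpq⟩ := id hh
  obtain ⟨N, hN⟩ := hpq.1
  have hD : aff N 0 ∈ PL2 := aff_mem _ (by simpa using IsDyadic.of_int 0)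
  have key : aff N 0 * h * (aff N 0)⁻¹ ∈ ⁅PLcR, PLcR⁆ := by
    refine perf_unit (PLcR_conj hD hh) N fun i => ?_
    obtain ⟨k, c, hk, hl⟩ := hN i
    refine ⟨k, c, hk, fun t t1 t2 => ?_⟩
    have e : (aff N 0)⁻¹ t = t / 2 ^ N := zpow_apply_inv _ (by
      rw [aff_apply, zpow_natCast]; field_simp; ring)
    have e2 : (2 : ℝ) ^ N * (t / 2 ^ N) = t := by field_simp
    rw [RelIso.mul_apply, RelIso.mul_apply, e, hl _ (by rw [e2]; exact t1) (by rw [e2]; exact t2),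
      aff_apply, zpow_natCast]
    field_simp
    ring
  have := commutator_conj (C' := PLcR) (aff N 0)⁻¹ (fun x hx => PLcR_conj (PL2.inv_mem hD) hx) key
  simpa [mul_assoc] using this

theorem perf_bdd {h : ℝ ≃o ℝ} (hh : h ∈ PLcR) : ∃ p q, h ∈ ⁅PLc p q, PLc p q⁆ := by
  have h1 := perf_R hh
  rw [Subgroup.commutator_def] at h1
  have mono : ∀ p q p' q' : ℝ, p' ≤ p → q ≤ q' → ⁅PLc p q, PLc p q⁆ ≤ ⁅PLc p' q', PLc p' q'⁆ :=
    fun p q p' q' a b => Subgroup.commutator_mono (PLc_mono a b) (PLc_mono a b)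
  induction h1 using Subgroup.closure_induction with
  | mem x hx =>
    obtain ⟨f, ⟨p, q, hf⟩, g, ⟨p', q', hg⟩, rfl⟩ := hx
    exact ⟨min p p', max q q', Subgroup.commutator_mem_commutator
      (PLc_mono (min_le_left _ _) (le_max_left _ _) hf)
      (PLc_mono (min_le_right _ _) (le_max_right _ _) hg)⟩
  | one => exact ⟨0, 1, Subgroup.one_mem _⟩
  | mul x y hx hy ihx ihy =>
    have c := Subgroup.commutator_le_self PLcR
    obtain ⟨p, q, h1⟩ := ihx (c hx)
    obtain ⟨p', q', h2⟩ := ihy (c hy)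
    exact ⟨min p p', max q q', Subgroup.mul_mem _
      (mono _ _ _ _ (min_le_left _ _) (le_max_left _ _) h1)
      (mono _ _ _ _ (min_le_right _ _) (le_max_right _ _) h2)⟩
  | inv x hx ihx =>
    obtain ⟨p, q, h1⟩ := ihx (Subgroup.commutator_le_self PLcR hx)
    exact ⟨p, q, Subgroup.inv_mem _ h1⟩

/-- `PLc p q` is perfect. -/
theorem perf {p q : ℝ} {h : ℝ ≃o ℝ} (hh : h ∈ PLc p q) : h ∈ ⁅PLc p q, PLc p q⁆ := by
  by_cases hone : h = 1
  · rw [hone]; exact Subgroup.one_mem _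
  obtain ⟨P, Q, hPQ⟩ := perf_bdd ⟨p, q, hh⟩
  obtain ⟨hPL, α, β, a1, a2, a3⟩ := hh
  have hab : α ≤ β := by
    by_contra hcon
    exact hone (by ext x; by_contra hx; exact hcon ((a3 x hx).1.trans (a3 x hx).2))
  obtain ⟨x2, dx2, u1, u2⟩ := exists_dyadic_between a1
  obtain ⟨x1, dx1, u3, u4⟩ := exists_dyadic_between u1
  obtain ⟨y2, dy2, v1, v2⟩ := exists_dyadic_between a2
  obtain ⟨y1, dy1, v3, v4⟩ := exists_dyadic_between v2
  obtain ⟨P', dP, P1, P2⟩ := exists_dyadic_between (show min P x1 - 1 < min P x1 by linarith)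
  obtain ⟨Q', dQ, Q1, Q2⟩ := exists_dyadic_between (show max Q y1 < max Q y1 + 1 by linarith)
  rw [lt_min_iff] at P2
  rw [max_lt_iff] at Q1
  obtain ⟨θ1, m1, e1, e2⟩ := exists_iso dP dx2 dx1 dx2 (by linarith) u4
  obtain ⟨θ2, m2, e3, e4⟩ := exists_iso dy2 dQ dy2 dy1 (by linarith) v3
  obtain ⟨w, mw, w1, w2⟩ := PL2.exists_glue m1 PL2.one_mem dx2 (by rw [e2]; rfl)
  obtain ⟨θ, mθ, t1, t2⟩ := PL2.exists_glue mw m2 dy2 (by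
    rw [w2 _ (by linarith), e3]; rfl)
  have hmid : ∀ x, x2 ≤ x → x ≤ y2 → θ x = x := fun x h1 h2 => by
    rw [t1 x h2, w2 x h1]; rfl
  have hθP : θ P' = x1 := by rw [t1 _ (by linarith), w1 _ (by linarith), e1]
  have hθQ : θ Q' = y1 := by rw [t2 _ (by linarith), e4]
  have hconj : θ * h * θ⁻¹ = h := by
    have : θ * h = h * θ := by
      ext x
      rw [RelIso.mul_apply, RelIso.mul_apply]
      by_cases hx : h x = x
      · rw [hx]
        by_contra hne
        have b := a3 (θ x) (fun h => hne h.symm)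
        have hx' : x2 ≤ x ∧ x ≤ y2 := by
          constructor
          · rw [← θ.le_iff_le, hmid x2 le_rfl (by linarith)]; linarith [b.1]
          · rw [← θ.le_iff_le, hmid y2 (by linarith) le_rfl]; linarith [b.2]
        rw [hmid x hx'.1 hx'.2, hx] at hne
        exact hne rfl
      · have b := a3 x hx
        have b' := a3 (h x) (fun h' => hx (h.injective h'))
        rw [hmid x (by linarith [b.1]) (by linarith [b.2]),
          hmid _ (by linarith [b'.1]) (by linarith [b'.2])]
    rw [this]; group
  have := commutator_conj (C' := PLc p q) θ (fun x hx => PLc_conj hx mθ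
    (by have := θ.strictMono P2.1; linarith) (by have := θ.strictMono Q1.1; linarith)) hPQ
  rwa [hconj] at this


/-! ### Frames: isometries of the line preserving the integers -/

/-- Integral isometries of the line. -/
inductive Fr : Type
  | pos : ℤ → Fr
  | neg : ℤ → Fr
  deriving DecidableEq

namespace Fr

instance : One Fr := ⟨pos 0⟩

instance : Mul Fr := ⟨fun g k => match g, k with
  | pos c, pos d => pos (c + d)
  | pos c, neg d => neg (c + d)
  | neg c, pos d => neg (c - d)
  | neg c, neg d => pos (c - d)⟩

instance : Inv Fr := ⟨fun g => match g with
  | pos c => pos (-c)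
  | neg c => neg c⟩

@[simp] theorem pp (c d : ℤ) : pos c * pos d = pos (c + d) := rfl
@[simp] theorem pn (c d : ℤ) : pos c * neg d = neg (c + d) := rfl
@[simp] theorem np (c d : ℤ) : neg c * pos d = neg (c - d) := rfl
@[simp] theorem nn (c d : ℤ) : neg c * neg d = pos (c - d) := rfl
@[simp] theorem inv_pos (c : ℤ) : (pos c)⁻¹ = pos (-c) := rfl
@[simp] theorem inv_neg (c : ℤ) : (neg c)⁻¹ = neg c := rfl
theorem one_def : (1 : Fr) = pos 0 := rfl

instance : Group Fr where
  mul_assoc a b c := by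
    cases a <;> cases b <;> cases c <;> simp <;> ring
  one_mul a := by cases a <;> simp [one_def]
  mul_one a := by cases a <;> simp [one_def]
  inv_mul_cancel a := by cases a <;> simp [one_def]

instance : SMul Fr ℝ := ⟨fun g x => match g with
  | pos c => x + c
  | neg c => c - x⟩

instance : SMul Fr ℤ := ⟨fun g l => match g with
  | pos c => l + 2 * c
  | neg c => 2 * c - l⟩

@[simp] theorem pos_smul (c : ℤ) (x : ℝ) : pos c • x = x + c := rfl
@[simp] theorem neg_smul (c : ℤ) (x : ℝ) : neg c • x = c - x := rfl
@[simp] theorem pos_smulZ (c : ℤ) (x : ℤ) : pos c • x = x + 2 * c := rfl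
@[simp] theorem neg_smulZ (c : ℤ) (x : ℤ) : neg c • x = 2 * c - x := rfl

instance : MulAction Fr ℝ where
  one_smul x := by simp [one_def]
  mul_smul a b x := by cases a <;> cases b <;> simp <;> ring

instance : MulAction Fr ℤ where
  one_smul x := by simp [one_def]
  mul_smul a b x := by cases a <;> cases b <;> simp <;> ring

/-- Labels read in a frame. -/
def lab (r : ℤ → Bool) : Fr → ℤ → Bool
  | pos c, l => r (l + 2 * c)
  | neg c, l => !(r (2 * c - l))

/-- The sign of a frame, acting on signs. -/
def sgn : Fr → Bool → Bool
  | pos _, b => b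
  | neg _, b => !b

theorem lab_mul (r : ℤ → Bool) (g k : Fr) (l : ℤ) :
    lab r (g * k) l = sgn k (lab r g (k • l)) := by
  cases g <;> cases k <;> simp [lab, sgn] <;> ring_nf

theorem lab_eq (r : ℤ → Bool) (k : Fr) (l : ℤ) : lab r k l = sgn k (r (k • l)) := by
  cases k <;> simp [lab, sgn] <;> ring_nf

theorem lab_mul_of {r : ℤ → Bool} {g k : Fr} {l : ℤ} (h : lab r g (k • l) = r (k • l)) :
    lab r (g * k) l = lab r k l := by
  rw [lab_mul, lab_eq r k, h]

theorem abs_smul_sub (g : Fr) (x y : ℝ) : |g • x - g • y| = |x - y| := by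
  cases g with
  | pos c => simp
  | neg c => simp [abs_sub_comm]

theorem smul_two (g : Fr) (l : ℤ) : ((g • l : ℤ) : ℝ) = 2 * (g • ((l : ℝ) / 2)) := by
  cases g <;> simp <;> ring

/-- Conjugation of homeomorphisms by frames. -/
def conj (k : Fr) (h : ℝ ≃o ℝ) : ℝ ≃o ℝ where
  toFun x := k • h (k⁻¹ • x)
  invFun x := k • h.symm (k⁻¹ • x)
  left_inv x := by simp
  right_inv x := by simp
  map_rel_iff' := by
    intro x y
    cases k with
    | pos c => simp
    | neg c =>
      change (c : ℝ) - h (c - x) ≤ c - h (c - y) ↔ x ≤ y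
      rw [sub_le_sub_iff_left, h.le_iff_le, sub_le_sub_iff_left]

theorem conj_apply (k : Fr) (h : ℝ ≃o ℝ) (x : ℝ) : conj k h x = k • h (k⁻¹ • x) := rfl

theorem conj_smul (k : Fr) (h : ℝ ≃o ℝ) (x : ℝ) : conj k h (k • x) = k • h x := by
  simp [conj_apply]

theorem _root_.PLat.conj {N : ℕ} {h : ℝ ≃o ℝ} (hh : PLat N h) (g : Fr) : PLat N (conj g h) := by
  intro i
  have h2 : (0 : ℝ) < 2 ^ N := by positivity
  cases g with
  | pos d =>
    obtain ⟨k, c, hk, hc⟩ := hh (i - 2 ^ N * d)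
    obtain ⟨z, hz, -⟩ := two_zpow_int (k + N) (by rw [abs_le] at hk; omega)
    have hz' : (z : ℝ) = 2 ^ k * 2 ^ N := by
      rw [hz, zpow_add₀ (by norm_num)]; simp
    refine ⟨k, c + 2 ^ N * d - z * d, hk, fun t h1 h3 => ?_⟩
    have := hc (t - d) (by push_cast; linarith) (by push_cast; linarith)
    simp only [conj_apply, inv_pos, pos_smul]
    push_cast
    rw [← sub_eq_add_neg, this, hz']
    field_simp
    ring
  | neg d =>
    obtain ⟨k, c, hk, hc⟩ := hh (2 ^ N * d - i - 1)
    obtain ⟨z, hz, -⟩ := two_zpow_int (k + N) (by rw [abs_le] at hk; omega)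
    have hz' : (z : ℝ) = 2 ^ k * 2 ^ N := by
      rw [hz, zpow_add₀ (by norm_num)]; simp
    refine ⟨k, -c + 2 ^ N * d - z * d, hk, fun t h1 h3 => ?_⟩
    have := hc (d - t) (by push_cast; linarith) (by push_cast; linarith)
    simp only [conj_apply, inv_neg, neg_smul]
    push_cast
    rw [this, hz']
    field_simp
    ring

theorem conj_mem_PL2 {h : ℝ ≃o ℝ} (hh : h ∈ PL2) (g : Fr) : conj g h ∈ PL2 := by
  obtain ⟨N, hN⟩ := hh
  exact ⟨N, hN.conj g⟩

theorem conj_pos_mem {p q : ℝ} {h : ℝ ≃o ℝ} (hh : h ∈ PLc p q) (c : ℤ) :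
    conj (pos c) h ∈ PLc (p + c) (q + c) := by
  obtain ⟨h1, α, β, h2, h3, h4⟩ := mem_PLc.1 hh
  refine mem_PLc.2 ⟨conj_mem_PL2 h1 _, α + c, β + c, by linarith, by linarith, fun x hx => ?_⟩
  have : h (x - c) ≠ x - c := fun h => hx (by
    simp only [conj_apply, inv_pos, pos_smul]; push_cast
    rw [← sub_eq_add_neg, h]; ring)
  have := h4 _ this
  constructor <;> linarith

theorem conj_neg_mem {p q : ℝ} {h : ℝ ≃o ℝ} (hh : h ∈ PLc p q) (c : ℤ) :
    conj (neg c) h ∈ PLc (c - q) (c - p) := by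
  obtain ⟨h1, α, β, h2, h3, h4⟩ := mem_PLc.1 hh
  refine mem_PLc.2 ⟨conj_mem_PL2 h1 _, c - β, c - α, by linarith, by linarith, fun x hx => ?_⟩
  have : h (c - x) ≠ c - x := fun h => hx (by
    simp only [conj_apply, inv_neg, neg_smul]
    rw [h]; ring)
  have := h4 _ this
  constructor <;> linarith

/-- `k` maps the interval `(p', q')` onto `(p, q)`. -/
def Maps (k : Fr) (p' q' p q : ℝ) : Prop :=
  (∀ x, x ∈ Set.Ioo p' q' ↔ k • x ∈ Set.Ioo p q) ∧ ∀ h ∈ PLc p' q', conj k h ∈ PLc p q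

theorem maps_pos (c : ℤ) {p' q' p q : ℝ} (h1 : p = p' + c) (h2 : q = q' + c) :
    Maps (pos c) p' q' p q := by
  subst h1 h2
  exact ⟨fun x => by simp, fun h hh => conj_pos_mem hh c⟩

theorem maps_neg (c : ℤ) {p' q' p q : ℝ} (h1 : p = c - q') (h2 : q = c - p') :
    Maps (neg c) p' q' p q := by
  subst h1 h2
  exact ⟨fun x => by simp [and_comm], fun h hh => conj_neg_mem hh c⟩

end Fr

theorem PLc_maps {p q : ℝ} {h : ℝ ≃o ℝ} (hh : h ∈ PLc p q) {x : ℝ} (hx : x ∈ Set.Ioo p q) :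
    h x ∈ Set.Ioo p q := by
  have h1 : h p = p := PLc_fix hh (by simp)
  have h2 : h q = q := PLc_fix hh (by simp)
  have h3 := h.strictMono hx.1
  have h4 := h.strictMono hx.2
  exact ⟨by linarith, by linarith⟩

open Fr

/-- `g` acts as `h` in all frames from `S` on the interval `(p,q)`, trivially elsewhere. -/
def IsLam (S : Set Fr) (p q : ℝ) (h g : ℝ ≃o ℝ) : Prop :=
  (∀ γ ∈ S, ∀ x ∈ Set.Ioo p q, g (γ • x) = γ • h x) ∧
    ∀ y, (∀ γ ∈ S, ∀ x ∈ Set.Ioo p q, y ≠ γ • x) → g y = y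

theorem IsLam.mul {S : Set Fr} {p q : ℝ} {h g h' g' : ℝ ≃o ℝ} (hh' : h' ∈ PLc p q)
    (H : IsLam S p q h g) (H' : IsLam S p q h' g') : IsLam S p q (h * h') (g * g') := by
  refine ⟨fun γ hγ x hx => ?_, fun y hy => ?_⟩
  · rw [RelIso.mul_apply, RelIso.mul_apply, H'.1 γ hγ x hx, H.1 γ hγ _ (PLc_maps hh' hx)]
  · rw [RelIso.mul_apply, H'.2 y hy, H.2 y hy]

theorem IsLam.inv {S : Set Fr} {p q : ℝ} {h g : ℝ ≃o ℝ} (hh : h ∈ PLc p q)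
    (H : IsLam S p q h g) : IsLam S p q h⁻¹ g⁻¹ := by
  refine ⟨fun γ hγ x hx => zpow_apply_inv _ ?_, fun y hy => zpow_apply_inv _ (H.2 y hy)⟩
  rw [H.1 γ hγ _ (PLc_maps (Subgroup.inv_mem _ hh) hx), RelIso.apply_inv_self]

theorem IsLam.one {S : Set Fr} {p q : ℝ} : IsLam S p q 1 1 :=
  ⟨fun _ _ _ _ => rfl, fun _ _ => rfl⟩

/-- The subgroup of local homeomorphisms realised by elements of `G`. -/
def Lam (G : Subgroup (ℝ ≃o ℝ)) (S : Set Fr) (p q : ℝ) : Subgroup (ℝ ≃o ℝ) where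
  carrier := {h | h ∈ PLc p q ∧ ∃ g ∈ G, IsLam S p q h g}
  one_mem' := ⟨Subgroup.one_mem _, 1, Subgroup.one_mem _, IsLam.one⟩
  mul_mem' := by
    rintro a b ⟨ha, g, hg, h1⟩ ⟨hb, g', hg', h1'⟩
    exact ⟨Subgroup.mul_mem _ ha hb, g * g', Subgroup.mul_mem _ hg hg', h1.mul hb h1'⟩
  inv_mem' := by
    rintro a ⟨ha, g, hg, h1⟩
    exact ⟨Subgroup.inv_mem _ ha, g⁻¹, Subgroup.inv_mem _ hg, h1.inv ha⟩

/-- Every element of `PLc p q` is realised. -/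
def Good (G : Subgroup (ℝ ≃o ℝ)) (S : Set Fr) (p q : ℝ) : Prop :=
  ∀ h ∈ PLc p q, ∃ g ∈ G, IsLam S p q h g

/-- Distinct frames of `S` have disjoint images of `(p,q)`. -/
def DisjOn (S : Set Fr) (p q : ℝ) : Prop :=
  ∀ γ ∈ S, ∀ γ' ∈ S, ∀ x ∈ Set.Ioo p q, ∀ x' ∈ Set.Ioo p q, γ • x = γ' • x' → γ = γ'

theorem DisjOn.mono {S T : Set Fr} {p q p' q' : ℝ} (h : DisjOn T p q) (hST : S ⊆ T)
    (h1 : p ≤ p') (h2 : q' ≤ q) : DisjOn S p' q' :=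
  fun γ hγ γ' hγ' x hx x' hx' e => h γ (hST hγ) γ' (hST hγ') x ⟨by linarith [hx.1], by linarith [hx.2]⟩
    x' ⟨by linarith [hx'.1], by linarith [hx'.2]⟩ e

theorem IsLam.restrict {S : Set Fr} {p q p' q' : ℝ} {h g : ℝ ≃o ℝ} (hh : h ∈ PLc p' q')
    (h1 : p ≤ p') (h2 : q' ≤ q) (H : IsLam S p q h g) : IsLam S p' q' h g := by
  refine ⟨fun γ hγ x hx => H.1 γ hγ x ⟨by linarith [hx.1], by linarith [hx.2]⟩, fun y hy => ?_⟩
  by_cases hc : ∃ γ ∈ S, ∃ x ∈ Set.Ioo p q, y = γ • x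
  · obtain ⟨γ, hγ, x, hx, rfl⟩ := hc
    rw [H.1 γ hγ x hx, PLc_fix hh (fun hx' => hy γ hγ x hx' rfl)]
  · push Not at hc
    exact H.2 y hc

theorem IsLam.ext {S : Set Fr} {p q p' q' : ℝ} {h g : ℝ ≃o ℝ} (hh : h ∈ PLc p' q')
    (h1 : p ≤ p') (h2 : q' ≤ q) (hS : DisjOn S p q)
    (H : IsLam S p' q' h g) : IsLam S p q h g := by
  refine ⟨fun γ hγ x hx => ?_, fun y hy => H.2 y fun γ hγ x hx => hy γ hγ x
    ⟨by linarith [hx.1], by linarith [hx.2]⟩⟩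
  by_cases hx' : x ∈ Set.Ioo p' q'
  · exact H.1 γ hγ x hx'
  · rw [PLc_fix hh hx']
    refine H.2 _ fun γ' hγ' z hz e => hx' ?_
    have := hS γ hγ γ' hγ' x hx z ⟨by linarith [hz.1], by linarith [hz.2]⟩ e
    subst this
    rwa [smul_left_cancel _ e]

theorem Good.restrict {G : Subgroup (ℝ ≃o ℝ)} {S : Set Fr} {p q p' q' : ℝ} (H : Good G S p q)
    (h1 : p ≤ p') (h2 : q' ≤ q) : Good G S p' q' := by
  intro h hh
  obtain ⟨g, hg, hl⟩ := H h (PLc_mono h1 h2 hh)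
  exact ⟨g, hg, hl.restrict hh h1 h2⟩

/-- Right translate of a set of frames. -/
def rtr (S : Set Fr) (k : Fr) : Set Fr := {γ | γ * k⁻¹ ∈ S}

theorem rt_rt (S : Set Fr) (k k' : Fr) : rtr (rtr S k) k' = rtr S (k * k') := by
  ext γ; simp [rtr, mul_assoc]

theorem IsLam.rt {S : Set Fr} {k : Fr} {p q p' q' : ℝ} {h g : ℝ ≃o ℝ} (hk : Maps k p' q' p q)
    (H : IsLam S p q (conj k h) g) : IsLam (rtr S k) p' q' h g := by
  refine ⟨fun γ hγ x hx => ?_, fun y hy => H.2 y fun γ hγ x hx e => ?_⟩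
  · have := H.1 _ hγ (k • x) ((hk.1 x).1 hx)
    rw [conj_smul, ← mul_smul, ← mul_smul, inv_mul_cancel_right] at this
    exact this
  · refine hy (γ * k) ?_ (k⁻¹ • x) ((hk.1 _).2 (by simpa using hx)) ?_
    · simpa [rtr] using hγ
    · rw [mul_smul, smul_inv_smul, e]

theorem Good.rt {G : Subgroup (ℝ ≃o ℝ)} {S : Set Fr} {k : Fr} {p q p' q' : ℝ}
    (H : Good G S p q) (hk : Maps k p' q' p q) : Good G (rtr S k) p' q' := by
  intro h hh
  obtain ⟨g, hg, hl⟩ := H _ (hk.2 h hh)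
  exact ⟨g, hg, hl.rt hk⟩

/-- Spreading from a subinterval. -/
theorem Good.spread {G : Subgroup (ℝ ≃o ℝ)} {S X : Set Fr} {p q p' q' : ℝ} (hSX : S ⊆ X)
    (h1 : p ≤ p') (h2 : p' < q') (h3 : q' ≤ q) (hS : Good G S p' q') (hX : Good G X p q)
    (hd : DisjOn X p q) : Good G S p q := by
  intro h hh
  obtain ⟨t, ht, hk⟩ := exists_compress hh h1 h2 h3
  obtain ⟨u, hu, hul⟩ := hS _ hk
  obtain ⟨z, hz, hzl⟩ := hX t ht
  have hul' := hul.ext hk h1 h3 (hd.mono hSX le_rfl le_rfl)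
  have hk' : t * h * t⁻¹ ∈ PLc p q := PLc_mono h1 h3 hk
  refine ⟨z⁻¹ * u * z, Subgroup.mul_mem _ (Subgroup.mul_mem _ (Subgroup.inv_mem _ hz) hu) hz,
    fun γ hγ x hx => ?_, fun y hy => ?_⟩
  · have hx1 := PLc_maps ht hx
    rw [RelIso.mul_apply, RelIso.mul_apply, hzl.1 γ (hSX hγ) x hx, hul'.1 γ hγ _ hx1,
      (hzl.inv ht).1 γ (hSX hγ) _ (PLc_maps hk' hx1)]
    simp [RelIso.mul_apply]
  · rw [RelIso.mul_apply, RelIso.mul_apply]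
    apply zpow_apply_inv
    symm
    refine hul'.2 _ fun γ hγ x hx e => hy γ hγ (t⁻¹ x) (PLc_maps (Subgroup.inv_mem _ ht) hx) ?_
    rw [← (hzl.inv ht).1 γ (hSX hγ) x hx, ← e, RelIso.inv_apply_self]

theorem half_disj (S : Set Fr) : DisjOn S 0 (1 / 2) := by
  intro γ _ γ' _ x hx x' hx' e
  obtain ⟨a1, a2⟩ := hx
  obtain ⟨b1, b2⟩ := hx'
  cases γ with
  | pos c =>
    cases γ' with
    | pos d =>
      simp only [pos_smul] at e
      have h1 : c - d < 1 := by exact_mod_cast (by push_cast; linarith : ((c - d : ℤ) : ℝ) < 1)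
      have h2 : -1 < c - d := by exact_mod_cast (by push_cast; linarith : (-1 : ℝ) < ((c - d : ℤ) : ℝ))
      rw [show c = d by omega]
    | neg d =>
      simp only [pos_smul, neg_smul] at e
      have h1 : d - c < 1 := by exact_mod_cast (by push_cast; linarith : ((d - c : ℤ) : ℝ) < 1)
      have h2 : 0 < d - c := by exact_mod_cast (by push_cast; linarith : (0 : ℝ) < ((d - c : ℤ) : ℝ))
      omega
  | neg c =>
    cases γ' with
    | pos d =>
      simp only [pos_smul, neg_smul] at e
      have h1 : c - d < 1 := by exact_mod_cast (by push_cast; linarith : ((c - d : ℤ) : ℝ) < 1)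
      have h2 : 0 < c - d := by exact_mod_cast (by push_cast; linarith : (0 : ℝ) < ((c - d : ℤ) : ℝ))
      omega
    | neg d =>
      simp only [neg_smul] at e
      have h1 : c - d < 1 := by exact_mod_cast (by push_cast; linarith : ((c - d : ℤ) : ℝ) < 1)
      have h2 : -1 < c - d := by exact_mod_cast (by push_cast; linarith : (-1 : ℝ) < ((c - d : ℤ) : ℝ))
      rw [show c = d by omega]

theorem IsLam.fix {S : Set Fr} {h g : ℝ ≃o ℝ} (H : IsLam S 0 (1 / 2) h g) {γ : Fr} (hγ : γ ∉ S)
    {x : ℝ} (hx : x ∈ Set.Ioo (0 : ℝ) (1 / 2)) : g (γ • x) = γ • x :=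
  H.2 _ fun γ' hγ' x' hx' e => hγ (by
    rw [half_disj Set.univ γ trivial γ' trivial x hx x' hx' e]; exact hγ')

theorem Good.inter {G : Subgroup (ℝ ≃o ℝ)} {S T : Set Fr} (hS : Good G S 0 (1 / 2))
    (hT : Good G T 0 (1 / 2)) : Good G (S ∩ T) 0 (1 / 2) := by
  suffices h : ⁅PLc 0 (1 / 2), PLc 0 (1 / 2)⁆ ≤ Lam G (S ∩ T) 0 (1 / 2) from
    fun f hf => (h (perf hf)).2
  rw [Subgroup.commutator_le]
  intro h1 hh1 h2 hh2
  obtain ⟨g1, hg1, l1⟩ := hS h1 hh1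
  obtain ⟨g2, hg2, l2⟩ := hT h2 hh2
  have hi1 := Subgroup.inv_mem _ hh1
  have hi2 := Subgroup.inv_mem _ hh2
  have li1 := l1.inv hh1
  have li2 := l2.inv hh2
  rw [commutatorElement_def]
  refine ⟨?_, g1 * g2 * g1⁻¹ * g2⁻¹, ?_, ?_, ?_⟩
  · exact Subgroup.mul_mem _ (Subgroup.mul_mem _ (Subgroup.mul_mem _ hh1 hh2) hi1) hi2
  · exact Subgroup.mul_mem _ (Subgroup.mul_mem _ (Subgroup.mul_mem _ hg1 hg2)
      (Subgroup.inv_mem _ hg1)) (Subgroup.inv_mem _ hg2)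
  · rintro γ ⟨hγ1, hγ2⟩ x hx
    simp only [RelIso.mul_apply]
    have x1 := PLc_maps hi2 hx
    have x2 := PLc_maps hi1 x1
    have x3 := PLc_maps hh2 x2
    rw [li2.1 γ hγ2 x hx, li1.1 γ hγ1 _ x1, l2.1 γ hγ2 _ x2, l1.1 γ hγ1 _ x3]
  · intro y hy
    simp only [RelIso.mul_apply]
    by_cases hc : ∃ γ : Fr, ∃ x ∈ Set.Ioo (0 : ℝ) (1 / 2), y = γ • x
    · obtain ⟨γ, x, hx, rfl⟩ := hc
      by_cases hγ1 : γ ∈ S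
      · by_cases hγ2 : γ ∈ T
        · exact absurd rfl (hy γ ⟨hγ1, hγ2⟩ x hx)
        · rw [li2.fix hγ2 hx, li1.1 γ hγ1 x hx, l2.fix hγ2 (PLc_maps hi1 hx), ← li1.1 γ hγ1 x hx,
            RelIso.apply_inv_self]
      · by_cases hγ2 : γ ∈ T
        · rw [li2.1 γ hγ2 x hx, li1.fix hγ1 (PLc_maps hi2 hx), ← li2.1 γ hγ2 x hx,
            RelIso.apply_inv_self, l1.fix hγ1 hx]
        · rw [li2.fix hγ2 hx, li1.fix hγ1 hx, l2.fix hγ2 hx, l1.fix hγ1 hx]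
    · push Not at hc
      have f1 := l1.2 y fun γ _ x hx => hc γ x hx
      have f2 := l2.2 y fun γ _ x hx => hc γ x hx
      rw [zpow_apply_inv _ f2, zpow_apply_inv _ f1, f2, f1]

theorem Good.union {G : Subgroup (ℝ ≃o ℝ)} {S T : Set Fr} (hS : Good G S 0 (1 / 2))
    (hT : Good G T 0 (1 / 2)) (hST : ∀ γ ∈ S, γ ∉ T) : Good G (S ∪ T) 0 (1 / 2) := by
  intro h hh
  obtain ⟨g1, hg1, l1⟩ := hS h hh
  obtain ⟨g2, hg2, l2⟩ := hT h hh
  refine ⟨g1 * g2, Subgroup.mul_mem _ hg1 hg2, fun γ hγ x hx => ?_, fun y hy => ?_⟩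
  · rw [RelIso.mul_apply]
    by_cases h1 : γ ∈ S
    · rw [l2.fix (hST γ h1) hx, l1.1 γ h1 x hx]
    · rw [l2.1 γ (hγ.resolve_left h1) x hx, l1.fix h1 (PLc_maps hh hx)]
  · rw [RelIso.mul_apply, l2.2 y fun γ hγ => hy γ (Or.inr hγ), l1.2 y fun γ hγ => hy γ (Or.inl hγ)]


open Fr

/-- Frames reading a positive letter at `e`. -/
def FX (r : ℤ → Bool) (e : ℤ) : Set Fr := {γ | lab r γ e = true}

theorem FX_disj (r : ℤ → Bool) (e : ℤ) : DisjOn (FX r e) (((e : ℝ) - 1) / 2) (((e : ℝ) + 1) / 2) := by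
  intro γ hγ γ' hγ' x hx x' hx' he
  obtain ⟨a1, a2⟩ := hx
  obtain ⟨b1, b2⟩ := hx'
  cases γ with
  | pos c =>
    cases γ' with
    | pos d =>
      simp only [pos_smul] at he
      have h1 : c - d < 1 := by exact_mod_cast (by push_cast; linarith : ((c - d : ℤ) : ℝ) < 1)
      have h2 : -1 < c - d := by exact_mod_cast (by push_cast; linarith : (-1 : ℝ) < ((c - d : ℤ) : ℝ))
      rw [show c = d by omega]
    | neg d =>
      simp only [pos_smul, neg_smul] at he
      have h1 : d - c < e + 1 := by
        exact_mod_cast (by push_cast; linarith : ((d - c : ℤ) : ℝ) < e + 1)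
      have h2 : e - 1 < d - c := by
        exact_mod_cast (by push_cast; linarith : (e - 1 : ℝ) < ((d - c : ℤ) : ℝ))
      have h3 : 2 * d - e = e + 2 * c := by omega
      simp only [FX, Set.mem_setOf_eq, lab] at hγ hγ'
      rw [h3, hγ] at hγ'
      simp at hγ'
  | neg c =>
    cases γ' with
    | pos d =>
      simp only [pos_smul, neg_smul] at he
      have h1 : c - d < e + 1 := by
        exact_mod_cast (by push_cast; linarith : ((c - d : ℤ) : ℝ) < e + 1)
      have h2 : e - 1 < c - d := by
        exact_mod_cast (by push_cast; linarith : (e - 1 : ℝ) < ((c - d : ℤ) : ℝ))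
      have h3 : 2 * c - e = e + 2 * d := by omega
      simp only [FX, Set.mem_setOf_eq, lab] at hγ hγ'
      rw [h3, hγ'] at hγ
      simp at hγ
    | neg d =>
      simp only [neg_smul] at he
      have h1 : c - d < 1 := by exact_mod_cast (by push_cast; linarith : ((c - d : ℤ) : ℝ) < 1)
      have h2 : -1 < c - d := by exact_mod_cast (by push_cast; linarith : (-1 : ℝ) < ((c - d : ℤ) : ℝ))
      rw [show c = d by omega]

/-- The two basic families are realised in `G`. -/
def Basic (G : Subgroup (ℝ ≃o ℝ)) (r : ℤ → Bool) : Prop :=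
  ∀ e : ℤ, (e = 0 ∨ e = 1) → Good G (FX r e) (((e : ℝ) - 1) / 2) (((e : ℝ) + 1) / 2)

theorem castbd {e : ℤ} (he : e = 0 ∨ e = 1) : (0 : ℝ) ≤ e ∧ (e : ℝ) ≤ 1 := by
  rcases he with rfl | rfl <;> norm_num

theorem lab_refl (r : ℤ → Bool) (γ : Fr) (e : ℤ) : lab r (γ * neg e) e = !lab r γ e := by
  rw [lab_mul]; simp [sgn]; ring_nf

theorem Good.tau1 {G : Subgroup (ℝ ≃o ℝ)} {r : ℤ → Bool} (hG : Basic G r) {e : ℤ}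
    (he : e = 0 ∨ e = 1) {S : Set Fr} (hS : Good G S 0 (1 / 2)) (hSX : S ⊆ FX r e) :
    Good G (rtr S (neg e)) 0 (1 / 2) := by
  obtain ⟨e0, e1⟩ := castbd he
  have h1 : Good G S (((e : ℝ) - 1) / 2) (((e : ℝ) + 1) / 2) :=
    Good.spread hSX (by linarith) (by norm_num) (by linarith) hS (hG e he) (FX_disj r e)
  have h2 : Good G S (e - 1 / 2) e := h1.restrict (by linarith) (by linarith)
  exact h2.rt (maps_neg e rfl (by simp))

theorem Good.tau2 {G : Subgroup (ℝ ≃o ℝ)} {r : ℤ → Bool} (hG : Basic G r) {e : ℤ}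
    (he : e = 0 ∨ e = 1) {S : Set Fr} (hS : Good G S 0 (1 / 2)) (hSX : S ⊆ (FX r e)ᶜ) :
    Good G (rtr S (neg e)) 0 (1 / 2) := by
  obtain ⟨e0, e1⟩ := castbd he
  have h0 : rtr S (neg e) ⊆ FX r e := by
    intro γ hγ
    have := hSX hγ
    simp only [inv_neg, Set.mem_compl_iff, FX, Set.mem_setOf_eq, lab_refl] at this ⊢
    simpa using this
  have h1 : Good G (rtr S (neg e)) (e - 1 / 2) e := hS.rt (maps_neg e (by ring) (by ring))
  have h2 : Good G (rtr S (neg e)) (((e : ℝ) - 1) / 2) (((e : ℝ) + 1) / 2) :=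
    Good.spread h0 (by linarith) (by linarith) (by linarith) h1 (hG e he) (FX_disj r e)
  exact h2.restrict (by linarith) (by linarith)

theorem Good.baseX {G : Subgroup (ℝ ≃o ℝ)} {r : ℤ → Bool} (hG : Basic G r) {e : ℤ}
    (he : e = 0 ∨ e = 1) : Good G (FX r e) 0 (1 / 2) := by
  obtain ⟨e0, e1⟩ := castbd he
  exact (hG e he).restrict (by linarith) (by linarith)

theorem Good.baseXc {G : Subgroup (ℝ ≃o ℝ)} {r : ℤ → Bool} (hG : Basic G r) {e : ℤ}
    (he : e = 0 ∨ e = 1) : Good G (FX r e)ᶜ 0 (1 / 2) := by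
  have h := (Good.baseX hG he).tau1 hG he subset_rfl
  convert h using 1
  ext γ
  simp [rtr, FX, lab_refl]

theorem Good.tau {G : Subgroup (ℝ ≃o ℝ)} {r : ℤ → Bool} (hG : Basic G r) {e : ℤ}
    (he : e = 0 ∨ e = 1) {S : Set Fr} (hS : Good G S 0 (1 / 2)) :
    Good G (rtr S (neg e)) 0 (1 / 2) := by
  have h1 := (hS.inter (Good.baseX hG he)).tau1 hG he Set.inter_subset_right
  have h2 := (hS.inter (Good.baseXc hG he)).tau2 hG he Set.inter_subset_right
  have h3 := h1.union h2 (fun γ hγ hγ' => hγ'.2 hγ.2)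
  convert h3 using 1
  ext γ
  simp only [rtr, Set.mem_setOf_eq, Set.mem_union, Set.mem_inter_iff, Set.mem_compl_iff]
  tauto

theorem Good.trans {G : Subgroup (ℝ ≃o ℝ)} {r : ℤ → Bool} (hG : Basic G r)
    {S : Set Fr} (hS : Good G S 0 (1 / 2)) (c : ℤ) : Good G (rtr S (pos c)) 0 (1 / 2) := by
  induction c using Int.induction_on with
  | zero => convert hS using 1; ext γ; simp [rtr, ← one_def]
  | succ i ih =>
    have := (ih.tau hG (e := 1) (Or.inr rfl)).tau hG (e := 0) (Or.inl rfl)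
    rw [rt_rt, rt_rt] at this
    convert this using 2
    simp
  | pred i ih =>
    have := (ih.tau hG (e := 0) (Or.inl rfl)).tau hG (e := 1) (Or.inr rfl)
    rw [rt_rt, rt_rt] at this
    convert this using 2
    simp [sub_eq_add_neg]

theorem Good.rtAll {G : Subgroup (ℝ ≃o ℝ)} {r : ℤ → Bool} (hG : Basic G r)
    {S : Set Fr} (hS : Good G S 0 (1 / 2)) (k : Fr) : Good G (rtr S k) 0 (1 / 2) := by
  cases k with
  | pos c => exact hS.trans hG c
  | neg c =>
    have := (hS.trans hG c).tau hG (e := 0) (Or.inl rfl)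
    rw [rt_rt] at this
    simpa using this

theorem exists_parity (l : ℤ) : ∃ e c : ℤ, (e = 0 ∨ e = 1) ∧ l = e + 2 * c :=
  ⟨l % 2, l / 2, by omega, by omega⟩

theorem Good.cyl1 {G : Subgroup (ℝ ≃o ℝ)} {r : ℤ → Bool} (hG : Basic G r) (l : ℤ) (x : Bool) :
    Good G {γ | lab r γ l = x} 0 (1 / 2) := by
  obtain ⟨e, c, he, rfl⟩ := exists_parity l
  have key : ∀ γ : Fr, lab r (γ * (pos (-c))⁻¹) e = lab r γ (e + 2 * c) := by
    intro γ; rw [lab_mul]; simp [sgn]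
  cases x with
  | true =>
    convert (Good.baseX hG he).rtAll hG (pos (-c)) using 1
    ext γ
    simp only [rtr, FX, Set.mem_setOf_eq, key]
  | false =>
    convert (Good.baseXc hG he).rtAll hG (pos (-c)) using 1
    ext γ
    simp only [rtr, FX, Set.mem_setOf_eq, Set.mem_compl_iff, key, Bool.not_eq_true]

/-- Cylinder sets. -/
def Cyl (r : ℤ → Bool) (a b : ℤ) : Set Fr := {γ | ∀ l, a ≤ l → l ≤ b → lab r γ l = r l}

theorem Good.cyl {G : Subgroup (ℝ ≃o ℝ)} {r : ℤ → Bool} (hG : Basic G r) (a : ℤ) {b : ℤ}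
    (hab : a ≤ b) : Good G (Cyl r a b) 0 (1 / 2) := by
  induction b, hab using Int.leInduction with
  | base =>
    convert Good.cyl1 hG a (r a) using 1
    ext γ
    exact ⟨fun h => h a le_rfl le_rfl, fun h l h1 h2 => by rw [le_antisymm h2 h1]; exact h⟩
  | succ n hn ih =>
    convert ih.inter (Good.cyl1 hG (n + 1) (r (n + 1))) using 1
    ext γ
    refine ⟨fun h => ⟨fun l h1 h2 => h l h1 (by omega), h _ (by omega) le_rfl⟩, fun h l h1 h2 => ?_⟩
    rcases eq_or_lt_of_le h2 with rfl | h3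
    · exact h.2
    · exact h.1 l h1 (by omega)

/-- A set of frames which reads a constant letter at `j` is good on the cell around `j`. -/
theorem Good.cell {G : Subgroup (ℝ ≃o ℝ)} {r : ℤ → Bool} (hG : Basic G r) {S : Set Fr}
    (hS : Good G S 0 (1 / 2)) (j : ℤ) (x : Bool) (hj : ∀ γ ∈ S, lab r γ j = x) :
    Good G S (((j : ℝ) - 1) / 2) (((j : ℝ) + 1) / 2) := by
  have main : ∀ (e : ℤ) (k : Fr), (e = 0 ∨ e = 1) → (rtr S k⁻¹⁻¹ ⊆ FX r e) →
      Maps k⁻¹ (((j : ℝ) - 1) / 2) (((j : ℝ) + 1) / 2) (((e : ℝ) - 1) / 2) (((e : ℝ) + 1) / 2) →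
      Good G S (((j : ℝ) - 1) / 2) (((j : ℝ) + 1) / 2) := by
    intro e k he hk hm
    obtain ⟨e0, e1⟩ := castbd he
    have h1 : Good G (rtr S k⁻¹⁻¹) (((e : ℝ) - 1) / 2) (((e : ℝ) + 1) / 2) :=
      Good.spread hk (by linarith) (by norm_num) (by linarith) (hS.rtAll hG k⁻¹⁻¹) (hG e he)
        (FX_disj r e)
    have h2 := h1.rt hm
    rw [rt_rt] at h2
    convert h2 using 1
    ext γ
    simp [rtr]
  cases x with
  | true =>
    obtain ⟨e, c, he, rfl⟩ := exists_parity j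
    refine main e (pos c) he ?_ ?_
    · intro γ hγ
      have := hj _ hγ
      rw [lab_mul] at this
      simpa [sgn, FX] using this
    · simp only [inv_pos]
      exact maps_pos _ (by push_cast; ring) (by push_cast; ring)
  | false =>
    obtain ⟨e, c, he, hje⟩ := exists_parity j
    obtain rfl : j = 2 * (c + e) - e := by omega
    refine main e (neg (c + e)) he ?_ ?_
    · intro γ hγ
      have := hj _ hγ
      rw [lab_mul] at this
      simpa [sgn, FX] using this
    · simp only [inv_neg]
      exact maps_neg _ (by push_cast; ring) (by push_cast; ring)

/-- Local-to-global for intervals. -/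
theorem Good.long {G : Subgroup (ℝ ≃o ℝ)} {r : ℤ → Bool} (hG : Basic G r) {S : Set Fr}
    (hS : Good G S 0 (1 / 2)) {m m' : ℝ} (hmm : m < m') (hd : DisjOn S m m')
    (hj : ∀ j : ℤ, 2 * m < j + 1 → (j : ℝ) - 1 < 2 * m' → ∃ x, ∀ γ ∈ S, lab r γ j = x) :
    Good G S m m' := by
  have cell : ∀ j : ℤ, 2 * m < j + 1 → (j : ℝ) - 1 < 2 * m' →
      ∀ p q : ℝ, m ≤ p → q ≤ m' → ((j : ℝ) - 1) / 2 ≤ p → q ≤ ((j : ℝ) + 1) / 2 →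
      PLc p q ≤ Lam G S m m' := by
    intro j h1 h2 p q hp hq hp' hq' h hh
    obtain ⟨x, hx⟩ := hj j h1 h2
    obtain ⟨g, hg, hl⟩ := (hS.cell hG j x hx).restrict hp' hq' h hh
    exact ⟨PLc_mono hp hq hh, g, hg, hl.ext hh hp hq hd⟩
  set j0 : ℤ := ⌊2 * m⌋ + 1 with hj0
  have f1 : ((j0 : ℝ) - 1) ≤ 2 * m := by
    have := Int.floor_le (2 * m); rw [hj0]; push_cast; linarith
  have f2 : 2 * m < j0 := by
    have := Int.lt_floor_add_one (2 * m); rw [hj0]; push_cast; linarith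
  have claim : ∀ n : ℕ, PLc m (min m' (((j0 : ℝ) + n + 1) / 2)) ≤ Lam G S m m' := by
    intro n
    induction n with
    | zero =>
      refine cell j0 (by linarith) (by linarith) _ _ le_rfl (min_le_left _ _) (by linarith) ?_
      refine (min_le_right _ _).trans ?_
      simp
    | succ n ih =>
      intro h hh
      have hn : (0 : ℝ) ≤ n := Nat.cast_nonneg n
      push_cast at hh
      rcases le_or_gt m' (((j0 : ℝ) + n + 1) / 2) with hc | hc
      · apply ih
        rw [min_eq_left hc]
        exact PLc_mono le_rfl (min_le_left _ _) hh
      · obtain ⟨hP, α, β, ha, hb, hs⟩ := mem_PLc.1 hh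
        set Q := min m' (((j0 : ℝ) + (n + 1) + 1) / 2) with hQ
        have hQ1 : ((j0 : ℝ) + n + 1) / 2 < Q := lt_min hc (by linarith)
        obtain ⟨d, hd1, hd2, hd3⟩ := exists_dyadic_between
          (show max β (((j0 : ℝ) + n + 1) / 2) < Q from max_lt hb hQ1)
        obtain ⟨d', hd1', hd2', hd3'⟩ := exists_dyadic_between
          (show ((j0 : ℝ) + n) / 2 < ((j0 : ℝ) + n + 1) / 2 by linarith)
        have hdβ := (le_max_left _ _).trans_lt hd2
        have hdj := (le_max_right _ _).trans_lt hd2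
        obtain ⟨t, ht, htd⟩ := exists_move (p := ((j0 : ℝ) + n) / 2) (q := Q) hd1 hd1'
          (by linarith) hd3 hd2' (by linarith)
        have htL : t ∈ Lam G S m m' := by
          refine cell (j0 + n + 1) (by push_cast; linarith) (by push_cast; linarith)
            (((j0 : ℝ) + n) / 2) Q (by linarith) (min_le_left _ _) (by push_cast; linarith)
            ?_ ht
          refine (min_le_right _ _).trans ?_
          push_cast; linarith
        have hh' : h ∈ PLc m d := mem_PLc.2 ⟨hP, α, β, ha, hdβ, hs⟩
        have htm : t m = m := PLc_fix ht (by rintro ⟨h1, h2⟩; linarith)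
        have hconj : t * h * t⁻¹ ∈ PLc m (min m' (((j0 : ℝ) + n + 1) / 2)) :=
          PLc_conj hh' (mem_PLc.1 ht).1 htm.ge (by rw [htd]; exact le_min (by linarith) hd3'.le)
        have := Subgroup.mul_mem _ (Subgroup.mul_mem _ (Subgroup.inv_mem _ htL) (ih hconj)) htL
        have e : t⁻¹ * (t * h * t⁻¹) * t = h := by group
        rwa [e] at this
  intro h hh
  obtain ⟨n, hn⟩ := exists_nat_ge (2 * m' - j0)
  refine (claim n ?_).2
  rwa [min_eq_left (by linarith)]


/-! ### Identification of `F` and `F'` -/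

theorem PL2_dyadic {f : ℝ ≃o ℝ} (hf : f ∈ PL2) {x : ℝ} (hx : IsDyadic x) : IsDyadic (f x) := by
  obtain ⟨N, hN⟩ := hf
  obtain ⟨k, c, _, h⟩ := hN ⌊2 ^ N * x⌋
  rw [h x (Int.floor_le _) (Int.lt_floor_add_one _).le]
  exact (hx.zpow_mul k).add ⟨c, N, rfl⟩

theorem fix_zero_of {f : ℝ ≃o ℝ} (h : ∀ x < 0, f x = x) : f 0 = 0 := by
  apply le_antisymm
  · by_contra hc
    push Not at hc
    obtain ⟨z, hz⟩ := f.surjective (f 0 / 2)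
    have h1 : z < 0 := f.lt_iff_lt.1 (by rw [hz]; linarith)
    have := h z h1
    linarith
  · by_contra hc
    push Not at hc
    have h1 : f 0 / 2 < 0 := by linarith
    have := f.strictMono h1
    rw [h _ h1] at this
    linarith

theorem fix_one_of {f : ℝ ≃o ℝ} (h : ∀ x, 1 < x → f x = x) : f 1 = 1 := by
  have := fix_zero_of (f := Fr.conj (Fr.neg 1) f) (fun x hx => by
    simp only [Fr.conj_apply, Fr.inv_neg, Fr.neg_smul]
    rw [h _ (by push_cast; linarith)]; ring)
  simp only [Fr.conj_apply, Fr.inv_neg, Fr.neg_smul] at this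
  norm_num at this
  linarith

theorem thompson_PL2 {f : ℝ ≃o ℝ} (hf : InThompsonF f) : f ∈ PL2 := by
  obtain ⟨hout, m, x, x0, x1, hmono, hd, hp⟩ := hf
  have h0 : f 0 = 0 := fix_zero_of fun y hy => hout y fun h => by linarith [h.1]
  have h1 : f 1 = 1 := fix_one_of fun y hy => hout y fun h => by linarith [h.2]
  have key : ∀ i : Fin (m + 1), ∃ u ∈ PL2, ∀ t ≤ x i, u t = f t := by
    intro i
    induction i using Fin.induction with
    | zero =>
      refine ⟨1, PL2.one_mem, fun t ht => ?_⟩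
      rw [x0] at ht
      rcases eq_or_lt_of_le ht with rfl | ht
      · exact h0.symm
      · exact (hout t fun h => by linarith [h.1]).symm
    | succ i ih =>
      obtain ⟨u, hu, hut⟩ := ih
      obtain ⟨k, c, hkc⟩ := hp i
      have hle : x i.castSucc < x i.succ := hmono Fin.castSucc_lt_succ
      have e := hkc _ ⟨le_rfl, hle.le⟩
      have hc : IsDyadic c := by
        have : c = u (x i.castSucc) - 2 ^ k * x i.castSucc := by rw [hut _ le_rfl, e]; ring
        rw [this]
        exact (PL2_dyadic hu (hd _)).sub ((hd _).zpow_mul k)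
      obtain ⟨v, hv, v1, v2⟩ := PL2.exists_glue hu (aff_mem k hc) (hd i.castSucc)
        (by rw [hut _ le_rfl, e, aff_apply])
      refine ⟨v, hv, fun t ht => ?_⟩
      rcases le_total t (x i.castSucc) with h | h
      · rw [v1 t h, hut t h]
      · rw [v2 t h, aff_apply, hkc t ⟨h, ht⟩]
  obtain ⟨u, hu, hut⟩ := key (Fin.last m)
  rw [x1] at hut
  refine PL2_glue hu PL2.one_mem (a := 1) (by exact_mod_cast IsDyadic.of_int 1)
    (fun t ht => (hut t ht).symm) fun t ht => ?_
  rcases eq_or_lt_of_le ht with rfl | ht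
  · exact h1
  · exact hout t fun h => by linarith [h.2]

theorem thompson_of_PL2 {f : ℝ ≃o ℝ} (hf : f ∈ PL2) (h : ∀ x, x ∉ Set.Icc (0 : ℝ) 1 → f x = x) :
    InThompsonF f := by
  obtain ⟨N, hN⟩ := hf
  have h2 : (0 : ℝ) < 2 ^ N := by positivity
  refine ⟨h, 2 ^ N, fun i => (i : ℕ) / 2 ^ N, by simp, ?_, ?_, ?_, ?_⟩
  · simp only [Fin.val_last]; push_cast; field_simp
  · intro i j hij
    have : ((i : ℕ) : ℝ) < ((j : ℕ) : ℝ) := by exact_mod_cast hij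
    simp only
    gcongr
  · intro i
    exact ⟨(i : ℕ), N, by simp⟩
  · intro i
    obtain ⟨k, c, _, hk⟩ := hN (i : ℕ)
    refine ⟨k, c / 2 ^ N, fun t ht => hk t ?_ ?_⟩
    · have := ht.1
      simp only [Fin.val_castSucc] at this
      rw [div_le_iff₀ h2] at this
      push_cast; linarith
    · have := ht.2
      simp only [Fin.val_succ] at this
      rw [le_div_iff₀ h2] at this
      push_cast at this ⊢; linarith

theorem PLc_thompson {f : ℝ ≃o ℝ} (hf : f ∈ PLc 0 1) : InThompsonF f :=
  thompson_of_PL2 (mem_PLc.1 hf).1 fun _ hx => PLc_fix hf fun h => hx ⟨h.1.le, h.2.le⟩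

theorem germ_zero {f : ℝ ≃o ℝ} (hf : f ∈ PL2) (h0 : f 0 = 0) :
    ∃ k : ℤ, ∃ ε > 0, ∀ t, 0 ≤ t → t ≤ ε → f t = 2 ^ k * t := by
  obtain ⟨N, hN⟩ := hf
  obtain ⟨k, c, _, hk⟩ := hN 0
  have h2 : (0 : ℝ) < 2 ^ N := by positivity
  have hc := hk 0 (by simp) (by simp)
  rw [h0, mul_zero, zero_add] at hc
  refine ⟨k, 1 / 2 ^ N, by positivity, fun t h1 h3 => ?_⟩
  rw [hk t (by push_cast; positivity) ?_, ← hc, add_zero]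
  rw [le_div_iff₀ h2] at h3
  push_cast; linarith

theorem germ_comm {f g : ℝ ≃o ℝ} (hf : f ∈ PL2) (hg : g ∈ PL2) (f0 : f 0 = 0) (g0 : g 0 = 0) :
    ∃ δ > 0, ∀ t, 0 ≤ t → t ≤ δ → (f * g * f⁻¹ * g⁻¹) t = t := by
  obtain ⟨k, ε, hε, hk⟩ := germ_zero hf f0
  obtain ⟨l, ε', hε', hl⟩ := germ_zero hg g0
  have pos : ∀ u : ℝ ≃o ℝ, u 0 = 0 → ∀ x, 0 < x → 0 < u x := fun u hu x hx => by
    have := u.strictMono hx; rwa [hu] at this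
  have fi := zpow_apply_inv f f0
  have gi := zpow_apply_inv g g0
  set δ := min (min ε ε') (min (f⁻¹ ε') (g⁻¹ ε)) with hδ
  have dpos : 0 < δ := lt_min (lt_min hε hε') (lt_min (pos _ fi _ hε') (pos _ gi _ hε))
  have comm : ∀ s, 0 ≤ s → s ≤ δ → f (g s) = g (f s) := by
    intro s s0 s1
    have a1 : s ≤ ε := s1.trans ((min_le_left _ _).trans (min_le_left _ _))
    have a2 : s ≤ ε' := s1.trans ((min_le_left _ _).trans (min_le_right _ _))
    have a3 : s ≤ f⁻¹ ε' := s1.trans ((min_le_right _ _).trans (min_le_left _ _))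
    have a4 : s ≤ g⁻¹ ε := s1.trans ((min_le_right _ _).trans (min_le_right _ _))
    have b3 := f.monotone a3
    have b4 := g.monotone a4
    rw [RelIso.apply_inv_self] at b3 b4
    have c3 := f.monotone s0
    have c4 := g.monotone s0
    rw [f0] at c3
    rw [g0] at c4
    rw [hk _ c4 b4, hl _ c3 b3, hk s s0 a1, hl s s0 a2]
    ring
  refine ⟨g (f δ), pos g g0 _ (pos f f0 _ dpos), fun t t0 t1 => ?_⟩
  obtain ⟨s', hs'⟩ := g.surjective t
  obtain ⟨s, rfl⟩ := f.surjective s'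
  subst hs'
  have s0 : 0 ≤ s := by
    rw [← g0, g.le_iff_le] at t0
    rwa [← f0, f.le_iff_le] at t0
  have s1 : s ≤ δ := by rwa [g.le_iff_le, f.le_iff_le] at t1
  simp only [RelIso.mul_apply, RelIso.inv_apply_self]
  exact comm s s0 s1

theorem Fr.conj_mul (k : Fr) (f g : ℝ ≃o ℝ) : Fr.conj k (f * g) = Fr.conj k f * Fr.conj k g := by
  ext x; simp [Fr.conj_apply]

theorem Fr.conj_one (k : Fr) : Fr.conj k 1 = 1 := by
  ext x; simp [Fr.conj_apply]

theorem Fr.conj_inv (k : Fr) (f : ℝ ≃o ℝ) : Fr.conj k f⁻¹ = (Fr.conj k f)⁻¹ := by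
  rw [eq_inv_iff_mul_eq_one, ← Fr.conj_mul, inv_mul_cancel, Fr.conj_one]

theorem commF {F : Subgroup (ℝ ≃o ℝ)} (hF : ∀ f : ℝ ≃o ℝ, f ∈ F ↔ InThompsonF f) :
    (commutator ↥F).map F.subtype = PLc 0 1 := by
  rw [commutator_def, Subgroup.map_commutator, ← MonoidHom.range_eq_map, Subgroup.range_subtype]
  apply le_antisymm
  · rw [Subgroup.commutator_le]
    intro f hf g hg
    rw [commutatorElement_def]
    have fP := thompson_PL2 ((hF f).1 hf)
    have gP := thompson_PL2 ((hF g).1 hg)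
    have fout := ((hF f).1 hf).1
    have gout := ((hF g).1 hg).1
    have f0 : f 0 = 0 := fix_zero_of fun y hy => fout y fun h => by linarith [h.1]
    have f1 : f 1 = 1 := fix_one_of fun y hy => fout y fun h => by linarith [h.2]
    have g0 : g 0 = 0 := fix_zero_of fun y hy => gout y fun h => by linarith [h.1]
    have g1 : g 1 = 1 := fix_one_of fun y hy => gout y fun h => by linarith [h.2]
    obtain ⟨δ, hδ, h1⟩ := germ_comm fP gP f0 g0
    obtain ⟨δ', hδ', h2⟩ := germ_comm (Fr.conj_mem_PL2 fP (Fr.neg 1)) (Fr.conj_mem_PL2 gP (Fr.neg 1))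
      (by simp [Fr.conj_apply, f1]) (by simp [Fr.conj_apply, g1])
    rw [← Fr.conj_inv, ← Fr.conj_inv, ← Fr.conj_mul, ← Fr.conj_mul, ← Fr.conj_mul] at h2
    have hout : ∀ x, x ∉ Set.Icc (0 : ℝ) 1 → (f * g * f⁻¹ * g⁻¹) x = x := by
      intro x hx
      simp only [RelIso.mul_apply]
      rw [zpow_apply_inv g (gout x hx), zpow_apply_inv f (fout x hx), gout x hx, fout x hx]
    refine mem_PLc.2 ⟨PL2.mul_mem (PL2.mul_mem (PL2.mul_mem fP gP) (PL2.inv_mem fP))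
      (PL2.inv_mem gP), δ, 1 - δ', hδ, by linarith, fun x hx => ⟨?_, ?_⟩⟩
    · by_contra hc
      push Not at hc
      rcases lt_or_ge x 0 with h | h
      · exact hx (hout x fun h' => by linarith [h'.1])
      · exact hx (h1 x h hc.le)
    · by_contra hc
      push Not at hc
      rcases lt_or_ge 1 x with h | h
      · exact hx (hout x fun h' => by linarith [h'.2])
      · have := h2 (1 - x) (by linarith) (by linarith)
        apply hx
        simp only [Fr.conj_apply, Fr.inv_neg, Fr.neg_smul] at this
        push_cast at this
        rw [sub_sub_cancel] at this
        linarith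
  · intro h hh
    exact Subgroup.commutator_mono (fun u hu => (hF u).2 (PLc_thompson hu))
      (fun u hu => (hF u).2 (PLc_thompson hu)) (perf hh)

theorem PLc_equiv {m m' : ℝ} (hm : IsDyadic m) (hm' : IsDyadic m') (h : m < m') :
    Nonempty (PLc m m' ≃* PLc 0 1) := by
  obtain ⟨θ, hθ, h0, h1⟩ := exists_iso hm hm' (by exact_mod_cast IsDyadic.of_int 0)
    (by exact_mod_cast IsDyadic.of_int 1) h (one_pos (α := ℝ))
  refine ⟨{ toFun := fun f => ⟨θ * f * θ⁻¹, PLc_conj f.2 hθ h0.ge h1.le⟩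
            invFun := fun f => ⟨θ⁻¹ * f * θ⁻¹⁻¹, PLc_conj f.2 (PL2.inv_mem hθ)
              (zpow_apply_inv θ h0).ge (zpow_apply_inv θ h1).le⟩
            left_inv := fun f => by ext1; simp; group
            right_inv := fun f => by ext1; simp; group
            map_mul' := fun f g => by ext1; simp }⟩


open Fr

/-! ### The generators -/

/-- Sign of a letter. -/
def Letter.sg : Letter → Bool
  | .a => true
  | .b => true
  | .A => false
  | .B => false

/-- `z` acts as `ν` on the cells around the letters of parity `e`. -/
def IsGen (r : ℤ → Bool) (e : ℤ) (ν z : ℝ ≃o ℝ) : Prop :=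
  ∀ γ ∈ FX r e, ∀ x ∈ Set.Icc (0 : ℝ) 1,
    z (γ • (x + ((e : ℝ) - 1) / 2)) = γ • (ν x + ((e : ℝ) - 1) / 2)

theorem IsZeta.isGen {ρ : ℤ → Letter} (hρ : IsLabelling ρ) {ν ζ : ℝ ≃o ℝ} (h : IsZeta ρ ν ζ) :
    IsGen (fun l => (ρ l).sg) 1 ν ζ := by
  intro γ hγ x hx
  obtain ⟨x0, x1⟩ := hx
  cases γ with
  | pos c =>
    have h1 : ρ (2 * c + 1) = Letter.b := by
      have h2 : (ρ (1 + 2 * c)).sg = true := hγ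
      rw [add_comm] at h2
      rcases (hρ (2 * c + 1)).2 (by simp) with h3 | h3
      · exact h3
      · rw [h3] at h2; simp [Letter.sg] at h2
    have := (h c (x + c) ⟨by linarith, by linarith⟩).1 h1
    simp only [pos_smul]
    norm_num
    rw [this]; ring_nf
  | neg c =>
    have h1 : ρ (2 * (c - 1) + 1) = Letter.B := by
      have h2 : (!(ρ (2 * c - 1)).sg) = true := hγ
      rw [show 2 * c - 1 = 2 * (c - 1) + 1 by ring] at h2
      rcases (hρ (2 * (c - 1) + 1)).2 (by simp) with h3 | h3
      · rw [h3] at h2; simp [Letter.sg] at h2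
      · exact h3
    have := (h (c - 1) (c - x) ⟨by push_cast; linarith, by push_cast; linarith⟩).2 h1
    simp only [neg_smul]
    norm_num
    rw [this]; push_cast; ring_nf

theorem IsChi.isGen {ρ : ℤ → Letter} (hρ : IsLabelling ρ) {ν ζ : ℝ ≃o ℝ} (h : IsChi ρ ν ζ) :
    IsGen (fun l => (ρ l).sg) 0 ν ζ := by
  intro γ hγ x hx
  obtain ⟨x0, x1⟩ := hx
  cases γ with
  | pos c =>
    have h1 : ρ (2 * c) = Letter.a := by
      have h2 : (ρ (0 + 2 * c)).sg = true := hγ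
      rw [zero_add] at h2
      rcases (hρ (2 * c)).1 (by simp) with h3 | h3
      · exact h3
      · rw [h3] at h2; simp [Letter.sg] at h2
    have := (h c (x - 1 / 2 + c) ⟨by linarith, by linarith⟩).1 h1
    simp only [pos_smul]
    have e : x + (((0 : ℤ) : ℝ) - 1) / 2 + c = x - 1 / 2 + c := by push_cast; ring
    rw [e, this]
    have e' : x - 1 / 2 + c - (c - 1 / 2) = x := by ring
    rw [e']; push_cast; ring
  | neg c =>
    have h1 : ρ (2 * c) = Letter.A := by
      have h2 : (!(ρ (2 * c - 0)).sg) = true := hγ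
      rw [sub_zero] at h2
      rcases (hρ (2 * c)).1 (by simp) with h3 | h3
      · rw [h3] at h2; simp [Letter.sg] at h2
      · exact h3
    have := (h c (c + 1 / 2 - x) ⟨by linarith, by linarith⟩).2 h1
    simp only [neg_smul]
    have e : c - (x + (((0 : ℤ) : ℝ) - 1) / 2) = c + 1 / 2 - x := by push_cast; ring
    rw [e, this]
    have e' : c + 1 / 2 - (c + 1 / 2 - x) = x := by ring
    rw [e']; push_cast; ring

theorem thompson_maps {h : ℝ ≃o ℝ} (hh : InThompsonF h) {x : ℝ} (hx : x ∈ Set.Icc (0 : ℝ) 1) :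
    h x ∈ Set.Icc (0 : ℝ) 1 := by
  have f0 : h 0 = 0 := fix_zero_of fun y hy => hh.1 y fun h => by linarith [h.1]
  have f1 : h 1 = 1 := fix_one_of fun y hy => hh.1 y fun h => by linarith [h.2]
  have h1 := h.monotone hx.1
  have h2 := h.monotone hx.2
  exact ⟨by linarith, by linarith⟩

theorem isGen_closure {r : ℤ → Bool} {e : ℤ} {G H : Subgroup (ℝ ≃o ℝ)}
    (hH : ∀ h ∈ H, InThompsonF h) {s : Set (ℝ ≃o ℝ)} (hs : Subgroup.closure s = H)
    (hgen : ∀ ν ∈ s, ∃ z ∈ G, IsGen r e ν z) : ∀ h ∈ H, ∃ z ∈ G, IsGen r e h z := by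
  intro h hh
  rw [← hs] at hh
  induction hh using Subgroup.closure_induction with
  | mem x hx => exact hgen x hx
  | one => exact ⟨1, G.one_mem, fun γ _ x _ => rfl⟩
  | mul f g hf hg ihf ihg =>
    obtain ⟨z, hz, h1⟩ := ihf
    obtain ⟨w, hw, h2⟩ := ihg
    refine ⟨z * w, G.mul_mem hz hw, fun γ hγ x hx => ?_⟩
    rw [RelIso.mul_apply, h2 γ hγ x hx, h1 γ hγ _ (thompson_maps (hH g (hs ▸ hg)) hx)]
    rfl
  | inv f hf ihf =>
    obtain ⟨z, hz, h1⟩ := ihf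
    refine ⟨z⁻¹, G.inv_mem hz, fun γ hγ x hx => zpow_apply_inv _ ?_⟩
    rw [h1 γ hγ _ (thompson_maps (hH f⁻¹ (H.inv_mem (hs ▸ hf))) hx), RelIso.apply_inv_self]

theorem cover (r : ℤ → Bool) (e c : ℤ) : ∃ γ ∈ FX r e, ∀ y : ℝ, c + ((e : ℝ) - 1) / 2 ≤ y →
    y ≤ c + ((e : ℝ) - 1) / 2 + 1 → ∃ x ∈ Set.Icc (0 : ℝ) 1, y = γ • (x + ((e : ℝ) - 1) / 2) := by
  cases h : r (e + 2 * c) with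
  | true =>
    refine ⟨pos c, h, fun y h1 h2 => ⟨y - ((e : ℝ) - 1) / 2 - c, ⟨by linarith, by linarith⟩, ?_⟩⟩
    simp only [pos_smul]; ring
  | false =>
    refine ⟨neg (c + e), ?_, fun y h1 h2 => ⟨c + e - ((e : ℝ) - 1) / 2 - y,
      ⟨by linarith, by linarith⟩, ?_⟩⟩
    · simp only [FX, lab, Set.mem_setOf_eq]
      rw [show 2 * (c + e) - e = e + 2 * c by ring, h]; rfl
    · simp only [neg_smul]; push_cast; ring

theorem cover_pt (r : ℤ → Bool) (e : ℤ) (y : ℝ) : ∃ γ ∈ FX r e, ∃ x ∈ Set.Icc (0 : ℝ) 1,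
    y = γ • (x + ((e : ℝ) - 1) / 2) := by
  obtain ⟨γ, hγ, h⟩ := cover r e ⌊y - ((e : ℝ) - 1) / 2⌋
  have h1 := Int.floor_le (y - ((e : ℝ) - 1) / 2)
  have h2 := Int.lt_floor_add_one (y - ((e : ℝ) - 1) / 2)
  exact ⟨γ, hγ, h y (by linarith) (by linarith)⟩

theorem dyadic_half (e : ℤ) : IsDyadic (((e : ℝ) - 1) / 2) := ⟨e - 1, 1, by simp⟩

theorem PLc_InH {h : ℝ ≃o ℝ} (hh : h ∈ PLc 0 1) : InH h := by
  obtain ⟨_, α, β, h1, h2, h3⟩ := mem_PLc.1 hh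
  have hfix : ∀ t, t < α ∨ β < t → h t = t := fun t ht => by
    by_contra hc
    have := h3 t hc
    rcases ht with h | h <;> linarith [this.1, this.2]
  refine ⟨PLc_thompson hh, 0, min (α / 2) ((1 - β) / 2), lt_min (by linarith) (by linarith),
    fun t ht => ?_, fun t ht => ?_⟩
  · rw [hfix t (Or.inl (by linarith [ht.2, min_le_left (α / 2) ((1 - β) / 2)]))]; simp
  · rw [hfix t (Or.inr (by linarith [ht.1, min_le_right (α / 2) ((1 - β) / 2)]))]; simp

theorem good_of_gen {r : ℤ → Bool} {e : ℤ} {G : Subgroup (ℝ ≃o ℝ)}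
    (hgen : ∀ h ∈ PLc 0 1, ∃ z ∈ G, IsGen r e h z) :
    Good G (FX r e) (((e : ℝ) - 1) / 2) (((e : ℝ) + 1) / 2) := by
  intro h hh
  set p := ((e : ℝ) - 1) / 2 with hp
  have hq : ((e : ℝ) + 1) / 2 = p + 1 := by rw [hp]; ring
  rw [hq] at hh ⊢
  have hθ : aff 0 (-p) ∈ PL2 := aff_mem 0 (dyadic_half e).neg
  have hc : aff 0 (-p) * h * (aff 0 (-p))⁻¹ ∈ PLc 0 1 :=
    PLc_conj hh hθ (by simp) (by simp)
  obtain ⟨z, hz, hg⟩ := hgen _ hc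
  have hv : ∀ x, (aff 0 (-p) * h * (aff 0 (-p))⁻¹) x + p = h (x + p) := by
    intro x
    simp only [RelIso.mul_apply]
    rw [zpow_apply_inv (aff 0 (-p)) (x := x + p) (by simp)]
    simp
  refine ⟨z, hz, fun γ hγ x hx => ?_, fun y hy => ?_⟩
  · have := hg γ hγ (x - p) ⟨by linarith [hx.1], by linarith [hx.2]⟩
    rwa [← hp, hv, sub_add_cancel] at this
  · obtain ⟨γ, hγ, x, hx, rfl⟩ := cover_pt r e y
    rw [hg γ hγ x hx, ← hp, hv, PLc_fix hh]
    intro hx'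
    exact hy γ hγ _ hx' rfl

/-- Locality. -/
def Loc (r : ℤ → Bool) (f : ℝ ≃o ℝ) : Prop :=
  f ∈ PL2 ∧ ∃ R D : ℝ, 0 ≤ R ∧ 0 ≤ D ∧ (∀ x, |f x - x| ≤ D) ∧
    ∀ (γ : Fr) (x : ℝ), (∀ l : ℤ, |(l : ℝ) - 2 * x| ≤ R → lab r γ l = r l) → f (γ • x) = γ • f x

theorem Loc.mul {r : ℤ → Bool} {f g : ℝ ≃o ℝ} (hf : Loc r f) (hg : Loc r g) : Loc r (f * g) := by
  obtain ⟨f1, R, D, hR, hD, f2, f3⟩ := hf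
  obtain ⟨g1, R', D', hR', hD', g2, g3⟩ := hg
  refine ⟨PL2.mul_mem f1 g1, R + R' + 2 * D', D + D', by positivity, by positivity,
    fun x => ?_, fun γ x h => ?_⟩
  · have h1 := f2 (g x)
    have h2 := g2 x
    rw [RelIso.mul_apply]
    rw [abs_le] at *
    constructor <;> linarith [h1.1, h1.2, h2.1, h2.2]
  · rw [RelIso.mul_apply, RelIso.mul_apply, g3 γ x fun l hl => h l (by linarith), f3 γ (g x)]
    intro l hl
    apply h
    have h2 := g2 x
    rw [abs_le] at *
    constructor <;> linarith [hl.1, hl.2, h2.1, h2.2]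

theorem Loc.inv {r : ℤ → Bool} {f : ℝ ≃o ℝ} (hf : Loc r f) : Loc r f⁻¹ := by
  obtain ⟨f1, R, D, hR, hD, f2, f3⟩ := hf
  have key : ∀ x, |f⁻¹ x - x| ≤ D := fun x => by
    have := f2 (f⁻¹ x)
    rw [RelIso.apply_inv_self] at this
    rwa [abs_sub_comm]
  refine ⟨PL2.inv_mem f1, R + 2 * D, D, by positivity, hD, key, fun γ x h => ?_⟩
  apply zpow_apply_inv
  rw [f3 γ (f⁻¹ x), RelIso.apply_inv_self]
  intro l hl
  apply h
  have h2 := key x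
  rw [abs_le] at *
  constructor <;> linarith [hl.1, hl.2, h2.1, h2.2]

theorem IsGen.loc {r : ℤ → Bool} {e : ℤ} {ν z : ℝ ≃o ℝ} (hν : InThompsonF ν) (h : IsGen r e ν z) :
    Loc r z := by
  refine ⟨?_, 1, 1, by norm_num, by norm_num, fun y => ?_, fun γ y hy => ?_⟩
  · set p := ((e : ℝ) - 1) / 2 with hp
    have hθ : aff 0 p ∈ PL2 := aff_mem 0 (dyadic_half e)
    obtain ⟨M, hM⟩ := PL2.mul_mem (PL2.mul_mem hθ (thompson_PL2 hν)) (PL2.inv_mem hθ)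
    have hM := hM.succ
    have hv : ∀ x, (aff 0 p * ν * (aff 0 p)⁻¹) (x + p) = ν x + p := by
      intro x
      simp only [RelIso.mul_apply]
      rw [zpow_apply_inv (aff 0 p) (x := x) (by simp)]
      simp
    refine ⟨M + 1, fun i => ?_⟩
    have h2 : (0 : ℝ) < 2 ^ (M + 1) := by positivity
    obtain ⟨γ, hγ, hc⟩ := cover r e ⌊(i : ℝ) / 2 ^ (M + 1) - p⌋
    set c := ⌊(i : ℝ) / 2 ^ (M + 1) - p⌋
    have c1 := Int.floor_le ((i : ℝ) / 2 ^ (M + 1) - p)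
    have c2 := Int.lt_floor_add_one ((i : ℝ) / 2 ^ (M + 1) - p)
    have c1' : c + p ≤ (i : ℝ) / 2 ^ (M + 1) := by linarith
    have c2' : (i : ℝ) / 2 ^ (M + 1) < c + p + 1 := by linarith
    have c3 : (i : ℝ) + 1 ≤ 2 ^ (M + 1) * (c + p + 1) := by
      have e1 : (2 : ℝ) ^ (M + 1) * (c + p + 1) = ((2 ^ M * (2 * c + e + 1) : ℤ) : ℝ) := by
        rw [hp]; push_cast; ring
      rw [div_lt_iff₀ h2, mul_comm, e1] at c2'
      rw [e1]
      have := Int.add_one_le_of_lt (Int.cast_lt.1 c2')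
      exact_mod_cast this
    obtain ⟨k, d, hk, hkd⟩ := hM.conj γ i
    refine ⟨k, d, hk, fun t t1 t2 => ?_⟩
    rw [← hkd t t1 t2]
    obtain ⟨x, hx, rfl⟩ := hc t (c1'.trans (by rw [div_le_iff₀ h2]; linarith))
      (le_of_mul_le_mul_left (t2.trans c3) h2)
    rw [h γ hγ x hx, conj_smul, ← hp, hv]
  · obtain ⟨γ, hγ, x, hx, rfl⟩ := cover_pt r e y
    rw [h γ hγ x hx, abs_smul_sub]
    have := thompson_maps hν hx
    rw [abs_le]
    constructor <;> linarith [hx.1, hx.2, this.1, this.2]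
  · obtain ⟨κ, hκ, x, hx, rfl⟩ := cover_pt r e y
    have : γ * κ ∈ FX r e := by
      change lab r (γ * κ) e = true
      rw [lab_mul_of]
      · exact hκ
      · apply hy
        rw [smul_two, ← mul_sub, abs_mul, abs_smul_sub, abs_two]
        have : |(e : ℝ) / 2 - (x + ((e : ℝ) - 1) / 2)| ≤ 1 / 2 := by
          rw [abs_le]; constructor <;> linarith [hx.1, hx.2]
        linarith
    rw [← mul_smul, h _ this x hx, h κ hκ x hx, mul_smul]


open Fr

/-! ### Markers and gaps -/

/-- Marker points. -/
def Mar (r : ℤ → Bool) (W : ℕ) (x0 : ℝ) : Set ℝ := {y | ∃ σ ∈ Cyl r (-W) W, y = σ • x0}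

/-- The open interval of centre `u` and radius `ℓ ≤ L` is a gap between markers. -/
structure IsGap (r : ℤ → Bool) (W : ℕ) (x0 L u ℓ : ℝ) : Prop where
  pos : 0 < ℓ
  le : ℓ ≤ L
  bd : ∀ y, |y - u| = ℓ → y ∈ Mar r W x0
  int : ∀ y, |y - u| < ℓ → y ∉ Mar r W x0

/-- Frames reading the standard word near the gap. -/
def CylG (r : ℤ → Bool) (R u ℓ : ℝ) : Set Fr :=
  {γ | ∀ l : ℤ, |(l : ℝ) - 2 * u| ≤ 2 * ℓ + R → lab r γ l = r l}

theorem IsGap.unique {r : ℤ → Bool} {W : ℕ} {x0 L u ℓ u' ℓ' y : ℝ} (h : IsGap r W x0 L u ℓ)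
    (h' : IsGap r W x0 L u' ℓ') (hy : |y - u| < ℓ) (hy' : |y - u'| < ℓ') : u = u' ∧ ℓ = ℓ' := by
  have key : ∀ v k v' k' : ℝ, IsGap r W x0 L v k → IsGap r W x0 L v' k' → |y - v| < k →
      |y - v'| < k' → v' + k' ≤ v + k ∧ v - k ≤ v' - k' := by
    intro v k v' k' hv hv' a a'
    rw [abs_lt] at a a'
    constructor
    · by_contra hc
      push Not at hc
      refine hv'.int (v + k) ?_ (hv.bd _ ?_)
      · rw [abs_lt]; constructor <;> linarith [a.1, a.2, a'.1, a'.2]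
      · rw [add_sub_cancel_left, abs_of_pos hv.pos]
    · by_contra hc
      push Not at hc
      refine hv'.int (v - k) ?_ (hv.bd _ ?_)
      · rw [abs_lt]; constructor <;> linarith [a.1, a.2, a'.1, a'.2]
      · rw [sub_sub_cancel_left, abs_neg, abs_of_pos hv.pos]
  have h1 := key _ _ _ _ h h' hy hy'
  have h2 := key _ _ _ _ h' h hy' hy
  constructor <;> linarith [h1.1, h1.2, h2.1, h2.2]

theorem mark_iff {r : ℤ → Bool} {W : ℕ} {x0 R u ℓ : ℝ} (hR : W + 2 * |x0| ≤ R) {γ : Fr}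
    (hγ : γ ∈ CylG r R u ℓ) {y : ℝ} (hy : |y - u| ≤ ℓ) :
    y ∈ Mar r W x0 ↔ γ • y ∈ Mar r W x0 := by
  have key : ∀ κ : Fr, κ • x0 = y → ∀ l : ℤ, -(W : ℤ) ≤ l → l ≤ W →
      lab r (γ * κ) l = lab r κ l := by
    intro κ hκ l h1 h2
    apply lab_mul_of
    apply hγ
    have e1 : |((κ • l : ℤ) : ℝ) - 2 * y| ≤ W + 2 * |x0| := by
      rw [smul_two, ← hκ, ← mul_sub, abs_mul, abs_two, abs_smul_sub]
      have h1' : -(W : ℝ) ≤ l := by exact_mod_cast h1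
      have h2' : (l : ℝ) ≤ W := by exact_mod_cast h2
      have h3 : |(l : ℝ)| ≤ W := abs_le.2 ⟨h1', h2'⟩
      have h4 := abs_sub ((l : ℝ) / 2) x0
      rw [abs_div, abs_two] at h4
      linarith
    have e2 : ((κ • l : ℤ) : ℝ) - 2 * u = (((κ • l : ℤ) : ℝ) - 2 * y) + 2 * (y - u) := by ring
    rw [e2]
    refine (abs_add_le _ _).trans ?_
    rw [abs_mul, abs_two]
    linarith
  constructor
  · rintro ⟨κ, hκ, rfl⟩
    refine ⟨γ * κ, fun l h1 h2 => ?_, by rw [mul_smul]⟩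
    rw [key κ rfl l h1 h2]
    exact hκ l h1 h2
  · rintro ⟨σ, hσ, e⟩
    have e' : (γ⁻¹ * σ) • x0 = y := by rw [mul_smul, ← e, inv_smul_smul]
    refine ⟨γ⁻¹ * σ, fun l h1 h2 => ?_, e'.symm⟩
    rw [← key _ e' l h1 h2, mul_inv_cancel_left]
    exact hσ l h1 h2

theorem abs_smul_inv (γ : Fr) (y u : ℝ) : |γ⁻¹ • y - u| = |y - γ • u| := by
  rw [← abs_smul_sub γ, smul_inv_smul]

theorem IsGap.smul {r : ℤ → Bool} {W : ℕ} {x0 R L u ℓ : ℝ} (hR : W + 2 * |x0| ≤ R) {γ : Fr}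
    (hγ : γ ∈ CylG r R u ℓ) (h : IsGap r W x0 L u ℓ) : IsGap r W x0 L (γ • u) ℓ := by
  refine ⟨h.pos, h.le, fun y hy => ?_, fun y hy hM => ?_⟩
  · rw [← abs_smul_inv] at hy
    have := (mark_iff hR hγ hy.le).1 (h.bd _ hy)
    rwa [smul_inv_smul] at this
  · rw [← abs_smul_inv] at hy
    refine h.int _ hy ((mark_iff hR hγ hy.le).2 ?_)
    rwa [smul_inv_smul]

theorem CylG_inv {r : ℤ → Bool} {R u ℓ : ℝ} {γ : Fr} (hγ : γ ∈ CylG r R u ℓ) :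
    γ⁻¹ ∈ CylG r R (γ • u) ℓ := by
  intro l hl
  have h1 : lab r (γ * γ⁻¹) l = lab r γ⁻¹ l := by
    apply lab_mul_of
    apply hγ
    rw [smul_two, ← mul_sub, abs_mul, abs_smul_inv, ← abs_mul]
    rwa [show (2 : ℝ) * ((l : ℝ) / 2 - γ • u) = l - 2 * (γ • u) by ring]
  rw [← h1, mul_inv_cancel, one_def]
  simp [lab]

theorem CylG_mul {r : ℤ → Bool} {R u ℓ : ℝ} {γ κ : Fr} (hγ : γ ∈ CylG r R u ℓ)
    (hκ : κ ∈ CylG r R (γ • u) ℓ) : κ * γ ∈ CylG r R u ℓ := by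
  intro l hl
  rw [lab_mul_of]
  · exact hγ l hl
  · apply hκ
    rw [smul_two, ← mul_sub, abs_mul, abs_smul_sub, ← abs_mul]
    rwa [show (2 : ℝ) * ((l : ℝ) / 2 - u) = l - 2 * u by ring]

theorem one_mem_CylG (r : ℤ → Bool) (R u ℓ : ℝ) : 1 ∈ CylG r R u ℓ := by
  intro l _
  simp [one_def, lab]

theorem CylG_inj {r : ℤ → Bool} {R u ℓ : ℝ} (hR : 0 ≤ R) (hℓ : 0 < ℓ) {γ γ' : Fr}
    (hγ : γ ∈ CylG r R u ℓ) (hγ' : γ' ∈ CylG r R u ℓ) (e : γ • u = γ' • u) : γ = γ' := by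
  have key : ∀ c d : ℤ, pos c ∈ CylG r R u ℓ → neg d ∈ CylG r R u ℓ →
      (pos c) • u = (neg d) • u → False := by
    intro c d h1 h2 e
    simp only [pos_smul, neg_smul] at e
    have e2 : ((d - c : ℤ) : ℝ) - 2 * u = 0 := by push_cast; linarith
    have h1 := h1 (d - c) (by rw [e2, abs_zero]; positivity)
    have h2 := h2 (d - c) (by rw [e2, abs_zero]; positivity)
    simp only [lab] at h1 h2
    rw [show d - c + 2 * c = d + c by ring] at h1
    rw [show 2 * d - (d - c) = d + c by ring, h1] at h2
    simp at h2
  cases γ with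
  | pos c =>
    cases γ' with
    | pos d => simp at e; rw [e]
    | neg d => exact (key c d hγ hγ' e).elim
  | neg c =>
    cases γ' with
    | pos d => exact (key d c hγ' hγ e.symm).elim
    | neg d => simp at e; rw [e]

theorem mem_Ioo_abs {u ℓ x : ℝ} : x ∈ Set.Ioo (u - ℓ) (u + ℓ) ↔ |x - u| < ℓ := by
  rw [abs_lt]
  constructor
  · rintro ⟨h1, h2⟩; constructor <;> linarith
  · rintro ⟨h1, h2⟩; constructor <;> linarith

theorem gap_good {G : Subgroup (ℝ ≃o ℝ)} {r : ℤ → Bool} (hG : Basic G r) {W : ℕ}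
    {x0 R L u ℓ : ℝ} (hR : W + 2 * |x0| ≤ R) (hR1 : 1 ≤ R) (h : IsGap r W x0 L u ℓ) :
    Good G (CylG r R u ℓ) (u - ℓ) (u + ℓ) := by
  have hpos := h.pos
  have e : CylG r R u ℓ = Cyl r ⌈2 * u - (2 * ℓ + R)⌉ ⌊2 * u + (2 * ℓ + R)⌋ := by
    ext γ
    simp only [CylG, Cyl, Set.mem_setOf_eq]
    refine forall_congr' fun l => ?_
    rw [Int.ceil_le, Int.le_floor, abs_le, ← and_imp]
    constructor
    · rintro h ⟨h1, h2⟩; exact h ⟨by linarith, by linarith⟩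
    · rintro h ⟨h1, h2⟩; exact h ⟨by linarith, by linarith⟩
  have hS : Good G (CylG r R u ℓ) 0 (1 / 2) := by
    rw [e]
    apply Good.cyl hG
    refine (Int.ceil_le.2 ?_ : _ ≤ ⌊2 * u⌋).trans (Int.le_floor.2 ?_)
    · linarith [Int.lt_floor_add_one (2 * u)]
    · linarith [Int.floor_le (2 * u)]
  refine Good.long hG hS (by linarith) ?_ ?_
  · intro γ hγ γ' hγ' x hx x' hx' ex
    rw [mem_Ioo_abs] at hx hx'
    rw [← abs_smul_sub γ] at hx
    rw [← abs_smul_sub γ', ← ex] at hx'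
    exact CylG_inj (by linarith) hpos hγ hγ' ((h.smul hR hγ).unique (h.smul hR hγ') hx hx').1
  · intro j h1 h2
    refine ⟨r j, fun γ hγ => hγ j ?_⟩
    rw [abs_le]
    constructor <;> linarith

/-- The lattice containing the markers. -/
def MLat (x0 : ℝ) : Set ℝ := {y | ∃ c : ℤ, y = x0 + c ∨ y = c - x0}

theorem Mar_sub_Lat {r : ℤ → Bool} {W : ℕ} {x0 y : ℝ} (h : y ∈ Mar r W x0) : y ∈ MLat x0 := by
  obtain ⟨σ, -, rfl⟩ := h
  cases σ with
  | pos c => exact ⟨c, Or.inl rfl⟩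
  | neg c => exact ⟨c, Or.inr rfl⟩

theorem Lat_finite (x0 a b : ℝ) : (MLat x0 ∩ Set.Icc a b).Finite := by
  refine (((Set.finite_Icc ⌈a - x0⌉ ⌊b - x0⌋).image (fun c : ℤ => x0 + (c : ℝ))).union
    ((Set.finite_Icc ⌈a + x0⌉ ⌊b + x0⌋).image (fun c : ℤ => (c : ℝ) - x0))).subset ?_
  rintro y ⟨⟨c, rfl | rfl⟩, h1, h2⟩
  · left
    exact ⟨c, ⟨Int.ceil_le.2 (by linarith), Int.le_floor.2 (by linarith)⟩, rfl⟩
  · right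
    exact ⟨c, ⟨Int.ceil_le.2 (by linarith), Int.le_floor.2 (by linarith)⟩, rfl⟩

theorem exists_gap {r : ℤ → Bool} {W B : ℕ} {x0 : ℝ}
    (hB : ∀ k : ℤ, ∃ c, k ≤ c ∧ c ≤ k + B ∧ pos c ∈ Cyl r (-W) W) {y : ℝ}
    (hy : y ∉ Mar r W x0) : ∃ u ℓ, IsGap r W x0 (B + 1) u ℓ ∧ |y - u| < ℓ := by
  have hfin : ∀ a b, (Mar r W x0 ∩ Set.Icc a b).Finite := fun a b =>
    (Lat_finite x0 a b).subset fun z hz => ⟨Mar_sub_Lat hz.1, hz.2⟩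
  have ne1 : (Mar r W x0 ∩ Set.Icc (y - (B + 1)) y).Nonempty := by
    obtain ⟨c, h1, h2, h3⟩ := hB (⌊y - x0⌋ - B)
    have h1' : (⌊y - x0⌋ : ℝ) - B ≤ c := by exact_mod_cast h1
    have h2' : (c : ℝ) ≤ ⌊y - x0⌋ := by
      have : c ≤ ⌊y - x0⌋ := by linarith
      exact_mod_cast this
    have f1 := Int.floor_le (y - x0)
    have f2 := Int.lt_floor_add_one (y - x0)
    exact ⟨x0 + c, ⟨pos c, h3, rfl⟩, by linarith, by linarith⟩
  have ne2 : (Mar r W x0 ∩ Set.Icc y (y + (B + 1))).Nonempty := by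
    obtain ⟨c, h1, h2, h3⟩ := hB ⌈y - x0⌉
    have h1' : (⌈y - x0⌉ : ℝ) ≤ c := by exact_mod_cast h1
    have h2' : (c : ℝ) ≤ ⌈y - x0⌉ + B := by exact_mod_cast h2
    have f1 := Int.le_ceil (y - x0)
    have f2 := Int.ceil_lt_add_one (y - x0)
    exact ⟨x0 + c, ⟨pos c, h3, rfl⟩, by linarith, by linarith⟩
  obtain ⟨m, ⟨hm, hm1, hm2⟩, hmax⟩ := Set.exists_max_image _ id (hfin _ _) ne1
  obtain ⟨m', ⟨hm', hm1', hm2'⟩, hmin⟩ := Set.exists_min_image _ id (hfin _ _) ne2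
  simp only [id] at hmax hmin
  have l1 : m < y := lt_of_le_of_ne hm2 (fun h => hy (h ▸ hm))
  have l2 : y < m' := lt_of_le_of_ne hm1' (fun h => hy (h ▸ hm'))
  refine ⟨(m + m') / 2, (m' - m) / 2, ⟨by linarith, by linarith, fun z hz => ?_, fun z hz hM => ?_⟩, ?_⟩
  · rcases (abs_eq (by linarith)).1 hz with h | h
    · rwa [show z = m' by linarith]
    · rwa [show z = m by linarith]
  · rw [abs_lt] at hz
    rcases le_total z y with h | h
    · have := hmax z ⟨hM, by linarith, h⟩
      linarith [hz.1]
    · have := hmin z ⟨hM, h, by linarith⟩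
      linarith [hz.2]
  · rw [abs_lt]; constructor <;> linarith

/-- The type of gaps. -/
def Gap (r : ℤ → Bool) (W : ℕ) (x0 L : ℝ) : Type := {K : ℝ × ℝ // IsGap r W x0 L K.1 K.2}

/-- Equivalence of gaps. -/
def gapSetoid (r : ℤ → Bool) (W : ℕ) (x0 R L : ℝ) : Setoid (Gap r W x0 L) where
  r K K' := K.1.2 = K'.1.2 ∧ ∃ γ ∈ CylG r R K.1.1 K.1.2, γ • K.1.1 = K'.1.1
  iseqv := by
    refine ⟨fun K => ⟨rfl, 1, one_mem_CylG _ _ _ _, one_smul _ _⟩, ?_, ?_⟩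
    · rintro K K' ⟨e, γ, hγ, h⟩
      refine ⟨e.symm, γ⁻¹, ?_, by rw [← h, inv_smul_smul]⟩
      rw [← h, ← e]
      exact CylG_inv hγ
    · rintro K K' K'' ⟨e, γ, hγ, h⟩ ⟨e', γ', hγ', h'⟩
      refine ⟨e.trans e', γ' * γ, CylG_mul hγ ?_, by rw [mul_smul, h, h']⟩
      rwa [h, e]

theorem gap_finite (r : ℤ → Bool) (W : ℕ) (x0 R : ℝ) (L : ℕ) :
    Finite (Quotient (gapSetoid r W x0 R L)) := by
  obtain ⟨B, hB⟩ := exists_nat_ge (4 * (L : ℝ) + R + 2)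
  let P : Set ℝ := MLat x0 ∩ Set.Icc (0 : ℝ) (2 * L + 1)
  have hP : Finite P := (Lat_finite x0 _ _).to_subtype
  have hmem : ∀ K : Gap r W x0 L, ∀ y, |y - K.1.1| = K.1.2 →
      y - ⌊K.1.1 - K.1.2⌋ ∈ P := by
    intro K y hy
    have hl := K.2.le
    have h0 := K.2.pos
    have hL := Mar_sub_Lat (K.2.bd y hy)
    have f1 := Int.floor_le (K.1.1 - K.1.2)
    have f2 := Int.lt_floor_add_one (K.1.1 - K.1.2)
    refine ⟨?_, ?_, ?_⟩
    · obtain ⟨c, h | h⟩ := hL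
      · exact ⟨c - ⌊K.1.1 - K.1.2⌋, Or.inl (by rw [h]; push_cast; ring)⟩
      · exact ⟨c - ⌊K.1.1 - K.1.2⌋, Or.inr (by rw [h]; push_cast; ring)⟩
    · have := (abs_le.1 hy.le).1; linarith
    · have := (abs_le.1 hy.le).2; linarith
  let col : Gap r W x0 L → P × P × (Set.Icc (-(B : ℤ)) B → Bool) := fun K =>
    (⟨_, hmem K (K.1.1 - K.1.2) (by rw [sub_sub_cancel_left, abs_neg, abs_of_pos K.2.pos])⟩,
     ⟨_, hmem K (K.1.1 + K.1.2) (by rw [add_sub_cancel_left, abs_of_pos K.2.pos])⟩,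
     fun l => r (l + 2 * ⌊K.1.1 - K.1.2⌋))
  have hcol : ∀ K K', col K = col K' → (gapSetoid r W x0 R L).r K K' := by
    intro K K' h
    simp only [col, Prod.mk.injEq, Subtype.mk.injEq] at h
    obtain ⟨h1, h2, h3⟩ := h
    have hl := K.2.le
    have h0 := K.2.pos
    have f1 := Int.floor_le (K.1.1 - K.1.2)
    have f2 := Int.lt_floor_add_one (K.1.1 - K.1.2)
    refine ⟨by linarith, pos (⌊K'.1.1 - K'.1.2⌋ - ⌊K.1.1 - K.1.2⌋), fun l hl' => ?_, ?_⟩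
    · rw [abs_le] at hl'
      have := congrFun h3 ⟨l - 2 * ⌊K.1.1 - K.1.2⌋, by
        have a1 : -(B : ℝ) ≤ ((l - 2 * ⌊K.1.1 - K.1.2⌋ : ℤ) : ℝ) := by
          push_cast; linarith [hl'.1]
        have a2 : ((l - 2 * ⌊K.1.1 - K.1.2⌋ : ℤ) : ℝ) ≤ B := by
          push_cast; linarith [hl'.2]
        exact ⟨by exact_mod_cast a1, by exact_mod_cast a2⟩⟩
      simp only [sub_add_cancel] at this
      rw [this]
      simp only [lab]
      congr 1
      ring
    · simp only [pos_smul]; push_cast; linarith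
  refine Finite.of_injective (fun q => col q.out) fun q q' h => ?_
  rw [← Quotient.out_eq q, ← Quotient.out_eq q']
  exact Quotient.sound (hcol _ _ h)


open Fr

/-! ### Recurrence of the marker word -/

theorem blockWord_get (ρ : ℤ → Letter) (k : ℤ) (n i : ℕ) (h : i ≤ n) :
    (blockWord ρ k n)[i]? = some (ρ (k + i)) := by
  have e : (List.flatMap (fun a : ℕ => [(a : ℤ)]) (List.range (n + 1))) =
      (List.range (n + 1)).map (fun a : ℕ => (a : ℤ)) := List.flatMap_pure_eq_map _ _
  have e2 : blockWord ρ k n = (List.range (n + 1)).map (fun a : ℕ => ρ (k + a)) := by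
    have : blockWord ρ k n = (List.flatMap (fun a : ℕ => [(a : ℤ)]) (List.range (n + 1))).map
      (fun i => ρ (k + i)) := rfl
    rw [this, e, List.map_map]
    rfl
  rw [e2]
  simp [Nat.lt_succ_of_le h]

theorem blockWord_length (ρ : ℤ → Letter) (k : ℤ) (n : ℕ) : (blockWord ρ k n).length = n + 1 := by
  simp [blockWord]

theorem recur {ρ : ℤ → Letter} (hρ : IsQuasiPeriodic ρ) (W : ℕ) :
    ∃ B : ℕ, ∀ k : ℤ, ∃ c, k ≤ c ∧ c ≤ k + B ∧ pos c ∈ Cyl (fun l => (ρ l).sg) (-W) W := by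
  obtain ⟨hl, h1, -⟩ := hρ
  obtain ⟨N, hN⟩ := h1 (-W) (2 * W)
  refine ⟨N, fun k => ?_⟩
  obtain ⟨s, t, h⟩ := hN (2 * k) N (by omega)
  have hlen := congrArg List.length h
  simp only [List.length_append, blockWord_length] at hlen
  have key : ∀ i : ℕ, i ≤ 2 * W → ρ (-W + i) = ρ (2 * k + s.length + i) := by
    intro i hi
    have h2 := blockWord_get ρ (2 * k) N (s.length + i) (by omega)
    rw [← h, List.append_assoc, List.getElem?_append_right (by omega), Nat.add_sub_cancel_left,
      List.getElem?_append_left (by rw [blockWord_length]; omega), blockWord_get _ _ _ _ hi] at h2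
    have h3 := Option.some.inj h2
    rw [h3]
    congr 1
    push_cast
    ring
  have h0 := key W (by omega)
  rw [neg_add_cancel] at h0
  have hev : Even (2 * k + (s.length : ℤ) + W) := by
    by_contra hc
    rw [Int.not_even_iff_odd] at hc
    have e1 := (hl 0).1 (by simp)
    have e2 := (hl _).2 hc
    rw [← h0] at e2
    rcases e1 with e1 | e1 <;> rcases e2 with e2 | e2 <;> rw [e1] at e2 <;> cases e2
  obtain ⟨c, hc⟩ := hev
  refine ⟨c, by omega, by omega, fun l l1 l2 => ?_⟩
  have := key (l + W).toNat (by omega)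
  simp only [lab]
  rw [Int.toNat_of_nonneg (by omega)] at this
  rw [show -(W : ℤ) + (l + W) = l by ring,
    show 2 * k + (s.length : ℤ) + (l + W) = l + 2 * c by linarith] at this
  rw [this]

theorem Loc.one (r : ℤ → Bool) : Loc r 1 :=
  ⟨PL2.one_mem, 0, 0, le_rfl, le_rfl, fun x => by simp, fun _ _ _ => rfl⟩

theorem loc_closure {r : ℤ → Bool} {s : Set (ℝ ≃o ℝ)} (hs : ∀ z ∈ s, Loc r z) {f : ℝ ≃o ℝ}
    (hf : f ∈ Subgroup.closure s) : Loc r f := by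
  induction hf using Subgroup.closure_induction with
  | mem x hx => exact hs x hx
  | one => exact Loc.one r
  | mul x y _ _ hx hy => exact hx.mul hy
  | inv x _ hx => exact hx.inv

/-! ### Simultaneous laminar actions -/

section multi

variable {ι : Type} [Finite ι] (p q : ι → ℝ) (S : ι → Set Fr) (M : Set ℝ)

/-- `g` acts by `h i` on all the translates of the `i`-th interval and fixes `M`. -/
def IsMulti (h : ι → (ℝ ≃o ℝ)) (g : ℝ ≃o ℝ) : Prop :=
  (∀ i, ∀ γ ∈ S i, ∀ x ∈ Set.Ioo (p i) (q i), g (γ • x) = γ • h i x) ∧ ∀ y ∈ M, g y = y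

/-- The intervals tile the complement of `M`. -/
structure Tiles : Prop where
  dis : ∀ i j, ∀ γ ∈ S i, ∀ γ' ∈ S j, ∀ x ∈ Set.Ioo (p i) (q i), ∀ x' ∈ Set.Ioo (p j) (q j),
    γ • x = γ' • x' → i = j
  out : ∀ i, ∀ γ ∈ S i, ∀ x ∈ Set.Ioo (p i) (q i), γ • x ∉ M
  cov : ∀ y, y ∉ M → ∃ i, ∃ γ ∈ S i, ∃ x ∈ Set.Ioo (p i) (q i), y = γ • x
  one : ∀ i, 1 ∈ S i

variable {p q S M}

theorem Tiles.unique (T : Tiles p q S M) {h : ι → (ℝ ≃o ℝ)} {g g' : ℝ ≃o ℝ}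
    (H : IsMulti p q S M h g) (H' : IsMulti p q S M h g') : g = g' := by
  ext y
  by_cases hy : y ∈ M
  · rw [H.2 y hy, H'.2 y hy]
  · obtain ⟨i, γ, hγ, x, hx, rfl⟩ := T.cov y hy
    rw [H.1 i γ hγ x hx, H'.1 i γ hγ x hx]

theorem Tiles.exists_multi (T : Tiles p q S M) {G : Subgroup (ℝ ≃o ℝ)}
    (hG : ∀ i, Good G (S i) (p i) (q i)) (h : ι → (ℝ ≃o ℝ)) (hh : ∀ i, h i ∈ PLc (p i) (q i)) :
    ∃ g ∈ G, IsMulti p q S M h g := by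
  classical
  have key : ∀ s : Finset ι, ∃ g ∈ G,
      (∀ i ∈ s, ∀ γ ∈ S i, ∀ x ∈ Set.Ioo (p i) (q i), g (γ • x) = γ • h i x) ∧
      ∀ y, (∀ i ∈ s, ∀ γ ∈ S i, ∀ x ∈ Set.Ioo (p i) (q i), y ≠ γ • x) → g y = y := by
    intro s
    induction s using Finset.induction_on with
    | empty => exact ⟨1, G.one_mem, by simp, fun y _ => rfl⟩
    | insert a s ha ih =>
      obtain ⟨g, hg, g1, g2⟩ := ih
      obtain ⟨k, hk, k1, k2⟩ := hG a (h a) (hh a)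
      refine ⟨k * g, G.mul_mem hk hg, fun i hi γ hγ x hx => ?_, fun y hy => ?_⟩
      · rw [RelIso.mul_apply]
        rcases Finset.mem_insert.1 hi with rfl | hi
        · rw [g2, k1 γ hγ x hx]
          intro j hj γ' hγ' x' hx' e
          exact ha ((T.dis _ _ _ hγ _ hγ' _ hx _ hx' e) ▸ hj)
        · rw [g1 i hi γ hγ x hx, k2]
          intro γ' hγ' x' hx' e
          exact ha ((T.dis _ _ _ hγ _ hγ' _ (PLc_maps (hh i) hx) _ hx' e) ▸ hi)
      · rw [RelIso.mul_apply, g2 y fun i hi => hy i (Finset.mem_insert_of_mem hi),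
          k2 y (hy a (Finset.mem_insert_self _ _))]
  haveI := Fintype.ofFinite ι
  obtain ⟨g, hg, g1, g2⟩ := key Finset.univ
  refine ⟨g, hg, fun i => g1 i (Finset.mem_univ i), fun y hy => g2 y ?_⟩
  rintro i - γ hγ x hx rfl
  exact T.out i γ hγ x hx hy

theorem Tiles.exists_hom (T : Tiles p q S M) {G : Subgroup (ℝ ≃o ℝ)}
    (hG : ∀ i, Good G (S i) (p i) (q i)) :
    ∃ A : Subgroup (ℝ ≃o ℝ), A ≤ G ∧
      (∀ (h : ι → (ℝ ≃o ℝ)) (g : ℝ ≃o ℝ), (∀ i, h i ∈ PLc (p i) (q i)) → IsMulti p q S M h g →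
        g ∈ A) ∧ Nonempty ((∀ i, PLc (p i) (q i)) ≃* A) := by
  choose Φ hΦ hm using fun h : ∀ i, PLc (p i) (q i) =>
    T.exists_multi hG (fun i => (h i : ℝ ≃o ℝ)) fun i => (h i).2
  let Ψ : (∀ i, PLc (p i) (q i)) →* (ℝ ≃o ℝ) := MonoidHom.mk' Φ fun h h' => by
    refine T.unique (hm (h * h')) ⟨fun i γ hγ x hx => ?_, fun y hy => ?_⟩
    · rw [RelIso.mul_apply, (hm h').1 i γ hγ x hx,
        (hm h).1 i γ hγ _ (PLc_maps (h' i).2 hx)]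
      rfl
    · rw [RelIso.mul_apply, (hm h').2 y hy, (hm h).2 y hy]
  have hinj : Function.Injective Ψ := by
    intro h h' e
    funext i
    apply Subtype.ext
    ext x
    by_cases hx : x ∈ Set.Ioo (p i) (q i)
    · have h1 := (hm h).1 i 1 (T.one i) x hx
      have h2 := (hm h').1 i 1 (T.one i) x hx
      have e' : Φ h = Φ h' := e
      rw [e', h2, one_smul, one_smul] at h1
      exact h1.symm
    · rw [PLc_fix (h i).2 hx, PLc_fix (h' i).2 hx]
  refine ⟨Ψ.range, ?_, fun h g hh hg => ?_, ⟨Ψ.ofInjective hinj⟩⟩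
  · rintro _ ⟨h, rfl⟩
    exact hΦ h
  · exact ⟨fun i => ⟨h i, hh i⟩, T.unique (hm _) hg⟩

end multi

/-! ### Assembly -/

theorem near_marker {r : ℤ → Bool} {f : ℝ ≃o ℝ} {W : ℕ} {R x0 ε : ℝ} (hε : ε ≤ 1)
    (hW : R + 2 * |x0| + 2 ≤ W) (hfix : ∀ x, |x - x0| < ε → f x = x)
    (hloc : ∀ (γ : Fr) (x : ℝ), (∀ l : ℤ, |(l : ℝ) - 2 * x| ≤ R → lab r γ l = r l) →
      f (γ • x) = γ • f x) {y z : ℝ} (hy : y ∈ Mar r W x0) (hz : |z - y| < ε) : f z = z := by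
  obtain ⟨σ, hσ, rfl⟩ := hy
  rw [← abs_smul_inv] at hz
  have h := hloc σ (σ⁻¹ • z) fun l hl => ?_
  · rwa [hfix _ hz, smul_inv_smul] at h
  · have h1 : |(l : ℝ)| ≤ W := by
      have := abs_lt.1 hz
      have h2 := abs_le.1 hl
      have h3 := abs_le.1 (le_refl |x0|)
      rw [abs_le]
      constructor <;> linarith [this.1, this.2, h2.1, h2.2, h3.1, h3.2]
    have h2 := abs_le.1 h1
    exact hσ l (by exact_mod_cast h2.1) (by exact_mod_cast h2.2)

theorem gap_local {f : ℝ ≃o ℝ} (hf : f ∈ PL2) {m m' ε : ℝ} (hm : IsDyadic m) (hm' : IsDyadic m')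
    (hmm : m < m') (hε : 0 < ε) (h1 : ∀ z, |z - m| < ε → f z = z)
    (h2 : ∀ z, |z - m'| < ε → f z = z) :
    ∃ h ∈ PLc m m', ∀ x ∈ Set.Ioo m m', h x = f x := by
  have fm : f m = m := h1 m (by simpa using hε)
  have fm' : f m' = m' := h2 m' (by simpa using hε)
  obtain ⟨v, hv, v1, v2⟩ := PL2.exists_glue PL2.one_mem hf hm (by rw [fm]; rfl)
  obtain ⟨w, hw, w1, w2⟩ := PL2.exists_glue hv PL2.one_mem hm' (by rw [v2 _ hmm.le, fm']; rfl)
  have e : ∀ x ∈ Set.Ioo m m', w x = f x := fun x hx => by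
    rw [w1 x hx.2.le, v2 x hx.1.le]
  refine ⟨w, mem_PLc.2 ⟨hw, m + ε / 2, m' - ε / 2, by linarith, by linarith, fun x hx => ?_⟩, e⟩
  by_contra hc
  apply hx
  rcases le_or_gt x m with h | h
  · rw [w1 x (by linarith), v1 x h]; rfl
  rcases le_or_gt m' x with h' | h'
  · rw [w2 x h']; rfl
  rw [e x ⟨h, h'⟩]
  by_cases h3 : x < m + ε / 2
  · exact h1 x (by rw [abs_lt]; constructor <;> linarith)
  · have h4 : ¬ x ≤ m' - ε / 2 := fun h4 => hc ⟨by linarith, h4⟩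
    exact h2 x (by rw [abs_lt]; constructor <;> linarith)

theorem Mar_dyadic {r : ℤ → Bool} {W : ℕ} {x0 y : ℝ} (h0 : IsDyadic x0) (h : y ∈ Mar r W x0) :
    IsDyadic y := by
  obtain ⟨σ, -, rfl⟩ := h
  cases σ with
  | pos c => exact h0.add (IsDyadic.of_int c)
  | neg c => exact (IsDyadic.of_int c).sub h0

theorem assembly {G : Subgroup (ℝ ≃o ℝ)} {r : ℤ → Bool} (hG : Basic G r)
    (hq : ∀ W : ℕ, ∃ B : ℕ, ∀ k : ℤ, ∃ c, k ≤ c ∧ c ≤ k + B ∧ pos c ∈ Cyl r (-W) W)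
    {f g : ℝ ≃o ℝ} (hf : Loc r f) (hg : Loc r g)
    (hfix : ∃ a b : ℝ, a < b ∧ ∀ x ∈ Set.Ioo a b, f x = x ∧ g x = x) :
    ∃ A : Subgroup (ℝ ≃o ℝ), A ≤ G ∧ f ∈ A ∧ g ∈ A ∧
      ∃ n : ℕ, Nonempty (↥A ≃* (Fin n → ↥(PLc 0 1))) := by
  obtain ⟨a, b, hab, hfix⟩ := hfix
  obtain ⟨x0, hx0, ha, hb⟩ := exists_dyadic_between hab
  obtain ⟨ε, hε, hε1, hεa, hεb⟩ : ∃ ε : ℝ, 0 < ε ∧ ε ≤ 1 ∧ ε ≤ x0 - a ∧ ε ≤ b - x0 :=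
    ⟨min 1 (min (x0 - a) (b - x0)), by
      refine lt_min one_pos (lt_min ?_ ?_) <;> linarith, min_le_left _ _,
      (min_le_right _ _).trans (min_le_left _ _), (min_le_right _ _).trans (min_le_right _ _)⟩
  have hfx : ∀ x, |x - x0| < ε → f x = x ∧ g x = x := fun x hx => by
    rw [abs_lt] at hx
    exact hfix x ⟨by linarith [hx.1], by linarith [hx.2]⟩
  obtain ⟨f1, Rf, Df, hRf, -, -, f2⟩ := hf
  obtain ⟨g1, Rg, Dg, hRg, -, -, g2⟩ := hg
  obtain ⟨W, hW⟩ := exists_nat_ge (Rf + Rg + 2 * |x0| + 2)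
  obtain ⟨B, hB⟩ := hq W
  let L : ℕ := B + 1
  let R : ℝ := W + 2 * |x0|
  have hR : (W : ℝ) + 2 * |x0| ≤ R := le_rfl
  have h0 := abs_nonneg x0
  have hR1 : 1 ≤ R := by simp only [R]; linarith
  have hRRf : Rf ≤ R := by simp only [R]; linarith
  have hRRg : Rg ≤ R := by simp only [R]; linarith
  haveI := gap_finite r W x0 R L
  let ι := Quotient (gapSetoid r W x0 R L)
  let u : ι → ℝ := fun i => i.out.1.1
  let ℓ : ι → ℝ := fun i => i.out.1.2
  have hgap : ∀ i, IsGap r W x0 L (u i) (ℓ i) := fun i => i.out.2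
  have hcls : ∀ v k, IsGap r W x0 L v k → ∃ i, k = ℓ i ∧ ∃ γ ∈ CylG r R (u i) (ℓ i), γ • u i = v := by
    intro v k h
    have := Quotient.mk_out (s := gapSetoid r W x0 R L) (⟨(v, k), h⟩ : Gap r W x0 L)
    exact ⟨Quotient.mk _ ⟨(v, k), h⟩, this.1.symm, this.2⟩
  have T : Tiles (fun i => u i - ℓ i) (fun i => u i + ℓ i) (fun i => CylG r R (u i) (ℓ i))
      (Mar r W x0) := by
    refine ⟨fun i j γ hγ γ' hγ' x hx x' hx' e => ?_, fun i γ hγ x hx => ?_, fun y hy => ?_,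
      fun i => one_mem_CylG _ _ _ _⟩
    · rw [mem_Ioo_abs] at hx hx'
      rw [← abs_smul_sub γ] at hx
      rw [← abs_smul_sub γ', ← e] at hx'
      obtain ⟨e1, e2⟩ := ((hgap i).smul hR hγ).unique ((hgap j).smul hR hγ') hx hx'
      have h : (gapSetoid r W x0 R L).r i.out j.out := by
        refine ⟨e2, γ'⁻¹ * γ, CylG_mul hγ ?_, ?_⟩
        · have := CylG_inv hγ'
          rwa [← e1, ← e2] at this
        · rw [mul_smul]
          exact inv_smul_eq_iff.2 e1
      rw [← Quotient.out_eq i, ← Quotient.out_eq j]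
      exact Quotient.sound h
    · rw [mem_Ioo_abs] at hx
      refine ((hgap i).smul hR hγ).int _ ?_
      rwa [abs_smul_sub]
    · obtain ⟨v, k, h1, h2⟩ := exists_gap hB hy
      have h1 : IsGap r W x0 L v k := by simpa [L] using h1
      obtain ⟨i, rfl, γ, hγ, rfl⟩ := hcls v k h1
      refine ⟨i, γ, hγ, γ⁻¹ • y, ?_, by rw [smul_inv_smul]⟩
      rwa [mem_Ioo_abs, abs_smul_inv]
  have hbd : ∀ i, u i - ℓ i ∈ Mar r W x0 ∧ u i + ℓ i ∈ Mar r W x0 := fun i => by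
    have hp := (hgap i).pos
    constructor
    · exact (hgap i).bd _ (by rw [sub_sub_cancel_left, abs_neg, abs_of_pos hp])
    · exact (hgap i).bd _ (by rw [add_sub_cancel_left, abs_of_pos hp])
  obtain ⟨A, hA, hmem, ⟨φ⟩⟩ := T.exists_hom fun i => gap_good hG hR hR1 (hgap i)
  have main : ∀ (k : ℝ ≃o ℝ) (Rk : ℝ), k ∈ PL2 → Rk + 2 * |x0| + 2 ≤ W → Rk ≤ R →
      (∀ x, |x - x0| < ε → k x = x) →
      (∀ (γ : Fr) (x : ℝ), (∀ l : ℤ, |(l : ℝ) - 2 * x| ≤ Rk → lab r γ l = r l) →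
      k (γ • x) = γ • k x) → k ∈ A := by
    intro k Rk hk hWk hRk kfix kloc
    have near := fun (y z : ℝ) (hy : y ∈ Mar r W x0) => near_marker (z := z) hε1 hWk kfix kloc hy
    choose h hh he using fun i => gap_local hk (Mar_dyadic hx0 (hbd i).1) (Mar_dyadic hx0 (hbd i).2)
      (by linarith [(hgap i).pos]) hε (fun z => near _ z (hbd i).1) (fun z => near _ z (hbd i).2)
    refine hmem h k hh ⟨fun i γ hγ x hx => ?_, fun y hy => near y y hy (by simpa using hε)⟩
    rw [he i x hx]
    apply kloc
    intro l hl
    apply hγ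
    rw [mem_Ioo_abs, abs_lt] at hx
    rw [abs_le] at hl ⊢
    constructor <;> linarith [hx.1, hx.2, hl.1, hl.2]
  refine ⟨A, hA, main f Rf f1 (by linarith) hRRf (fun x hx => (hfx x hx).1) f2,
    main g Rg g1 (by linarith) hRRg (fun x hx => (hfx x hx).2) g2, Nat.card ι, ?_⟩
  have eq : ∀ i, Nonempty (PLc (u i - ℓ i) (u i + ℓ i) ≃* PLc 0 1) := fun i =>
    PLc_equiv (Mar_dyadic hx0 (hbd i).1) (Mar_dyadic hx0 (hbd i).2) (by linarith [(hgap i).pos])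
  exact ⟨(φ.symm.trans (MulEquiv.piCongrRight fun i => (eq i).some)).trans
    (MulEquiv.arrowCongr (Finite.equivFin ι) (MulEquiv.refl _))⟩

/-- If `f, g ∈ G_ρ` both pointwise fix a nonempty open interval, then
they are contained in a common subgroup `A ≤ G_ρ` isomorphic to a direct sum of finitely
many copies of `F'`, the commutator subgroup of Thompson's group `F`. -/
theorem interval_fixing_pair_in_copies_of_Fprime
    (F : Subgroup (ℝ ≃o ℝ)) (hF : ∀ f : ℝ ≃o ℝ, f ∈ F ↔ InThompsonF f)
    (ρ : ℤ → Letter) (hρ : IsQuasiPeriodic ρ)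
    (H : Subgroup (ℝ ≃o ℝ)) (hH : ∀ f : ℝ ≃o ℝ, f ∈ H ↔ InH f)
    (ν₁ ν₂ ν₃ : ℝ ≃o ℝ) (hgen : Subgroup.closure {ν₁, ν₂, ν₃} = H)
    (ζ₁ ζ₂ ζ₃ χ₁ χ₂ χ₃ : ℝ ≃o ℝ)
    (hζ₁ : IsZeta ρ ν₁ ζ₁) (hζ₂ : IsZeta ρ ν₂ ζ₂) (hζ₃ : IsZeta ρ ν₃ ζ₃)
    (hχ₁ : IsChi ρ ν₁ χ₁) (hχ₂ : IsChi ρ ν₂ χ₂) (hχ₃ : IsChi ρ ν₃ χ₃)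
    (G : Subgroup (ℝ ≃o ℝ))
    (hG : G = Subgroup.closure {ζ₁, ζ₂, ζ₃, χ₁, χ₂, χ₃})
    (f g : ℝ ≃o ℝ) (hf : f ∈ G) (hg : g ∈ G)
    (hfix : ∃ a b : ℝ, a < b ∧ ∀ x ∈ Set.Ioo a b, f x = x ∧ g x = x) :
    ∃ A : Subgroup (ℝ ≃o ℝ), A ≤ G ∧ f ∈ A ∧ g ∈ A ∧
      ∃ n : ℕ, Nonempty (↥A ≃* (Fin n → ↥((commutator ↥F).map F.subtype))) := by
  rw [commF hF]
  have hT : ∀ h ∈ H, InThompsonF h := fun h hh => ((hH h).1 hh).1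
  have hν : ∀ ν ∈ ({ν₁, ν₂, ν₃} : Set (ℝ ≃o ℝ)), InThompsonF ν := fun ν hν =>
    hT ν (hgen ▸ Subgroup.subset_closure hν)
  have hν1 := hν ν₁ (by simp)
  have hν2 := hν ν₂ (by simp)
  have hν3 := hν ν₃ (by simp)
  have hmem : ∀ z ∈ ({ζ₁, ζ₂, ζ₃, χ₁, χ₂, χ₃} : Set (ℝ ≃o ℝ)), z ∈ G := fun z hz =>
    hG ▸ Subgroup.subset_closure hz
  have hloc : ∀ k ∈ G, Loc (fun l => (ρ l).sg) k := by
    intro k hk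
    rw [hG] at hk
    refine loc_closure ?_ hk
    intro z hz
    simp only [Set.mem_insert_iff, Set.mem_singleton_iff] at hz
    rcases hz with rfl | rfl | rfl | rfl | rfl | rfl
    · exact (hζ₁.isGen hρ.1).loc hν1
    · exact (hζ₂.isGen hρ.1).loc hν2
    · exact (hζ₃.isGen hρ.1).loc hν3
    · exact (hχ₁.isGen hρ.1).loc hν1
    · exact (hχ₂.isGen hρ.1).loc hν2
    · exact (hχ₃.isGen hρ.1).loc hν3
  have hB : Basic G (fun l => (ρ l).sg) := by
    intro e he
    apply good_of_gen
    have key : ∀ h ∈ H, ∃ z ∈ G, IsGen (fun l => (ρ l).sg) e h z := by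
      refine isGen_closure hT hgen ?_
      intro ν hν
      simp only [Set.mem_insert_iff, Set.mem_singleton_iff] at hν
      rcases he with rfl | rfl
      · rcases hν with rfl | rfl | rfl
        · exact ⟨χ₁, hmem _ (by simp), hχ₁.isGen hρ.1⟩
        · exact ⟨χ₂, hmem _ (by simp), hχ₂.isGen hρ.1⟩
        · exact ⟨χ₃, hmem _ (by simp), hχ₃.isGen hρ.1⟩
      · rcases hν with rfl | rfl | rfl
        · exact ⟨ζ₁, hmem _ (by simp), hζ₁.isGen hρ.1⟩
        · exact ⟨ζ₂, hmem _ (by simp), hζ₂.isGen hρ.1⟩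
        · exact ⟨ζ₃, hmem _ (by simp), hζ₃.isGen hρ.1⟩
    exact fun h hh => key h ((hH h).2 (PLc_InH hh))
  exact assembly hB (recur hρ) (hloc f hf) (hloc g hg) hfix
end
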